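/- arXiv:2211.12682 — 5 statements merged into one kernel-verified Lean document; each statement's English description precedes it below -/
import Mathlib

section
/- For each integer k ≥ 1 there exists a function φ : ℂ → ℂ, holomorphic on the half-plane {s : Re s > 1/2} and bounded on {s : Re s ≥ σ} for every σ > 1/2, such that for all s ∈ ℂ with Re s > 1, ∑_{n=1}^∞ r(n)^k · n^{−s} = 4^k · (1 − 2^{−s})^{2^{k−1}−1} · (ζ(s)·η(s))^{2^{k−1}} · φ(s), where ζ is the Riemann zeta function and η(s) = ∑_{j=0}^∞ (−1)^j (2j+1)^{−s} is the Dirichlet beta function. -/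
/-- `r n` is the number of representations of `n` as an ordered sum of two squares
of integers. -/
noncomputable def r (n : ℕ) : ℕ :=
  Set.ncard {p : ℤ × ℤ | p.1 ^ 2 + p.2 ^ 2 = (n : ℤ)}

/-- The Dirichlet beta function `η(s) = 1^{-s} - 3^{-s} + 5^{-s} - ⋯`. -/
noncomputable def eta (s : ℂ) : ℂ :=
  ∑' j : ℕ, (-1) ^ j / (2 * (j : ℂ) + 1) ^ s

/-!
Unique factorization in the Gaussian integers makes `r n / 4`, the number of Gaussian integers of
norm `n` up to units, a multiplicative function, equal at `p ^ a` to `1` for `p = 2`, to `a + 1` for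
`p ≡ 1 (mod 4)`, and to `1` or `0` according to the parity of `a` for `p ≡ 3 (mod 4)`. With
`x = p ^ (-s)`, the Euler factor of `∑ (r n / 4) ^ k * n ^ (-s)` at `p` is accordingly
`(1 - x)⁻¹`, `∑ (a + 1) ^ k * x ^ a = 1 + 2 ^ k * x + O(x ^ 2)`, or `(1 - x ^ 2)⁻¹`, while that of
`(ζ s * η s) ^ 2 ^ (k - 1)` is the power with exponent `2 ^ (k - 1)` of `(1 - x)⁻¹`, `(1 - x)⁻²`,
or `(1 - x ^ 2)⁻¹`. At `2` the quotient is `(1 - x) ^ (2 ^ (k - 1) - 1)`, and at an odd prime it is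
`1 + O(x ^ 2)` because the linear terms cancel. The product `φ` of the quotients over the odd primes
therefore converges normally for `Re s > 1 / 2`.
-/

/-! ### Gaussian integers of given norm -/

theorem associated_of_mul_eq_mul_of_isCoprime {R : Type*} [CommRing R] [IsDomain R]
    {a b c d : R} (h : Associated (a * b) (c * d)) (had : IsCoprime a d) (hcb : IsCoprime c b) :
    Associated a c :=
  associated_of_dvd_dvd (had.dvd_of_dvd_mul_right ((dvd_mul_right a b).trans h.dvd))
    (hcb.dvd_of_dvd_mul_right ((dvd_mul_right c d).trans h.symm.dvd))

theorem ncard_eq_card_units_mul_ncard_image_mk {M : Type*} [CommMonoidWithZero M]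
    [IsCancelMulZero M] {s : Set M} (h0 : 0 ∉ s) (hs : ∀ x ∈ s, ∀ y, Associated x y → y ∈ s) :
    s.ncard = Nat.card Mˣ * (Associates.mk '' s).ncard := by
  have hout (c : Associates M) : Associates.mk (Quotient.out c) = c := Quotient.out_eq c
  have hout_mem {c : Associates M} (hc : c ∈ Associates.mk '' s) : Quotient.out c ∈ s := by
    obtain ⟨x, hx, rfl⟩ := hc
    exact hs x hx _ (Associates.mk_eq_mk_iff_associated.1 (hout _)).symm
  rw [← Set.ncard_univ, ← Set.ncard_prod]
  symm
  refine Set.ncard_congr (fun q _ ↦ Quotient.out q.2 * q.1) ?_ ?_ ?_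
  · rintro ⟨u, c⟩ ⟨-, hc⟩
    exact hs _ (hout_mem hc) _ ⟨u, rfl⟩
  · rintro ⟨u, c⟩ ⟨v, c'⟩ ⟨-, hc⟩ - h
    have hcc' : c = c' := by
      simpa only [Associates.mk_mul_mk, hout, Associates.mk_eq_one.2 (Units.isUnit _), mul_one,
        ← Associates.mk_mul_mk] using congrArg Associates.mk h
    subst hcc'
    have hne : Quotient.out c ≠ 0 := fun h ↦ h0 (h ▸ hout_mem hc)
    exact Prod.ext (Units.ext (mul_left_cancel₀ hne h)) rfl
  · intro x hx
    obtain ⟨u, hu⟩ := Associates.mk_eq_mk_iff_associated.1 (hout (Associates.mk x))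
    exact ⟨(u, Associates.mk x), ⟨Set.mem_univ _, x, hx, rfl⟩, hu⟩

section Zsqrtd

variable {d : ℤ}

theorem dvd_intCast_norm (z : ℤ√d) : z ∣ (z.norm : ℤ√d) :=
  ⟨star z, Zsqrtd.norm_eq_mul_conj z⟩

theorem isCoprime_of_isCoprime_norm {z w : ℤ√d} (h : IsCoprime z.norm w.norm) : IsCoprime z w :=
  ((h.map (Int.castRingHom (ℤ√d))).of_isCoprime_of_dvd_left
    (dvd_intCast_norm z)).of_isCoprime_of_dvd_right (dvd_intCast_norm w)

theorem norm_dvd_sq_of_dvd_intCast {z : ℤ√d} {n : ℤ} (h : z ∣ (n : ℤ√d)) : z.norm ∣ n ^ 2 := by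
  rw [sq, ← Zsqrtd.norm_intCast (d := d)]
  exact map_dvd Zsqrtd.normMonoidHom h

theorem prime_of_prime_norm [DecompositionMonoid (ℤ√d)] {z : ℤ√d} (h : Prime z.norm) :
    Prime z := by
  have : IsLocalHom (Zsqrtd.normMonoidHom (d := d)) :=
    ⟨fun z hz ↦ (Zsqrtd.isUnit_iff_norm_isUnit z).2 hz⟩
  exact (Irreducible.of_map (f := Zsqrtd.normMonoidHom) h.irreducible).prime

end Zsqrtd

theorem norm_eq_sq_add_sq (z : GaussianInt) : z.norm = z.re ^ 2 + z.im ^ 2 := by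
  rw [Zsqrtd.norm_def]
  ring

theorem gaussianInt_isUnit_iff {z : GaussianInt} :
    IsUnit z ↔ z ∈ ({⟨1, 0⟩, ⟨-1, 0⟩, ⟨0, 1⟩, ⟨0, -1⟩} : Finset GaussianInt) := by
  rw [← Zsqrtd.norm_eq_one_iff' (by norm_num), norm_eq_sq_add_sq]
  constructor
  · obtain ⟨x, y⟩ := z
    intro h
    have hx : x ^ 2 ≤ 1 := by linarith [sq_nonneg y]
    have hy : y ^ 2 ≤ 1 := by linarith [sq_nonneg x]
    obtain ⟨hx₁, hx₂⟩ := abs_le.1 ((sq_le_one_iff_abs_le_one x).1 hx)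
    obtain ⟨hy₁, hy₂⟩ := abs_le.1 ((sq_le_one_iff_abs_le_one y).1 hy)
    interval_cases x <;> interval_cases y <;> simp_all
  · simp only [Finset.mem_insert, Finset.mem_singleton]
    rintro (rfl | rfl | rfl | rfl) <;> norm_num

theorem card_units_gaussianInt : Nat.card GaussianIntˣ = 4 := by
  have hrange : Set.range ((↑) : GaussianIntˣ → GaussianInt) =
      ({⟨1, 0⟩, ⟨-1, 0⟩, ⟨0, 1⟩, ⟨0, -1⟩} : Finset GaussianInt) :=
    Set.ext fun _ ↦ gaussianInt_isUnit_iff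
  rw [← Set.ncard_univ, ← Set.ncard_image_of_injective _ Units.val_injective, Set.image_univ,
    hrange, Set.ncard_coe_finset]
  decide

/-- The Gaussian integers of norm `n`, counted up to units: the set of principal ideals of norm `n`,
encoded as associate classes. -/
def normClasses (n : ℕ) : Set (Associates GaussianInt) :=
  Associates.mk '' {z | z.norm = n}

/-- The number of associate classes of Gaussian integers of norm `n`, which is `r n / 4` for `n ≠ 0`
and, unlike `r`, multiplicative. -/
noncomputable def normClassCount (n : ℕ) : ℕ :=
  (normClasses n).ncard

theorem norm_eq_of_associated {z w : GaussianInt} (h : Associated z w) : z.norm = w.norm :=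
  Zsqrtd.norm_eq_of_associated (by norm_num) h

theorem mk_mem_normClasses {z : GaussianInt} {n : ℕ} :
    Associates.mk z ∈ normClasses n ↔ z.norm = n := by
  refine ⟨?_, fun h ↦ ⟨z, h, rfl⟩⟩
  rintro ⟨w, hw, h⟩
  exact (norm_eq_of_associated (Associates.mk_eq_mk_iff_associated.1 h)).symm.trans hw

theorem r_eq_ncard_norm_eq (n : ℕ) : r n = {z : GaussianInt | z.norm = n}.ncard := by
  symm
  refine Set.ncard_congr (fun z _ ↦ (z.re, z.im)) (fun z hz ↦ ?_) (fun z w _ _ h ↦ ?_) ?_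
  · exact (norm_eq_sq_add_sq z).symm.trans hz
  · exact Zsqrtd.ext (congrArg Prod.fst h) (congrArg Prod.snd h)
  · rintro ⟨x, y⟩ h
    exact ⟨⟨x, y⟩, (norm_eq_sq_add_sq _).trans h, rfl⟩

theorem r_eq_four_mul_normClassCount {n : ℕ} (hn : n ≠ 0) : r n = 4 * normClassCount n := by
  rw [r_eq_ncard_norm_eq, ← card_units_gaussianInt]
  refine ncard_eq_card_units_mul_ncard_image_mk ?_ fun z hz w h ↦ ?_
  · simpa [eq_comm] using hn
  · exact (norm_eq_of_associated h).symm.trans hz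

theorem normClassCount_one : normClassCount 1 = 1 := by
  refine Set.ncard_eq_one.2 ⟨1, Set.ext fun c ↦ ?_⟩
  obtain ⟨z, rfl⟩ := Associates.mk_surjective c
  rw [mk_mem_normClasses, Nat.cast_one, Zsqrtd.norm_eq_one_iff' (by norm_num),
    Set.mem_singleton_iff, Associates.mk_eq_one]

theorem exists_mul_eq_of_norm_eq_mul {m n : ℕ} (hmn : m.Coprime n) {z : GaussianInt}
    (hz : z.norm = m * n) : ∃ x y : GaussianInt, x.norm = m ∧ y.norm = n ∧ x * y = z := by
  have hdvd : z ∣ ((m : ℤ) : GaussianInt) * ((n : ℤ) : GaussianInt) := by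
    rw [← Int.cast_mul, ← hz]
    exact dvd_intCast_norm z
  obtain ⟨x, y, hx, hy, rfl⟩ := exists_dvd_and_dvd_of_dvd_mul hdvd
  have hcop : IsCoprime (m : ℤ) n := Nat.isCoprime_iff_coprime.2 hmn
  have hxn : IsCoprime x.norm n :=
    hcop.pow_left.of_isCoprime_of_dvd_left (norm_dvd_sq_of_dvd_intCast hx)
  have hmy : IsCoprime (m : ℤ) y.norm :=
    hcop.pow_right.of_isCoprime_of_dvd_right (norm_dvd_sq_of_dvd_intCast hy)
  have hprod : x.norm * y.norm = m * n := (Zsqrtd.norm_mul x y).symm.trans hz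
  refine ⟨x, y, ?_, ?_, rfl⟩
  · exact Int.eq_of_associated_of_nonneg
      (associated_of_mul_eq_mul_of_isCoprime (.of_eq hprod) hxn hmy)
      x.norm_nonneg m.cast_nonneg
  · exact Int.eq_of_associated_of_nonneg
      (associated_of_mul_eq_mul_of_isCoprime
        (.of_eq ((mul_comm _ _).trans (hprod.trans (mul_comm _ _)))) hmy.symm hxn.symm)
      y.norm_nonneg n.cast_nonneg

theorem normClassCount_mul_of_coprime {m n : ℕ} (hmn : m.Coprime n) :
    normClassCount (m * n) = normClassCount m * normClassCount n := by
  have hcop {z w : GaussianInt} (hz : z.norm = m) (hw : w.norm = n) : IsCoprime z w :=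
    isCoprime_of_isCoprime_norm (hz ▸ hw ▸ Nat.isCoprime_iff_coprime.2 hmn)
  unfold normClassCount
  rw [← Set.ncard_prod]
  symm
  refine Set.ncard_congr (fun q _ ↦ q.1 * q.2) ?_ ?_ ?_
  · rintro ⟨_, _⟩ ⟨⟨z, hz, rfl⟩, ⟨w, hw, rfl⟩⟩
    rw [Associates.mk_mul_mk, mk_mem_normClasses, Zsqrtd.norm_mul, hz, hw, Nat.cast_mul]
  · rintro ⟨_, _⟩ ⟨_, _⟩ ⟨⟨z, hz, rfl⟩, ⟨w, hw, rfl⟩⟩ ⟨⟨z', hz', rfl⟩, ⟨w', hw', rfl⟩⟩ h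
    have h : Associated (z * w) (z' * w') := Associates.mk_eq_mk_iff_associated.1 h
    have h' : Associated (w * z) (w' * z') := by rwa [mul_comm w, mul_comm w']
    exact Prod.ext
      (Associates.mk_eq_mk_iff_associated.2
        (associated_of_mul_eq_mul_of_isCoprime h (hcop hz hw') (hcop hz' hw)))
      (Associates.mk_eq_mk_iff_associated.2
        (associated_of_mul_eq_mul_of_isCoprime h' (hcop hz' hw).symm (hcop hz hw').symm))
  · rintro _ ⟨z, hz, rfl⟩
    obtain ⟨x, y, hx, hy, rfl⟩ := exists_mul_eq_of_norm_eq_mul hmn (hz.trans (Nat.cast_mul m n))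
    exact ⟨(Associates.mk x, Associates.mk y), ⟨⟨x, hx, rfl⟩, ⟨y, hy, rfl⟩⟩, Associates.mk_mul_mk⟩

section PrimePow

variable {p : ℕ} {π : GaussianInt}

theorem gaussianInt_norm_pow (z : GaussianInt) (a : ℕ) : (z ^ a).norm = z.norm ^ a :=
  map_pow Zsqrtd.normMonoidHom z a

theorem normClasses_prime_pow (hp : p.Prime) (hπ : π.norm = p) (a : ℕ) :
    normClasses (p ^ a) =
      (fun i ↦ Associates.mk (π ^ i * star π ^ (a - i))) '' (Finset.range (a + 1) : Set ℕ) := by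
  have hπ' : (star π).norm = p := (Zsqrtd.norm_conj π).trans hπ
  have hprime {z : GaussianInt} (hz : z.norm = p) : Prime z :=
    prime_of_prime_norm (hz ▸ Nat.prime_iff_prime_int.1 hp)
  have hnorm (i j : ℕ) : (π ^ i * star π ^ j).norm = (p : ℤ) ^ (i + j) := by
    rw [Zsqrtd.norm_mul, gaussianInt_norm_pow, gaussianInt_norm_pow, hπ, hπ', pow_add]
  refine Set.Subset.antisymm ?_ ?_
  · rintro _ ⟨z, hz, rfl⟩
    have hz : z.norm = (p : ℤ) ^ a := hz.trans (Nat.cast_pow p a)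
    have hdvd : z ∣ π ^ a * star π ^ a := by
      rw [← mul_pow, ← Zsqrtd.norm_eq_mul_conj, hπ, ← Int.cast_pow, ← hz]
      exact dvd_intCast_norm z
    obtain ⟨x, y, hx, hy, rfl⟩ := exists_dvd_and_dvd_of_dvd_mul hdvd
    obtain ⟨i, -, hi⟩ := (dvd_prime_pow (hprime hπ) _).1 hx
    obtain ⟨j, -, hj⟩ := (dvd_prime_pow (hprime hπ') _).1 hy
    have ha : a = i + j := by
      have h : (p : ℤ) ^ a = (p : ℤ) ^ (i + j) := by
        rw [← hz, norm_eq_of_associated (hi.mul_mul hj), hnorm]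
      exact Nat.pow_right_injective hp.two_le (by exact_mod_cast h)
    refine ⟨i, by simp [ha], ?_⟩
    simp only [ha, Nat.add_sub_cancel_left]
    exact (Associates.mk_eq_mk_iff_associated.2 (hi.mul_mul hj)).symm
  · rintro _ ⟨i, hi, rfl⟩
    have hi : i ≤ a := Nat.lt_succ_iff.1 (Finset.mem_range.1 hi)
    rw [mk_mem_normClasses, hnorm, Nat.add_sub_cancel' hi, Nat.cast_pow]

theorem normClassCount_prime_pow_of_associated_star (hp : p.Prime) (hπ : π.norm = p)
    (h : Associated π (star π)) (a : ℕ) : normClassCount (p ^ a) = 1 := by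
  have hconst : ∀ i ∈ (Finset.range (a + 1) : Set ℕ),
      Associates.mk (π ^ i * star π ^ (a - i)) = Associates.mk (π ^ a) := by
    intro i hi
    have hi : i ≤ a := Nat.lt_succ_iff.1 (Finset.mem_range.1 hi)
    rw [Associates.mk_eq_mk_iff_associated]
    simpa only [← pow_add, Nat.add_sub_cancel' hi] using
      (h.symm.pow_pow (n := a - i)).mul_left (π ^ i)
  rw [normClassCount, normClasses_prime_pow hp hπ, Set.image_congr hconst,
    Set.Nonempty.image_const ⟨0, by simp⟩, Set.ncard_singleton]

theorem normClassCount_prime_pow_of_not_associated_star (hp : p.Prime) (hπ : π.norm = p)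
    (h : ¬Associated π (star π)) (a : ℕ) : normClassCount (p ^ a) = a + 1 := by
  have hprime : Prime π := prime_of_prime_norm (hπ ▸ Nat.prime_iff_prime_int.1 hp)
  have hprime' : Prime (star π) :=
    prime_of_prime_norm (Zsqrtd.norm_conj π ▸ hπ ▸ Nat.prime_iff_prime_int.1 hp)
  have hlt {i j : ℕ} (hij : i < j) :
      ¬Associated (π ^ i * star π ^ (a - i)) (π ^ j * star π ^ (a - j)) := by
    intro hassoc
    have hdvd : π ^ i * π ∣ π ^ i * star π ^ (a - i) := by
      rw [← pow_succ]
      exact ((pow_dvd_pow π hij).mul_right _).trans hassoc.symm.dvd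
    have := hprime.dvd_of_dvd_pow ((mul_dvd_mul_iff_left (pow_ne_zero i hprime.ne_zero)).1 hdvd)
    exact h (hprime.associated_of_dvd hprime' this)
  rw [normClassCount, normClasses_prime_pow hp hπ, Set.ncard_image_of_injective,
    Set.ncard_coe_finset, Finset.card_range]
  intro i j hij
  have hij := Associates.mk_eq_mk_iff_associated.1 hij
  rcases lt_trichotomy i j with hlt_ij | rfl | hlt_ji
  · exact absurd hij (hlt hlt_ij)
  · rfl
  · exact absurd hij.symm (hlt hlt_ji)

theorem one_lt_of_prime_natCast (hp : Prime (p : GaussianInt)) : 1 < p := by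
  rcases p with _ | _ | p
  · exact absurd Nat.cast_zero hp.ne_zero
  · exact absurd Nat.cast_one hp.ne_one
  · lia

theorem mem_normClasses_pow_of_prime (hp : Prime (p : GaussianInt)) {a : ℕ}
    {c : Associates GaussianInt} :
    c ∈ normClasses (p ^ a) ↔ ∃ i, a = i + i ∧ c = Associates.mk ((p : GaussianInt) ^ i) := by
  have hnorm (i : ℕ) : ((p : GaussianInt) ^ i).norm = (p : ℤ) ^ (i + i) := by
    rw [gaussianInt_norm_pow, Zsqrtd.norm_natCast, ← sq, ← pow_mul, two_mul]
  constructor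
  · rintro ⟨z, hz, rfl⟩
    have hz : z.norm = (p : ℤ) ^ a := hz.trans (Nat.cast_pow p a)
    have hdvd : z ∣ (p : GaussianInt) ^ a := by
      have := dvd_intCast_norm z
      rwa [hz, Int.cast_pow, Int.cast_natCast] at this
    obtain ⟨i, -, hi⟩ := (dvd_prime_pow hp _).1 hdvd
    refine ⟨i, ?_, Associates.mk_eq_mk_iff_associated.2 hi⟩
    have h : (p : ℤ) ^ a = (p : ℤ) ^ (i + i) := by rw [← hz, norm_eq_of_associated hi, hnorm]
    exact Nat.pow_right_injective (one_lt_of_prime_natCast hp) (by exact_mod_cast h)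
  · rintro ⟨i, rfl, rfl⟩
    rw [mk_mem_normClasses, hnorm, Nat.cast_pow]

theorem normClassCount_pow_of_prime (hp : Prime (p : GaussianInt)) (a : ℕ) :
    normClassCount (p ^ a) = if Even a then 1 else 0 := by
  unfold normClassCount
  split_ifs with ha
  · obtain ⟨i, rfl⟩ := ha
    refine Set.ncard_eq_one.2 ⟨Associates.mk ((p : GaussianInt) ^ i), Set.ext fun c ↦ ?_⟩
    rw [mem_normClasses_pow_of_prime hp, Set.mem_singleton_iff]
    refine ⟨?_, fun h ↦ ⟨i, rfl, h⟩⟩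
    rintro ⟨j, hij, rfl⟩
    rw [show i = j by lia]
  · have hempty : normClasses (p ^ a) = ∅ := Set.eq_empty_of_forall_notMem fun c hc ↦
      ha ((mem_normClasses_pow_of_prime hp).1 hc |>.imp fun _ h ↦ h.1)
    rw [hempty, Set.ncard_empty]

theorem not_associated_star_of_norm_eq_prime (hp : p.Prime) (hp2 : p ≠ 2) (hπ : π.norm = p) :
    ¬Associated π (star π) := by
  intro h
  have hpZ : Prime (p : ℤ) := Nat.prime_iff_prime_int.1 hp
  -- `p = π * star π` divides `π ^ 2`, hence also the real part `x ^ 2 - y ^ 2` of `π ^ 2`.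
  have hdvd : ((p : ℤ) : GaussianInt) ∣ π * π := by
    rw [← hπ, Zsqrtd.norm_eq_mul_conj]
    exact mul_dvd_mul_left π h.symm.dvd
  have hsub : (p : ℤ) ∣ π.re ^ 2 - π.im ^ 2 := by
    have := ((Zsqrtd.intCast_dvd _ _).1 hdvd).1
    rwa [Zsqrtd.re_mul, show π.re * π.re + -1 * π.im * π.im = π.re ^ 2 - π.im ^ 2 by ring] at this
  have hadd : π.re ^ 2 + π.im ^ 2 = p := (norm_eq_sq_add_sq π).symm.trans hπ
  have h2 : ¬(p : ℤ) ∣ 2 := fun h ↦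
    hp2 ((Nat.prime_dvd_prime_iff_eq hp Nat.prime_two).1 (by exact_mod_cast h))
  have hre : (p : ℤ) ∣ π.re := by
    have h2sq : (p : ℤ) ∣ 2 * π.re ^ 2 := by
      rw [show 2 * π.re ^ 2 = p + (π.re ^ 2 - π.im ^ 2) by linarith]
      exact dvd_add dvd_rfl hsub
    exact hpZ.dvd_of_dvd_pow ((hpZ.dvd_mul.1 h2sq).resolve_left h2)
  have him : (p : ℤ) ∣ π.im := by
    refine hpZ.dvd_of_dvd_pow (n := 2) ?_
    rw [show π.im ^ 2 = p - π.re ^ 2 by linarith]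
    exact dvd_sub dvd_rfl (hre.trans (dvd_pow_self _ two_ne_zero))
  have hsq : (p : ℤ) ^ 2 ∣ p := by
    rw [← hadd]
    nth_rw 1 [hadd]
    exact dvd_add (pow_dvd_pow_of_dvd hre 2) (pow_dvd_pow_of_dvd him 2)
  exact hpZ.not_isUnit (isUnit_of_dvd_one
    ((mul_dvd_mul_iff_left hpZ.ne_zero).1 (by rwa [mul_one, ← sq])))

theorem normClassCount_two_pow (a : ℕ) : normClassCount (2 ^ a) = 1 := by
  have hassoc : Associated (⟨1, 1⟩ : GaussianInt) (star ⟨1, 1⟩) :=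
    associated_of_dvd_dvd ⟨⟨0, -1⟩, by decide⟩ ⟨⟨0, 1⟩, by decide⟩
  exact normClassCount_prime_pow_of_associated_star Nat.prime_two (by decide) hassoc a

theorem normClassCount_prime_pow_of_mod_four_eq_one (hp : p.Prime) (h : p % 4 = 1) (a : ℕ) :
    normClassCount (p ^ a) = a + 1 := by
  have := Fact.mk hp
  obtain ⟨x, y, hxy⟩ := Nat.Prime.sq_add_sq (p := p) (by lia)
  have hπ : (⟨x, y⟩ : GaussianInt).norm = p := by
    rw [norm_eq_sq_add_sq]
    dsimp only
    exact_mod_cast hxy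
  exact normClassCount_prime_pow_of_not_associated_star hp hπ
    (not_associated_star_of_norm_eq_prime hp (by lia) hπ) a

theorem normClassCount_prime_pow_of_mod_four_eq_three (hp : p.Prime) (h : p % 4 = 3) (a : ℕ) :
    normClassCount (p ^ a) = if Even a then 1 else 0 := by
  have := Fact.mk hp
  exact normClassCount_pow_of_prime
    (GaussianInt.prime_of_nat_prime_of_mod_four_eq_three p h) a

theorem prime_eq_two_or_mod_four_eq_one_or_three (hp : p.Prime) :
    p = 2 ∨ p % 4 = 1 ∨ p % 4 = 3 := by
  have := hp.eq_two_or_odd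
  lia

theorem normClassCount_le_card_divisors {n : ℕ} (hn : n ≠ 0) :
    normClassCount n ≤ n.divisors.card := by
  induction n using Nat.recOnPosPrimePosCoprime with
  | prime_pow p a hp _ =>
    rw [Nat.divisors_prime_pow hp, Finset.card_map, Finset.card_range]
    rcases prime_eq_two_or_mod_four_eq_one_or_three hp with rfl | h | h
    · rw [normClassCount_two_pow]
      lia
    · rw [normClassCount_prime_pow_of_mod_four_eq_one hp h]
    · rw [normClassCount_prime_pow_of_mod_four_eq_three hp h]
      split_ifs <;> lia
  | zero => exact absurd rfl hn
  | one => rw [normClassCount_one, Nat.divisors_one, Finset.card_singleton]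
  | coprime a b ha hb hab iha ihb =>
    rw [normClassCount_mul_of_coprime hab, hab.card_divisors_mul]
    exact Nat.mul_le_mul (iha (by lia)) (ihb (by lia))

end PrimePow

/-! ### Infinite products and second order vanishing -/

section InfiniteProduct

variable {ι : Type*} {u : ι → ℝ}

theorem norm_tprod_one_add_le_exp_tsum {F : Type*} [NormedField F] [CompleteSpace F] {f : ι → F}
    (hu : Summable u) (hf : ∀ i, ‖f i‖ ≤ u i) : ‖∏' i, (1 + f i)‖ ≤ Real.exp (∑' i, u i) := by
  have hu0 (i : ι) : 0 ≤ u i := (norm_nonneg _).trans (hf i)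
  have hprod : HasProd (fun i ↦ 1 + f i) (∏' i, (1 + f i)) :=
    (multipliable_one_add_of_summable (hu.of_nonneg_of_le (fun _ ↦ norm_nonneg _) hf)).hasProd
  refine le_of_tendsto hprod.norm (.of_forall fun t ↦ ?_)
  calc ∏ i ∈ t, ‖1 + f i‖
    _ ≤ ∏ i ∈ t, (1 + u i) := Finset.prod_le_prod (fun _ _ ↦ norm_nonneg _) fun i _ ↦
      (norm_add_le _ _).trans (add_le_add norm_one.le (hf i))
    _ ≤ Real.exp (∑ i ∈ t, u i) := Real.prod_one_add_le_exp_sum t hu0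
    _ ≤ Real.exp (∑' i, u i) := Real.exp_le_exp.2 (hu.sum_le_tsum t fun i _ ↦ hu0 i)

theorem differentiableOn_tprod_one_add {f : ι → ℂ → ℂ} {U : Set ℂ} (hU : IsOpen U)
    (hu : Summable u) (hf : ∀ i, DifferentiableOn ℂ (f i) U) (hfu : ∀ i, ∀ z ∈ U, ‖f i z‖ ≤ u i) :
    DifferentiableOn ℂ (fun z ↦ ∏' i, (1 + f i z)) U := by
  have hprod : HasProdLocallyUniformlyOn (fun i z ↦ 1 + f i z) (fun z ↦ ∏' i, (1 + f i z)) U :=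
    hu.hasProdLocallyUniformlyOn_one_add hU (.of_forall hfu) fun i ↦ (hf i).continuousOn
  refine hprod.differentiableOn (.of_forall fun t ↦ ?_) hU
  simpa only [Finset.prod_fn] using
    DifferentiableOn.finsetProd fun i _ ↦ (hf i).const_add 1

end InfiniteProduct

theorem exists_norm_sub_le_mul_sq_of_deriv_eq_zero {E : Type*} [NormedAddCommGroup E]
    [NormedSpace ℂ E] [CompleteSpace E] {g : ℂ → E} {U K : Set ℂ} {c : ℂ} (hU : IsOpen U)
    (hc : c ∈ U) (hK : IsCompact K) (hKU : K ⊆ U) (hg : DifferentiableOn ℂ g U)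
    (hderiv : deriv g c = 0) : ∃ C : ℝ, ∀ x ∈ K, ‖g x - g c‖ ≤ C * ‖x - c‖ ^ 2 := by
  have hcont : ContinuousOn (dslope (dslope g c) c) K := by
    have hUc : U ∈ nhds c := hU.mem_nhds hc
    exact ((Complex.differentiableOn_dslope hUc).2
      ((Complex.differentiableOn_dslope hUc).2 hg)).continuousOn.mono hKU
  obtain ⟨C, hC⟩ := hK.exists_bound_of_continuousOn hcont
  refine ⟨C, fun x hx ↦ ?_⟩
  have htaylor : g x - g c = (x - c) • (x - c) • dslope (dslope g c) c x := by
    rw [sub_smul_dslope, dslope_same, hderiv, sub_zero, sub_smul_dslope]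
  rw [htaylor, norm_smul, norm_smul, ← mul_assoc, ← sq, mul_comm]
  exact mul_le_mul_of_nonneg_right (hC x hx) (sq_nonneg _)

/-! ### Divisor bound and absolute convergence -/

open scoped Pointwise in
theorem card_divisors_mul_le (m n : ℕ) :
    (m * n).divisors.card ≤ m.divisors.card * n.divisors.card := by
  rw [Nat.divisors_mul]
  exact Finset.card_mul_le

theorem LSeriesSummable_of_norm_le {f g : ℕ → ℂ} {s : ℂ} (hg : LSeriesSummable g s)
    (h : ∀ n ≠ 0, ‖f n‖ ≤ ‖g n‖) : LSeriesSummable f s := by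
  refine .of_norm_bounded (g := fun n ↦ ‖LSeries.term g s n‖) hg.norm fun n ↦ ?_
  rcases eq_or_ne n 0 with rfl | hn
  · rw [LSeries.term_zero, LSeries.term_zero]
  · exact LSeries.norm_term_le s (h n hn)

theorem card_divisors_pow_succ_le_sum (k n : ℕ) :
    n.divisors.card ^ (k + 1) ≤
      ∑ q ∈ n.divisorsAntidiagonal, q.1.divisors.card ^ k * q.2.divisors.card ^ k :=
  calc n.divisors.card ^ (k + 1)
    _ = ∑ _q ∈ n.divisorsAntidiagonal, n.divisors.card ^ k := by
      rw [Finset.sum_const, smul_eq_mul, ← Nat.map_div_right_divisors, Finset.card_map, pow_succ']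
    _ ≤ ∑ q ∈ n.divisorsAntidiagonal, q.1.divisors.card ^ k * q.2.divisors.card ^ k := by
      refine Finset.sum_le_sum fun q hq ↦ ?_
      rw [← mul_pow, ← (Nat.mem_divisorsAntidiagonal.1 hq).1]
      exact Nat.pow_le_pow_left (card_divisors_mul_le _ _) k

-- The number of divisors satisfies `d ^ (k + 1) ≤ d ^ k ⍟ d ^ k`, whence the induction on `k`.
theorem LSeriesSummable_card_divisors_pow (k : ℕ) {s : ℂ} (hs : 1 < s.re) :
    LSeriesSummable (fun n ↦ (n.divisors.card : ℂ) ^ k) s := by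
  induction k with
  | zero => exact LSeriesSummable_of_bounded_of_one_lt_re (m := 1) (fun n _ ↦ by simp) hs
  | succ k ih =>
    refine LSeriesSummable_of_norm_le (ih.convolution ih) fun n _ ↦ ?_
    rw [LSeries.convolution_def]
    have := card_divisors_pow_succ_le_sum k n
    rw [← Nat.cast_pow, Complex.norm_natCast]
    dsimp only
    exact_mod_cast this

theorem LSeriesSummable_normClassCount_pow (k : ℕ) {s : ℂ} (hs : 1 < s.re) :
    LSeriesSummable (fun n ↦ (normClassCount n : ℂ) ^ k) s := by
  refine LSeriesSummable_of_norm_le (LSeriesSummable_card_divisors_pow k hs) fun n hn ↦ ?_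
  rw [norm_pow, norm_pow, Complex.norm_natCast, Complex.norm_natCast]
  gcongr
  exact normClassCount_le_card_divisors hn

/-! ### The correction factor -/

/-- The Euler factor `∑ (a + 1) ^ k * x ^ a`, with `x = p ^ (-s)`, of `r ^ k / 4 ^ k` at a prime
`p` congruent to `1` modulo `4`. -/
noncomputable def succPowSeries (k : ℕ) (x : ℂ) : ℂ :=
  ∑' a : ℕ, ((a : ℂ) + 1) ^ k * x ^ a

open FormalMultilinearSeries in
theorem hasFPowerSeriesOnBall_succPowSeries (k : ℕ) :
    HasFPowerSeriesOnBall (succPowSeries k) (ofScalars ℂ fun a : ℕ ↦ ((a : ℂ) + 1) ^ k) 0 1 := by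
  have hnorm (a : ℕ) : ‖((a : ℂ) + 1) ^ k‖ = ((a : ℝ) + 1) ^ k := by
    rw [norm_pow, ← Nat.cast_succ, Complex.norm_natCast, Nat.cast_succ]
  have hratio : Filter.Tendsto (fun a : ℕ ↦ (((a + 1 : ℕ) : ℝ) / ((a + 1 : ℕ) + 1)) ^ k)
      Filter.atTop (nhds 1) := by
    simpa only [one_pow, Function.comp_apply] using
      ((tendsto_natCast_div_add_atTop (1 : ℝ)).comp (Filter.tendsto_add_atTop_nat 1)).pow k
  have hradius : (ofScalars ℂ fun a : ℕ ↦ ((a : ℂ) + 1) ^ k).radius = 1 := by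
    refine ofScalars_radius_eq_of_tendsto ℂ _ one_ne_zero (r := 1) (hratio.congr fun a ↦ ?_)
    rw [hnorm, hnorm, ← div_pow, Nat.cast_succ]
  have hsum : succPowSeries k = (ofScalars ℂ fun a : ℕ ↦ ((a : ℂ) + 1) ^ k).sum := by
    ext x
    exact (tsum_congr fun a ↦ (smul_eq_mul _ _).symm).trans (ofScalars_sum_eq _ x).symm
  rw [hsum, ← hradius]
  exact FormalMultilinearSeries.hasFPowerSeriesOnBall _ (hradius ▸ one_pos)

theorem differentiableOn_succPowSeries (k : ℕ) :
    DifferentiableOn ℂ (succPowSeries k) (Metric.ball 0 1) := by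
  simpa only [← ENNReal.ofReal_one, Metric.eball_ofReal] using
    (hasFPowerSeriesOnBall_succPowSeries k).differentiableOn

theorem succPowSeries_zero (k : ℕ) : succPowSeries k 0 = 1 := by
  rw [← (hasFPowerSeriesOnBall_succPowSeries k).coeff_zero fun _ ↦ 0]
  simp

theorem hasDerivAt_succPowSeries_zero (k : ℕ) : HasDerivAt (succPowSeries k) (2 ^ k) 0 := by
  have h := (hasFPowerSeriesOnBall_succPowSeries k).hasFPowerSeriesAt.hasDerivAt
  rw [FormalMultilinearSeries.ofScalars_apply_eq] at h
  simpa [one_add_one_eq_two] using h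

/-- The Euler factor at `p` of the correction term `φ`, as a function of `x = p ^ (-s)`: what is
left of the Euler factor of `r ^ k / 4 ^ k` after division by the one of
`(1 - 2 ^ (-s)) ^ (2 ^ (k - 1) - 1) * (ζ s * η s) ^ 2 ^ (k - 1)`. -/
noncomputable def localCorrection (k p : ℕ) (x : ℂ) : ℂ :=
  if p % 4 = 1 then succPowSeries k x * (1 - x) ^ 2 ^ k
  else if p % 4 = 3 then (1 - x ^ 2) ^ (2 ^ (k - 1) - 1)
  else 1

theorem localCorrection_mod_four (k p : ℕ) : localCorrection k (p % 4) = localCorrection k p := by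
  ext x
  simp only [localCorrection, Nat.mod_mod]

theorem differentiableOn_localCorrection (k p : ℕ) :
    DifferentiableOn ℂ (localCorrection k p) (Metric.ball 0 1) := by
  unfold localCorrection
  split_ifs
  · exact (differentiableOn_succPowSeries k).mul (by fun_prop)
  · fun_prop
  · fun_prop

theorem localCorrection_zero (k p : ℕ) : localCorrection k p 0 = 1 := by
  unfold localCorrection
  split_ifs <;> simp [succPowSeries_zero]

theorem deriv_localCorrection_zero (k p : ℕ) : deriv (localCorrection k p) 0 = 0 := by
  have hsub : HasDerivAt (fun x : ℂ ↦ 1 - x) (-1) 0 := (hasDerivAt_id 0).const_sub 1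
  have hsubsq : HasDerivAt (fun x : ℂ ↦ 1 - x ^ 2) 0 0 := by
    simpa using (hasDerivAt_pow 2 (0 : ℂ)).const_sub 1
  unfold localCorrection
  split_ifs
  · refine ((hasDerivAt_succPowSeries_zero k).fun_mul (hsub.fun_pow (2 ^ k))).deriv.trans ?_
    simp [succPowSeries_zero]
  · exact (hsubsq.fun_pow _).deriv.trans (mul_zero _)
  · exact deriv_const _ _

theorem exists_norm_localCorrection_sub_one_le (k : ℕ) {ρ : ℝ} (hρ : ρ < 1) :
    ∃ C : ℝ, 0 ≤ C ∧ ∀ (p : ℕ) (x : ℂ), ‖x‖ ≤ ρ → ‖localCorrection k p x - 1‖ ≤ C * ‖x‖ ^ 2 := by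
  have hC (p : ℕ) : ∃ C : ℝ, ∀ x ∈ Metric.closedBall 0 ρ,
      ‖localCorrection k p x - localCorrection k p 0‖ ≤ C * ‖x - 0‖ ^ 2 :=
    exists_norm_sub_le_mul_sq_of_deriv_eq_zero Metric.isOpen_ball (Metric.mem_ball_self one_pos)
      (isCompact_closedBall 0 ρ) (Metric.closedBall_subset_ball hρ)
      (differentiableOn_localCorrection k p) (deriv_localCorrection_zero k p)
  choose C hC using hC
  refine ⟨∑ q ∈ Finset.range 4, |C q|, Finset.sum_nonneg fun _ _ ↦ abs_nonneg _,
    fun p x hx ↦ ?_⟩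
  have hle : C (p % 4) ≤ ∑ q ∈ Finset.range 4, |C q| :=
    (le_abs_self _).trans (Finset.single_le_sum (f := fun q ↦ |C q|) (fun _ _ ↦ abs_nonneg _)
      (Finset.mem_range.2 (Nat.mod_lt p four_pos)))
  have h := hC (p % 4) x (mem_closedBall_zero_iff.2 hx)
  rw [localCorrection_zero, localCorrection_mod_four, sub_zero] at h
  exact h.trans (mul_le_mul_of_nonneg_right hle (sq_nonneg _))

theorem norm_natCast_cpow_neg_le {n : ℕ} (hn : 2 ≤ n) {σ : ℝ} (hσ : 0 ≤ σ) {s : ℂ}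
    (hs : σ ≤ s.re) : ‖(n : ℂ) ^ (-s)‖ ≤ 2 ^ (-σ) := by
  rw [Complex.norm_natCast_cpow_of_pos (by lia), Complex.neg_re]
  calc (n : ℝ) ^ (-s.re)
    _ ≤ (n : ℝ) ^ (-σ) :=
      Real.rpow_le_rpow_of_exponent_le (by exact_mod_cast (by lia : 1 ≤ n)) (neg_le_neg hs)
    _ ≤ 2 ^ (-σ) :=
      Real.rpow_le_rpow_of_nonpos two_pos (by exact_mod_cast hn) (neg_nonpos.2 hσ)

theorem two_rpow_neg_lt_one {σ : ℝ} (hσ : 0 < σ) : (2 : ℝ) ^ (-σ) < 1 :=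
  Real.rpow_lt_one_of_one_lt_of_neg one_lt_two (neg_lt_zero.2 hσ)

theorem norm_natCast_cpow_neg_lt_one {n : ℕ} (hn : 2 ≤ n) {s : ℂ} (hs : 0 < s.re) :
    ‖(n : ℂ) ^ (-s)‖ < 1 :=
  (norm_natCast_cpow_neg_le hn hs.le le_rfl).trans_lt (two_rpow_neg_lt_one hs)

theorem exists_summable_norm_localCorrection_sub_one_le (k : ℕ) {σ : ℝ} (hσ : 1 / 2 < σ) :
    ∃ u : Nat.Primes → ℝ, Summable u ∧
      ∀ (p : Nat.Primes) (s : ℂ), σ ≤ s.re → ‖localCorrection k p (p ^ (-s)) - 1‖ ≤ u p := by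
  have hσ0 : 0 < σ := one_half_pos.trans hσ
  obtain ⟨C, hC0, hC⟩ := exists_norm_localCorrection_sub_one_le k (two_rpow_neg_lt_one hσ0)
  refine ⟨fun p ↦ C * (p : ℝ) ^ (-(2 * σ)), ?_, fun p s hs ↦ ?_⟩
  · exact ((Real.summable_nat_rpow.2 (by linarith)).comp_injective
      Subtype.val_injective).mul_left C
  · refine (hC p _ (norm_natCast_cpow_neg_le p.2.two_le hσ0.le hs)).trans
      (mul_le_mul_of_nonneg_left ?_ hC0)
    rw [Complex.norm_natCast_cpow_of_pos p.2.pos, Complex.neg_re, ← Real.rpow_mul_natCast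
      (Nat.cast_nonneg _)]
    refine Real.rpow_le_rpow_of_exponent_le (by exact_mod_cast p.2.one_le) ?_
    push_cast
    linarith

/-- The function `φ` of the theorem: the Euler product of the local correction factors. -/
noncomputable def eulerCorrection (k : ℕ) (s : ℂ) : ℂ :=
  ∏' p : Nat.Primes, localCorrection k p (p ^ (-s))

theorem eulerCorrection_eq_tprod_one_add (k : ℕ) (s : ℂ) :
    eulerCorrection k s = ∏' p : Nat.Primes, (1 + (localCorrection k p (p ^ (-s)) - 1)) := by
  simp only [eulerCorrection, add_sub_cancel]

theorem hasProd_eulerCorrection (k : ℕ) {s : ℂ} (hs : 1 / 2 < s.re) :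
    HasProd (fun p : Nat.Primes ↦ localCorrection k p (p ^ (-s))) (eulerCorrection k s) := by
  obtain ⟨u, hu, hle⟩ := exists_summable_norm_localCorrection_sub_one_le k hs
  have hsum : Summable fun p : Nat.Primes ↦ ‖localCorrection k p (p ^ (-s)) - 1‖ :=
    hu.of_nonneg_of_le (fun _ ↦ norm_nonneg _) fun p ↦ hle p s le_rfl
  simpa only [add_sub_cancel] using! (multipliable_one_add_of_summable hsum).hasProd

theorem exists_norm_eulerCorrection_le (k : ℕ) {σ : ℝ} (hσ : 1 / 2 < σ) :
    ∃ B : ℝ, ∀ s : ℂ, σ ≤ s.re → ‖eulerCorrection k s‖ ≤ B := by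
  obtain ⟨u, hu, hle⟩ := exists_summable_norm_localCorrection_sub_one_le k hσ
  refine ⟨Real.exp (∑' p, u p), fun s hs ↦ ?_⟩
  rw [eulerCorrection_eq_tprod_one_add]
  exact norm_tprod_one_add_le_exp_tsum hu fun p ↦ hle p s hs

theorem differentiableOn_eulerCorrection_of_one_half_lt (k : ℕ) {σ : ℝ} (hσ : 1 / 2 < σ) :
    DifferentiableOn ℂ (eulerCorrection k) {s : ℂ | σ < s.re} := by
  obtain ⟨u, hu, hle⟩ := exists_summable_norm_localCorrection_sub_one_le k hσ
  simp only [funext (eulerCorrection_eq_tprod_one_add k)]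
  refine differentiableOn_tprod_one_add (isOpen_lt continuous_const Complex.continuous_re) hu
    (fun p ↦ ?_) fun p s hs ↦ hle p s (le_of_lt hs)
  refine ((differentiableOn_localCorrection k p).comp ?_ fun s hs ↦ ?_).sub_const 1
  · exact fun s _ ↦ (DifferentiableAt.const_cpow (by fun_prop)
      (.inl (Nat.cast_ne_zero.2 p.2.ne_zero))).differentiableWithinAt
  · exact mem_ball_zero_iff.2 (norm_natCast_cpow_neg_lt_one p.2.two_le
      ((one_half_pos.trans hσ).trans hs))

theorem differentiableOn_eulerCorrection (k : ℕ) :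
    DifferentiableOn ℂ (eulerCorrection k) {s : ℂ | 1 / 2 < s.re} := by
  intro s hs
  obtain ⟨σ, hσ, hσs⟩ := exists_between (show 1 / 2 < s.re from hs)
  have hopen : IsOpen {z : ℂ | σ < z.re} := isOpen_lt continuous_const Complex.continuous_re
  exact ((differentiableOn_eulerCorrection_of_one_half_lt k hσ).differentiableAt
    (hopen.mem_nhds hσs)).differentiableWithinAt

/-! ### Euler product of the powers of `r / 4` -/

section LSeries

variable {a : ℕ → ℂ} {s : ℂ}

theorem tsum_succ_div_cpow_eq_LSeries (ha : LSeriesSummable a s) :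
    ∑' n : ℕ, a (n + 1) / ((n : ℂ) + 1) ^ s = LSeries a s := by
  rw [LSeries, ha.tsum_eq_zero_add, LSeries.term_zero, zero_add]
  refine tsum_congr fun n ↦ ?_
  rw [LSeries.term_of_ne_zero n.succ_ne_zero, Nat.cast_succ]

theorem LSeries_term_mul_of_coprime (hmul : ∀ {m n : ℕ}, m.Coprime n → a (m * n) = a m * a n)
    {m n : ℕ} (hmn : m.Coprime n) :
    LSeries.term a s (m * n) = LSeries.term a s m * LSeries.term a s n := by
  rcases eq_or_ne m 0 with rfl | hm
  · rw [zero_mul, LSeries.term_zero, zero_mul]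
  rcases eq_or_ne n 0 with rfl | hn
  · rw [mul_zero, LSeries.term_zero, mul_zero]
  rw [LSeries.term_of_ne_zero (mul_ne_zero hm hn), LSeries.term_of_ne_zero hm,
    LSeries.term_of_ne_zero hn, hmul hmn, Nat.cast_mul, Complex.natCast_mul_natCast_cpow,
    mul_div_mul_comm]

theorem LSeries_term_pow {p : ℕ} (hp : p ≠ 0) (e : ℕ) :
    LSeries.term a s (p ^ e) = a (p ^ e) * ((p : ℂ) ^ (-s)) ^ e := by
  rw [LSeries.term_of_ne_zero (pow_ne_zero e hp), div_eq_mul_inv, ← Complex.cpow_neg,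
    ← Complex.cpow_nat_mul, Complex.natCast_cpow_natCast_mul, Nat.cast_pow]

theorem hasProd_LSeries_of_mul_of_coprime (h1 : a 1 = 1)
    (hmul : ∀ {m n : ℕ}, m.Coprime n → a (m * n) = a m * a n) (ha : LSeriesSummable a s) :
    HasProd (fun p : Nat.Primes ↦ ∑' e : ℕ, a (p ^ e) * ((p : ℂ) ^ (-s)) ^ e) (LSeries a s) := by
  have hterm1 : LSeries.term a s 1 = 1 := by
    rw [LSeries.term_of_ne_zero one_ne_zero, h1, Nat.cast_one, Complex.one_cpow, div_one]
  have hpow (p : Nat.Primes) (e : ℕ) :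
      LSeries.term a s (p ^ e) = a (p ^ e) * ((p : ℂ) ^ (-s)) ^ e :=
    LSeries_term_pow p.2.ne_zero e
  have hprod := EulerProduct.eulerProduct_hasProd hterm1 (LSeries_term_mul_of_coprime hmul) ha.norm
    (LSeries.term_zero a s)
  simpa only [hpow] using! hprod

end LSeries

/-- The nontrivial Dirichlet character modulo `4`, with complex values. -/
noncomputable def chiFour : DirichletCharacter ℂ 4 :=
  ZMod.χ₄.ringHomComp (Int.castRingHom ℂ)

theorem chiFour_natCast (n : ℕ) : chiFour n = (ZMod.χ₄ n : ℂ) :=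
  rfl

theorem chiFour_two_mul (j : ℕ) : chiFour (2 * j : ℕ) = 0 := by
  rw [chiFour_natCast, ZMod.χ₄_nat_eq_if_mod_four, if_pos (Nat.mul_mod_right 2 j), Int.cast_zero]

theorem chiFour_two_mul_add_one (j : ℕ) : chiFour (2 * j + 1 : ℕ) = (-1) ^ j := by
  rw [chiFour_natCast, ZMod.χ₄_eq_neg_one_pow (by lia), show (2 * j + 1) / 2 = j by lia]
  push_cast
  rfl

theorem LSeries_chiFour {s : ℂ} (hs : 1 < s.re) : LSeries (fun n ↦ chiFour n) s = eta s := by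
  have hsum := DirichletCharacter.LSeriesSummable_of_one_lt_re chiFour hs
  have heven (j : ℕ) : LSeries.term (fun n ↦ chiFour n) s (2 * j) = 0 := by
    rw [LSeries.term_def, chiFour_two_mul, zero_div, ite_self]
  have hodd (j : ℕ) : LSeries.term (fun n ↦ chiFour n) s (2 * j + 1) =
      (-1) ^ j / (2 * (j : ℂ) + 1) ^ s := by
    rw [LSeries.term_of_ne_zero (Nat.succ_ne_zero _), chiFour_two_mul_add_one]
    push_cast
    rfl
  rw [LSeries, ← tsum_even_add_odd (hsum.comp_injective fun _ _ h ↦ by lia)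
    (hsum.comp_injective fun _ _ h ↦ by lia)]
  simp only [heven, hodd, tsum_zero, zero_add, eta]

section EulerFactor

variable {k p : ℕ} {x : ℂ}

theorem tsum_normClassCount_two_pow (hx : ‖x‖ < 1) :
    ∑' e : ℕ, (normClassCount (2 ^ e) : ℂ) ^ k * x ^ e = (1 - x)⁻¹ := by
  simp only [normClassCount_two_pow, Nat.cast_one, one_pow, one_mul]
  exact tsum_geometric_of_norm_lt_one hx

theorem tsum_normClassCount_prime_pow_of_mod_four_eq_one (hp : p.Prime) (h : p % 4 = 1) :
    ∑' e : ℕ, (normClassCount (p ^ e) : ℂ) ^ k * x ^ e = succPowSeries k x := by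
  simp only [normClassCount_prime_pow_of_mod_four_eq_one hp h, Nat.cast_add, Nat.cast_one,
    succPowSeries]

theorem tsum_normClassCount_prime_pow_of_mod_four_eq_three (hk : k ≠ 0) (hp : p.Prime)
    (h : p % 4 = 3) (hx : ‖x‖ < 1) :
    ∑' e : ℕ, (normClassCount (p ^ e) : ℂ) ^ k * x ^ e = (1 - x ^ 2)⁻¹ := by
  have hx2 : ‖x ^ 2‖ < 1 := by
    rw [norm_pow]
    exact pow_lt_one₀ (norm_nonneg x) hx two_ne_zero
  simp only [normClassCount_prime_pow_of_mod_four_eq_three hp h]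
  rw [← add_zero (1 - x ^ 2)⁻¹]
  refine (HasSum.even_add_odd ?_ ?_).tsum_eq
  · simpa [pow_mul] using hasSum_geometric_of_norm_lt_one hx2
  · simp [hk, hasSum_zero]

theorem tsum_normClassCount_prime_pow (hk : 1 ≤ k) (hp : p.Prime) (hx : ‖x‖ < 1) :
    ∑' e : ℕ, (normClassCount (p ^ e) : ℂ) ^ k * x ^ e =
      (if p = 2 then (1 - x) ^ (2 ^ (k - 1) - 1) else 1) *
        ((1 - x)⁻¹ * (1 - chiFour p * x)⁻¹) ^ 2 ^ (k - 1) * localCorrection k p x := by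
  have hsub : 1 - x ≠ 0 := fun h ↦ by simp [← sub_eq_zero.1 h] at hx
  have hadd : 1 + x ≠ 0 := fun h ↦ by simp [eq_neg_of_add_eq_zero_right h] at hx
  obtain ⟨N, hN⟩ : ∃ N, 2 ^ (k - 1) = N + 1 :=
    ⟨2 ^ (k - 1) - 1, (Nat.sub_add_cancel Nat.one_le_two_pow).symm⟩
  have hinv {y : ℂ} (hy : y ≠ 0) : (y⁻¹) ^ (N + 1) * y ^ N = y⁻¹ := by
    rw [pow_succ', inv_pow, inv_mul_cancel_right₀ (pow_ne_zero N hy)]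
  rcases prime_eq_two_or_mod_four_eq_one_or_three hp with rfl | h | h
  · have hchi : chiFour (2 : ℕ) = 0 := chiFour_two_mul 1
    rw [tsum_normClassCount_two_pow hx, hchi, if_pos rfl, hN, Nat.add_sub_cancel, zero_mul,
      sub_zero, inv_one, mul_one, mul_comm (_ ^ N), hinv hsub]
    simp [localCorrection]
  · have h2k : 2 ^ k = 2 * (N + 1) := by rw [← hN, ← pow_succ', Nat.sub_add_cancel hk]
    rw [tsum_normClassCount_prime_pow_of_mod_four_eq_one hp h, chiFour_natCast,
      ZMod.χ₄_nat_one_mod_four h, if_neg (by lia), localCorrection, if_pos h, hN, h2k,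
      Int.cast_one, one_mul, one_mul, pow_mul, ← mul_inv, ← sq, inv_pow, mul_left_comm,
      inv_mul_cancel₀ (pow_ne_zero _ (pow_ne_zero _ hsub)), mul_one]
  · have hfactor : (1 - x)⁻¹ * (1 - -1 * x)⁻¹ = (1 - x ^ 2)⁻¹ := by
      rw [← mul_inv]
      congr 1
      ring
    have hne : 1 - x ^ 2 ≠ 0 := by
      rw [show 1 - x ^ 2 = (1 - x) * (1 + x) by ring]
      exact mul_ne_zero hsub hadd
    rw [tsum_normClassCount_prime_pow_of_mod_four_eq_three (by lia) hp h hx, chiFour_natCast,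
      ZMod.χ₄_nat_three_mod_four h, if_neg (by lia), localCorrection, if_neg (by lia), if_pos h,
      hN, Nat.add_sub_cancel, one_mul, Int.cast_neg, Int.cast_one, hfactor, hinv hne]

end EulerFactor

theorem hasProd_ite_eq_two (z : ℂ) :
    HasProd (fun p : Nat.Primes ↦ if (p : ℕ) = 2 then z else 1) z := by
  have h := hasProd_single (f := fun p : Nat.Primes ↦ if (p : ℕ) = 2 then z else 1)
    ⟨2, Nat.prime_two⟩ fun p hp ↦ if_neg fun h ↦ hp (Subtype.ext h)
  rwa [if_pos rfl] at h

theorem LSeries_normClassCount_pow {k : ℕ} (hk : 1 ≤ k) {s : ℂ} (hs : 1 < s.re) :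
    LSeries (fun n ↦ (normClassCount n : ℂ) ^ k) s =
      (1 - (2 : ℂ) ^ (-s)) ^ (2 ^ (k - 1) - 1) * (riemannZeta s * eta s) ^ 2 ^ (k - 1) *
        eulerCorrection k s := by
  have hs2 : 1 / 2 < s.re := by linarith
  have hleft := hasProd_LSeries_of_mul_of_coprime (a := fun n ↦ (normClassCount n : ℂ) ^ k)
    (by rw [normClassCount_one, Nat.cast_one, one_pow])
    (fun hmn ↦ by rw [normClassCount_mul_of_coprime hmn, Nat.cast_mul, mul_pow])
    (LSeriesSummable_normClassCount_pow k hs)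
  have hzeta_eta := ((riemannZeta_eulerProduct_hasProd hs).mul
    (DirichletCharacter.LSeries_eulerProduct_hasProd chiFour hs)).pow (2 ^ (k - 1))
  have hright := ((hasProd_ite_eq_two ((1 - (2 : ℂ) ^ (-s)) ^ (2 ^ (k - 1) - 1))).mul
    hzeta_eta).mul (hasProd_eulerCorrection k hs2)
  rw [LSeries_chiFour hs] at hright
  have hfactor (p : Nat.Primes) :
      ∑' e : ℕ, (normClassCount (p ^ e) : ℂ) ^ k * ((p : ℂ) ^ (-s)) ^ e =
        (if (p : ℕ) = 2 then (1 - (2 : ℂ) ^ (-s)) ^ (2 ^ (k - 1) - 1) else 1) *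
          ((1 - (p : ℂ) ^ (-s))⁻¹ * (1 - chiFour p * (p : ℂ) ^ (-s))⁻¹) ^ 2 ^ (k - 1) *
            localCorrection k p (p ^ (-s)) := by
    rw [tsum_normClassCount_prime_pow hk p.2
      (norm_natCast_cpow_neg_lt_one p.2.two_le (by linarith))]
    split_ifs with h
    · simp only [h, Nat.cast_ofNat]
    · rfl
  simp only [hfactor] at hleft
  exact hleft.unique hright

theorem tsum_r_pow_div_cpow (k : ℕ) {s : ℂ} (hs : 1 < s.re) :
    ∑' n : ℕ, (r (n + 1) : ℂ) ^ k / ((n : ℂ) + 1) ^ s =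
      4 ^ k * LSeries (fun n ↦ (normClassCount n : ℂ) ^ k) s := by
  rw [← tsum_succ_div_cpow_eq_LSeries (LSeriesSummable_normClassCount_pow k hs), ← tsum_mul_left]
  refine tsum_congr fun n ↦ ?_
  rw [r_eq_four_mul_normClassCount n.succ_ne_zero, Nat.cast_mul, mul_pow, mul_div_assoc,
    Nat.cast_ofNat]

theorem stmt2 (k : ℕ) (hk : 1 ≤ k) :
    ∃ φ : ℂ → ℂ, DifferentiableOn ℂ φ {s : ℂ | 1 / 2 < s.re} ∧
      (∀ σ : ℝ, 1 / 2 < σ → ∃ B : ℝ, ∀ s : ℂ, σ ≤ s.re → ‖φ s‖ ≤ B) ∧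
      ∀ s : ℂ, 1 < s.re →
        ∑' n : ℕ, (r (n + 1) : ℂ) ^ k / ((n : ℂ) + 1) ^ s =
          4 ^ k * (1 - (2 : ℂ) ^ (-s)) ^ (2 ^ (k - 1) - 1) *
            (riemannZeta s * eta s) ^ (2 ^ (k - 1)) * φ s := by
  refine ⟨eulerCorrection k, differentiableOn_eulerCorrection k,
    fun σ hσ ↦ exists_norm_eulerCorrection_le k hσ, fun s hs ↦ ?_⟩
  rw [tsum_r_pow_div_cpow k hs, LSeries_normClassCount_pow hk hs]
  ring
end

section
/- (Kühnlein's criterion) Let L ⊆ ℝ² be a lattice, i.e., L = ℤu ⊕ ℤv for linearly independent u, v ∈ ℝ². Call L arithmetic if there exists c > 0 such that c·‖w‖² ∈ ℚ for every w ∈ L. Then L is arithmetic if and only if there exist three vectors w₁, w₂, w₃ ∈ L that are pairwise linearly independent over ℝ and satisfy ‖w₁‖ = ‖w₂‖ = ‖w₃‖. -/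
/-- A lattice in the Euclidean plane: `L = ℤu ⊕ ℤv` for linearly independent `u`, `v`. -/
def IsLattice (L : Set (EuclideanSpace ℝ (Fin 2))) : Prop :=
  ∃ u v : EuclideanSpace ℝ (Fin 2), LinearIndependent ℝ ![u, v] ∧
    L = {w | ∃ a b : ℤ, w = a • u + b • v}

/-- A lattice `L ⊆ ℝ²` is arithmetic if some positive rescaling makes all squared norms
of lattice vectors rational. -/
def IsArithmetic (L : Set (EuclideanSpace ℝ (Fin 2))) : Prop :=
  ∃ c : ℝ, 0 < c ∧ ∀ w ∈ L, ∃ q : ℚ, c * ‖w‖ ^ 2 = (q : ℝ)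

/-!
If a lattice is arithmetic, all its inner products have rational ratios, so Gram–Schmidt stays
inside the lattice after clearing denominators and gives orthogonal `u, e ∈ L` with
`m ‖e‖² = k ‖u‖²` for positive integers `m, k`; doubling `e` if necessary, `m ≠ k`. Then
`(m + k) u` and `(m - k) u ± 2 m e` all have length `(m + k) ‖u‖`.

Conversely, three pairwise independent vectors in a group of rank two satisfy an integral relation
`n w₃ = a w₁ + b w₂` with `n, a, b` nonzero. If their lengths agree, expanding the squared norm
shows that `⟪w₁, w₂⟫ / ‖w₁‖²` is rational. Every lattice vector is a rational combination of `w₁`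
and `w₂`, so its squared norm is a rational multiple of `‖w₁‖²`.
-/

open Module
open scoped RealInnerProductSpace

theorem exists_smul_eq_of_rank_le_two {R M : Type*} [Ring R] [Nontrivial R] [AddCommGroup M]
    [Module R M] {N : Submodule R M} (hN : Module.rank R N ≤ 2) {x y z : M} (hx : x ∈ N)
    (hy : y ∈ N) (hz : z ∈ N) (hxy : LinearIndependent R ![x, y]) :
    ∃ n a b : R, n ≠ 0 ∧ n • z = a • x + b • y := by
  have hdep : ¬ LinearIndependent R ![(⟨x, hx⟩ : N), ⟨y, hy⟩, ⟨z, hz⟩] := fun h => by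
    have hcard := h.cardinal_lift_le_rank.trans (Cardinal.lift_le.2 hN)
    norm_num at hcard
  obtain ⟨g, hg, i, hi⟩ := Fintype.not_linearIndependent_iff.1 hdep
  have hrel : g 0 • x + g 1 • y + g 2 • z = 0 := by
    simpa [Fin.sum_univ_three] using congrArg N.subtype hg
  refine ⟨g 2, -g 0, -g 1, fun h2 => hi ?_, ?_⟩
  · obtain ⟨h0, h1⟩ := LinearIndependent.pair_iff.1 hxy (g 0) (g 1) (by simpa [h2] using hrel)
    fin_cases i <;> assumption
  · rw [eq_neg_of_add_eq_zero_right hrel, neg_add, neg_smul, neg_smul]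

section InnerProductSpace

variable {E : Type*} [NormedAddCommGroup E] [InnerProductSpace ℝ E]

theorem norm_smul_add_smul_sq_real (a b : ℝ) (x y : E) :
    ‖a • x + b • y‖ ^ 2 = a ^ 2 * ‖x‖ ^ 2 + 2 * a * b * ⟪x, y⟫ + b ^ 2 * ‖y‖ ^ 2 := by
  rw [norm_add_sq_real, norm_smul, norm_smul, mul_pow, mul_pow, real_inner_smul_left,
    real_inner_smul_right, Real.norm_eq_abs, Real.norm_eq_abs, sq_abs, sq_abs]
  ring

/-- All squared norms of vectors of `S` are rational after scaling by one positive factor; this is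
arithmeticity for subsets of an arbitrary real inner product space. -/
def HasCommensurableSqNorms (S : Set E) : Prop :=
  ∃ c : ℝ, 0 < c ∧ ∀ w ∈ S, ∃ q : ℚ, c * ‖w‖ ^ 2 = (q : ℝ)

variable {L : Submodule ℤ E} {u v e x y w w₁ w₂ w₃ : E}

namespace HasCommensurableSqNorms

theorem exists_rat_inner_eq (hL : HasCommensurableSqNorms (L : Set E)) (hu : u ∈ L) (hu0 : u ≠ 0)
    (hx : x ∈ L) (hy : y ∈ L) : ∃ r : ℚ, ⟪x, y⟫ = r * ‖u‖ ^ 2 := by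
  obtain ⟨c, hc, hrat⟩ := hL
  obtain ⟨p, hp⟩ := hrat u hu
  obtain ⟨qx, hqx⟩ := hrat x hx
  obtain ⟨qy, hqy⟩ := hrat y hy
  obtain ⟨qxy, hqxy⟩ := hrat (x + y) (L.add_mem hx hy)
  have hinner : c * ⟪x, y⟫ = (qxy - qx - qy) / 2 := by
    linear_combination (hqxy - hqx - hqy - c * norm_add_sq_real x y) / 2
  refine ⟨(qxy - qx - qy) / 2 / p, ?_⟩
  push_cast
  rw [← hinner, ← hp]
  field_simp

theorem exists_int_mul_inner_eq (hL : HasCommensurableSqNorms (L : Set E)) (hu : u ∈ L)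
    (hu0 : u ≠ 0) (hx : x ∈ L) (hy : y ∈ L) :
    ∃ m k : ℤ, 0 < m ∧ m * ⟪x, y⟫ = k * ‖u‖ ^ 2 := by
  obtain ⟨r, hr⟩ := hL.exists_rat_inner_eq hu hu0 hx hy
  refine ⟨r.den, r.num, mod_cast r.den_pos, ?_⟩
  rw [hr, Rat.cast_def]
  push_cast
  field_simp

theorem exists_mem_inner_eq_zero (hL : HasCommensurableSqNorms (L : Set E)) (hu : u ∈ L)
    (hv : v ∈ L) (huv : LinearIndependent ℤ ![u, v]) : ∃ e ∈ L, e ≠ 0 ∧ ⟪u, e⟫ = 0 := by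
  obtain ⟨m, k, hm, hmk⟩ := hL.exists_int_mul_inner_eq hu (huv.ne_zero 0) hu hv
  refine ⟨m • v - k • u, L.sub_mem (L.smul_mem m hv) (L.smul_mem k hu), fun h => ?_, ?_⟩
  · have hrel : -k • u + m • v = 0 := by rw [← h]; module
    exact hm.ne' (LinearIndependent.pair_iff.1 huv _ _ hrel).2
  · rw [← Int.cast_smul_eq_zsmul ℝ, ← Int.cast_smul_eq_zsmul ℝ, inner_sub_right,
      real_inner_smul_right, real_inner_smul_right, real_inner_self_eq_norm_sq, hmk, sub_self]

end HasCommensurableSqNorms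

theorem exists_mem_inner_eq_zero_norm_ne (he : e ∈ L) (he0 : e ≠ 0) (hue : ⟪u, e⟫ = 0) :
    ∃ f ∈ L, f ≠ 0 ∧ ⟪u, f⟫ = 0 ∧ ‖f‖ ≠ ‖u‖ := by
  by_cases hnorm : ‖e‖ = ‖u‖
  · refine ⟨e + e, L.add_mem he he, by simpa [← two_smul ℝ] using he0,
      by rw [inner_add_right, hue, add_zero], fun h => he0 ?_⟩
    rw [← two_smul ℝ, norm_smul, Real.norm_ofNat, ← hnorm] at h
    exact norm_eq_zero.1 (by linarith)
  · exact ⟨e, he, he0, hue, hnorm⟩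

-- After division by `m + k`: the second intersections of the ellipse `‖p • u + q • e‖ = ‖u‖`
-- with the lines of slope `±1` through `(p, q) = (-1, 0)`.
theorem norm_sub_smul_add_smul_of_inner_eq_zero (hue : ⟪u, e⟫ = 0) {m k t : ℝ}
    (hmk : m * ‖e‖ ^ 2 = k * ‖u‖ ^ 2) (ht : t ^ 2 = (2 * m) ^ 2) :
    ‖(m - k) • u + t • e‖ = ‖(m + k) • u‖ := by
  rw [← sq_eq_sq₀ (norm_nonneg _) (norm_nonneg _), norm_smul_add_smul_sq_real, norm_smul, mul_pow,
    Real.norm_eq_abs, sq_abs, hue, ht]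
  linear_combination 4 * m * hmk

theorem linearIndependent_pair_of_inner_eq_zero (hu : u ≠ 0) (he : e ≠ 0) (hue : ⟪u, e⟫ = 0) :
    LinearIndependent ℝ ![u, e] := by
  refine linearIndependent_of_ne_zero_of_inner_eq_zero (by simp [Fin.forall_fin_two, hu, he]) ?_
  simp [Pairwise, Fin.forall_fin_two, hue, real_inner_comm]

theorem exists_three_norm_eq_of_inner_eq_zero (hu : u ∈ L) (he : e ∈ L) (hu0 : u ≠ 0) (he0 : e ≠ 0)
    (hue : ⟪u, e⟫ = 0) (hnorm : ‖e‖ ≠ ‖u‖) {m k : ℤ} (hm : 0 < m)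
    (hmk : m * ‖e‖ ^ 2 = k * ‖u‖ ^ 2) :
    ∃ w₁ ∈ L, ∃ w₂ ∈ L, ∃ w₃ ∈ L,
      LinearIndependent ℝ ![w₁, w₂] ∧ LinearIndependent ℝ ![w₁, w₃] ∧
      LinearIndependent ℝ ![w₂, w₃] ∧ ‖w₁‖ = ‖w₂‖ ∧ ‖w₂‖ = ‖w₃‖ := by
  have hm' : (0 : ℝ) < m := mod_cast hm
  have hk' : (0 : ℝ) < k := pos_of_mul_pos_left (hmk ▸ by positivity) (sq_nonneg ‖u‖)
  have hmk_ne : (m - k : ℝ) ≠ 0 := fun h => hnorm <| by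
    rw [← sq_eq_sq₀ (norm_nonneg _) (norm_nonneg _)]
    exact mul_left_cancel₀ hm'.ne' (by rw [hmk, sub_eq_zero.1 h])
  have hmem (a b : ℤ) : (a : ℝ) • u + (b : ℝ) • e ∈ L := by
    simpa only [Int.cast_smul_eq_zsmul] using L.add_mem (L.smul_mem a hu) (L.smul_mem b he)
  have hindep {a b c d : ℝ} (hdet : a * d ≠ b * c) :
      LinearIndependent ℝ ![a • u + b • e, c • u + d • e] :=
    (LinearIndependent.pair_add_smul_add_smul_iff ..).2
      ⟨linearIndependent_pair_of_inner_eq_zero hu0 he0 hue, hdet⟩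
  have hnorm_eq {t : ℝ} (ht : t ^ 2 = (2 * m) ^ 2) :=
    norm_sub_smul_add_smul_of_inner_eq_zero hue hmk ht
  refine ⟨(m + k : ℝ) • u + (0 : ℝ) • e, mod_cast hmem (m + k) 0,
    (m - k : ℝ) • u + (2 * m : ℝ) • e, mod_cast hmem (m - k) (2 * m),
    (m - k : ℝ) • u + (-(2 * m) : ℝ) • e, mod_cast hmem (m - k) (-(2 * m)),
    hindep ?_, hindep ?_, hindep fun h => ?_, ?_, ?_⟩
  · rw [zero_mul]
    positivity
  · rw [zero_mul, mul_neg, neg_ne_zero]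
    positivity
  · exact mul_ne_zero hm'.ne' hmk_ne (by linarith)
  · rw [zero_smul, add_zero, hnorm_eq rfl]
  · rw [hnorm_eq rfl, hnorm_eq (neg_sq _)]

theorem HasCommensurableSqNorms.exists_three_norm_eq (hL : HasCommensurableSqNorms (L : Set E))
    (hu : u ∈ L) (hv : v ∈ L) (huv : LinearIndependent ℤ ![u, v]) :
    ∃ w₁ ∈ L, ∃ w₂ ∈ L, ∃ w₃ ∈ L,
      LinearIndependent ℝ ![w₁, w₂] ∧ LinearIndependent ℝ ![w₁, w₃] ∧
      LinearIndependent ℝ ![w₂, w₃] ∧ ‖w₁‖ = ‖w₂‖ ∧ ‖w₂‖ = ‖w₃‖ := by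
  have hu0 : u ≠ 0 := huv.ne_zero 0
  obtain ⟨f, hf, hf0, huf⟩ := hL.exists_mem_inner_eq_zero hu hv huv
  obtain ⟨e, he, he0, hue, hnorm⟩ := exists_mem_inner_eq_zero_norm_ne hf hf0 huf
  obtain ⟨m, k, hm, hmk⟩ := hL.exists_int_mul_inner_eq hu hu0 he he
  rw [real_inner_self_eq_norm_sq] at hmk
  exact exists_three_norm_eq_of_inner_eq_zero hu he hu0 he0 hue hnorm hm hmk

theorem sq_mul_norm_sq_of_smul_eq {n a b : ℤ} (hw : n • w = a • x + b • y) (hxy : ‖x‖ = ‖y‖) :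
    (n : ℝ) ^ 2 * ‖w‖ ^ 2 = (a ^ 2 + b ^ 2) * ‖x‖ ^ 2 + 2 * a * b * ⟪x, y⟫ := by
  have hw' : (n : ℝ) • w = (a : ℝ) • x + (b : ℝ) • y := by
    simpa only [Int.cast_smul_eq_zsmul] using hw
  have hsq := norm_smul_add_smul_sq_real (a : ℝ) b x y
  rw [← hw', norm_smul, mul_pow, Real.norm_eq_abs, sq_abs, ← hxy] at hsq
  linear_combination hsq

theorem exists_rat_inner_eq_of_smul_eq {n a b : ℤ} (ha : a ≠ 0) (hb : b ≠ 0)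
    (hw : n • w = a • x + b • y) (hxy : ‖x‖ = ‖y‖) (hxw : ‖x‖ = ‖w‖) :
    ∃ s : ℚ, ⟪x, y⟫ = s * ‖x‖ ^ 2 := by
  have hsq := sq_mul_norm_sq_of_smul_eq hw hxy
  refine ⟨(n ^ 2 - a ^ 2 - b ^ 2) / (2 * a * b), ?_⟩
  push_cast
  field_simp
  linear_combination -hsq - (n : ℝ) ^ 2 * (‖x‖ + ‖w‖) * hxw

theorem exists_rat_norm_sq_eq_of_smul_eq {n a b : ℤ} (hn : n ≠ 0) (hw : n • w = a • x + b • y)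
    (hxy : ‖x‖ = ‖y‖) {s : ℚ} (hs : ⟪x, y⟫ = s * ‖x‖ ^ 2) : ∃ q : ℚ, ‖w‖ ^ 2 = q * ‖x‖ ^ 2 := by
  have hsq := sq_mul_norm_sq_of_smul_eq hw hxy
  refine ⟨(a ^ 2 + b ^ 2 + 2 * a * b * s) / n ^ 2, ?_⟩
  push_cast
  field_simp
  linear_combination hsq + 2 * a * b * hs

theorem hasCommensurableSqNorms_of_norm_eq (hL : Module.rank ℤ L ≤ 2) (h₁ : w₁ ∈ L) (h₂ : w₂ ∈ L)
    (h₃ : w₃ ∈ L) (h₁₂ : LinearIndependent ℤ ![w₁, w₂]) (h₁₃ : LinearIndependent ℤ ![w₁, w₃])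
    (h₂₃ : LinearIndependent ℤ ![w₂, w₃]) (hnorm₁₂ : ‖w₁‖ = ‖w₂‖) (hnorm₂₃ : ‖w₂‖ = ‖w₃‖) :
    HasCommensurableSqNorms (L : Set E) := by
  obtain ⟨n, a, b, hn, hrel⟩ := exists_smul_eq_of_rank_le_two hL h₁ h₂ h₃ h₁₂
  have ha : a ≠ 0 := by
    rintro rfl
    exact hn (LinearIndependent.pair_iff.1 h₂₃ (-b) n (by rw [hrel]; module)).2
  have hb : b ≠ 0 := by
    rintro rfl
    exact hn (LinearIndependent.pair_iff.1 h₁₃ (-a) n (by rw [hrel]; module)).2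
  obtain ⟨s, hs⟩ := exists_rat_inner_eq_of_smul_eq ha hb hrel hnorm₁₂ (hnorm₁₂.trans hnorm₂₃)
  have hw₁ : ‖w₁‖ ≠ 0 := norm_ne_zero_iff.2 (h₁₂.ne_zero 0)
  refine ⟨(‖w₁‖ ^ 2)⁻¹, by positivity, fun w hw => ?_⟩
  obtain ⟨n', a', b', hn', hrel'⟩ := exists_smul_eq_of_rank_le_two hL h₁ h₂ hw h₁₂
  obtain ⟨q, hq⟩ := exists_rat_norm_sq_eq_of_smul_eq hn' hrel' hnorm₁₂ hs
  exact ⟨q, by rw [hq]; field_simp⟩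

theorem stmt13_general (L : Submodule ℤ E) (hL : finrank ℤ L = 2) :
    HasCommensurableSqNorms (L : Set E) ↔
      ∃ w₁ ∈ L, ∃ w₂ ∈ L, ∃ w₃ ∈ L,
        LinearIndependent ℝ ![w₁, w₂] ∧ LinearIndependent ℝ ![w₁, w₃] ∧
        LinearIndependent ℝ ![w₂, w₃] ∧ ‖w₁‖ = ‖w₂‖ ∧ ‖w₂‖ = ‖w₃‖ := by
  constructor
  · intro h
    obtain ⟨f, hf⟩ := exists_linearIndependent_of_le_finrank hL.ge
    have hpair : L.subtype ∘ f = ![(f 0 : E), f 1] := by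
      ext i
      fin_cases i <;> rfl
    exact h.exists_three_norm_eq (f 0).2 (f 1).2 (hpair ▸ hf.map' L.subtype L.ker_subtype)
  · rintro ⟨w₁, h₁, w₂, h₂, w₃, h₃, h₁₂, h₁₃, h₂₃, hnorm₁₂, hnorm₂₃⟩
    exact hasCommensurableSqNorms_of_norm_eq ((rank_eq_ofNat_iff_finrank_eq_ofNat 2).2 hL).le
      h₁ h₂ h₃ (h₁₂.restrict_scalars' ℤ) (h₁₃.restrict_scalars' ℤ) (h₂₃.restrict_scalars' ℤ)
      hnorm₁₂ hnorm₂₃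

end InnerProductSpace

theorem IsLattice.exists_submodule_finrank_eq_two {L : Set (EuclideanSpace ℝ (Fin 2))}
    (hL : IsLattice L) :
    ∃ M : Submodule ℤ (EuclideanSpace ℝ (Fin 2)), finrank ℤ M = 2 ∧ (M : Set _) = L := by
  obtain ⟨u, v, huv, rfl⟩ := hL
  refine ⟨Submodule.span ℤ {u, v}, ?_, ?_⟩
  · rw [← Matrix.range_cons_cons_empty u v ![]]
    exact finrank_span_eq_card (huv.restrict_scalars' ℤ)
  · ext w
    simp only [SetLike.mem_coe, Submodule.mem_span_pair, Set.mem_ofPred_eq, eq_comm]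

/-- Kühnlein's criterion: a lattice is arithmetic iff it contains three pairwise linearly
independent vectors of the same length. -/
theorem stmt13 (L : Set (EuclideanSpace ℝ (Fin 2))) (hL : IsLattice L) :
    IsArithmetic L ↔
      ∃ w₁ ∈ L, ∃ w₂ ∈ L, ∃ w₃ ∈ L,
        LinearIndependent ℝ ![w₁, w₂] ∧ LinearIndependent ℝ ![w₁, w₃] ∧
        LinearIndependent ℝ ![w₂, w₃] ∧ ‖w₁‖ = ‖w₂‖ ∧ ‖w₂‖ = ‖w₃‖ := by
  obtain ⟨M, hM, rfl⟩ := hL.exists_submodule_finrank_eq_two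
  exact stmt13_general M hM
end

section
/- Let L ⊆ ℝ² be a lattice (L = ℤu ⊕ ℤv with u, v linearly independent) that is not arithmetic, i.e., there is no c > 0 with c·‖w‖² ∈ ℚ for all w ∈ L. Then: (a) for every r > 0, #{w ∈ L : ‖w‖ = r} ≤ 4, so every distance between points of L is repeated at most 4 times among difference vectors; and (b) for every finite subset P ⊆ L with |P| = N ≥ 2, the number of distinct distances satisfies d(P) ≥ (N − 1)/4. -/
/-- The number of distinct distances determined by a finite set `P` in a metric space. -/
noncomputable def distinctDists {M : Type*} [MetricSpace M] (P : Finset M) : ℕ :=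
  Set.ncard {d : ℝ | ∃ p ∈ P, ∃ q ∈ P, p ≠ q ∧ dist p q = d}

/-!
Suppose a circle about the origin contains three lattice vectors `x`, `y`, `z`, no two of which
are equal or opposite. Having equal norms, they are pairwise linearly independent, and since the
lattice has rank two, `z = s x + t y` with `s`, `t` rational and nonzero. Expanding
`‖z‖² = ‖x‖² = ‖y‖²` gives `⟪x, y⟫ ∈ ℚ ‖x‖²`. Every lattice vector is a rational combination of `x`
and `y`, so all squared norms lie in `ℚ ‖x‖²` and the lattice is arithmetic. Hence in a
non-arithmetic lattice each circle about the origin, and by translation about any point `p ∈ P`,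
carries at most four lattice points. The `N - 1` points of `P` other than `p` therefore lie on at
least `(N - 1) / 4` circles about `p`.
-/

theorem finite_setOf_dist {M : Type*} [Dist M] (P : Finset M) :
    {d : ℝ | ∃ p ∈ P, ∃ q ∈ P, p ≠ q ∧ dist p q = d}.Finite := by
  refine (P.finite_toSet.image2 dist P.finite_toSet).subset ?_
  rintro d ⟨p, hp, q, hq, -, rfl⟩
  exact Set.mem_image2_of_mem hp hq

theorem card_le_mul_distinctDists_add_one {M : Type*} [MetricSpace M] {P : Finset M} {p : M}
    (hp : p ∈ P) {k : ℕ} (hk : ∀ r > 0, ((P : Set M) ∩ Metric.sphere p r).encard ≤ k) :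
    P.card ≤ k * distinctDists P + 1 := by
  classical
  have maps_to : ∀ q ∈ P.erase p, dist q p ∈ (finite_setOf_dist P).toFinset := fun q hq ↦
    (finite_setOf_dist P).mem_toFinset.2
      ⟨q, Finset.mem_of_mem_erase hq, p, hp, Finset.ne_of_mem_erase hq, rfl⟩
  have fiber_le : ∀ r ∈ (finite_setOf_dist P).toFinset,
      {q ∈ P.erase p | dist q p = r}.card ≤ k := by
    intro r hr
    obtain ⟨a, -, b, -, hab, rfl⟩ := (finite_setOf_dist P).mem_toFinset.1 hr
    rw [← Nat.cast_le (α := ℕ∞), ← Set.encard_coe_eq_coe_finsetCard]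
    refine (Set.encard_le_encard fun q hq ↦ ?_).trans (hk _ (dist_pos.2 hab))
    obtain ⟨hqP, hqr⟩ := Finset.mem_filter.1 hq
    exact ⟨Finset.mem_of_mem_erase hqP, hqr⟩
  have card_erase_le := Finset.card_le_mul_card_image_of_maps_to maps_to k fiber_le
  rwa [← Set.ncard_eq_toFinset_card _ (finite_setOf_dist P), Finset.card_erase_of_mem hp,
    Nat.sub_le_iff_le_add] at card_erase_le

theorem encard_inter_sphere_le {E : Type*} [SeminormedAddCommGroup E] {L : AddSubgroup E}
    {P : Set E} (hP : P ⊆ L) {p : E} (hp : p ∈ P) (r : ℝ) :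
    (P ∩ Metric.sphere p r).encard ≤ {w ∈ L | ‖w‖ = r}.encard := by
  refine Set.encard_le_encard_of_injOn (f := (· - p)) ?_ sub_left_injective.injOn
  rintro q ⟨hq, hqr⟩
  exact ⟨sub_mem (hP hq) (hP hp), mem_sphere_iff_norm.1 hqr⟩

theorem exists_ne_zero_smul_mem_span_range {R M : Type*} [Ring R] [Nontrivial R]
    [AddCommGroup M] [Module R M] {n : ℕ} {v : Fin n → M}
    (hv : LinearIndependent R v) (hrank : Module.rank R M ≤ n) (w : M) :
    ∃ a : R, a ≠ 0 ∧ a • w ∈ Submodule.span R (Set.range v) := by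
  by_contra! h
  have independent_cons : LinearIndependent R (Fin.cons w v : Fin (n + 1) → M) := by
    refine hv.finCons' w v fun a y hy hay ↦ ?_
    by_contra ha
    exact h a ha (eq_neg_of_add_eq_zero_left hay ▸ neg_mem hy)
  have succ_le := independent_cons.cardinal_lift_le_rank.trans (Cardinal.lift_le.2 hrank)
  simp only [Cardinal.mk_fin, Cardinal.lift_natCast, Nat.cast_le] at succ_le
  omega

theorem exists_rat_smul_add_smul_eq (K : Type*) {V : Type*} [Field K] [CharZero K] [AddCommGroup V]
    [Module K V] {L : Submodule ℤ V} (hrank : Module.rank ℤ L ≤ 2) {x y w : V} (hx : x ∈ L)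
    (hy : y ∈ L) (hw : w ∈ L) (hxy : LinearIndependent ℤ ![x, y]) :
    ∃ s t : ℚ, (s : K) • x + (t : K) • y = w := by
  have hxyL : LinearIndependent ℤ ![(⟨x, hx⟩ : L), ⟨y, hy⟩] := by
    refine .of_comp L.subtype ?_
    convert! hxy using 1
    ext i
    fin_cases i <;> rfl
  obtain ⟨a, ha, hmem⟩ := exists_ne_zero_smul_mem_span_range hxyL hrank ⟨w, hw⟩
  rw [Matrix.range_cons_cons_empty, Submodule.mem_span_pair] at hmem
  obtain ⟨m, n, hmn⟩ := hmem
  replace hmn : (m : K) • x + (n : K) • y = (a : K) • w := by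
    simp only [Int.cast_smul_eq_zsmul]
    exact congrArg Subtype.val hmn
  have ha' : (a : K) ≠ 0 := Int.cast_ne_zero.2 ha
  refine ⟨m / a, n / a, ?_⟩
  push_cast
  rw [← inv_smul_smul₀ ha' w, ← hmn]
  module

theorem linearIndependent_pair_of_norm_eq {E : Type*} [NormedAddCommGroup E] [NormedSpace ℝ E]
    {x y : E} (hnorm : ‖x‖ = ‖y‖) (hne : x ≠ y) (hne_neg : x ≠ -y) :
    LinearIndependent ℝ ![x, y] := by
  have hx : x ≠ 0 := by
    rintro rfl
    exact hne (norm_eq_zero.1 (hnorm.symm.trans norm_zero)).symm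
  rw [LinearIndependent.pair_iff' hx]
  rintro a rfl
  have ha : |a| = 1 := by
    rw [norm_smul, Real.norm_eq_abs] at hnorm
    exact (mul_eq_right₀ (norm_ne_zero_iff.2 hx)).1 hnorm.symm
  rcases (abs_eq zero_le_one).1 ha with rfl | rfl
  · exact hne (one_smul ℝ x).symm
  · exact hne_neg (by simp)

theorem encard_le_four_of_eq_or_eq_neg {G : Type*} [InvolutiveNeg G] {S : Set G}
    (h : ∀ x ∈ S, ∀ y ∈ S, x ≠ y → x ≠ -y → ∀ z ∈ S, z = x ∨ z = -x ∨ z = y ∨ z = -y) :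
    S.encard ≤ 4 := by
  classical
  obtain rfl | ⟨x, hx⟩ := S.eq_empty_or_nonempty
  · simp
  suffices ∃ y, S ⊆ ({x, -x, y, -y} : Finset G) by
    obtain ⟨y, hy⟩ := this
    refine (Set.encard_le_encard hy).trans ?_
    rw [Set.encard_coe_eq_coe_finsetCard]
    exact_mod_cast Finset.card_le_four
  by_cases hex : ∃ y ∈ S, x ≠ y ∧ x ≠ -y
  · obtain ⟨y, hy, hne, hne_neg⟩ := hex
    exact ⟨y, fun z hz ↦ by simpa using h x hx y hy hne hne_neg z hz⟩
  · push Not at hex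
    refine ⟨x, fun z hz ↦ ?_⟩
    by_cases hxz : x = z
    · simp [hxz]
    · simp [hex z hz hxz]

/-- The squared norms of the vectors of `S` are rational up to a common positive scaling. This is
`IsArithmetic` for subsets of an arbitrary normed space. -/
def SqNormsCommensurable {E : Type*} [NormedAddCommGroup E] (S : Set E) : Prop :=
  ∃ c : ℝ, 0 < c ∧ ∀ w ∈ S, ∃ q : ℚ, c * ‖w‖ ^ 2 = q

section InnerProductSpace

variable {E : Type*} [NormedAddCommGroup E] [InnerProductSpace ℝ E]

theorem norm_smul_add_smul_sq_of_norm_eq {x y : E} (hnorm : ‖x‖ = ‖y‖) (s t : ℝ) :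
    ‖s • x + t • y‖ ^ 2 = (s ^ 2 + t ^ 2) * ‖x‖ ^ 2 + 2 * s * t * inner ℝ x y := by
  rw [norm_add_sq_real, norm_smul, norm_smul, ← hnorm, real_inner_smul_left,
    real_inner_smul_right, mul_pow, mul_pow, Real.norm_eq_abs, Real.norm_eq_abs, sq_abs, sq_abs]
  ring

theorem exists_rat_inner_eq_mul_sq_norm {x y : E} (hnorm : ‖x‖ = ‖y‖) {s t : ℚ} (hs : s ≠ 0)
    (ht : t ≠ 0) (hcomb : ‖(s : ℝ) • x + (t : ℝ) • y‖ = ‖x‖) :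
    ∃ q : ℚ, inner ℝ x y = q * ‖x‖ ^ 2 := by
  have sq_norm_eq := norm_smul_add_smul_sq_of_norm_eq hnorm (s : ℝ) t
  rw [hcomb] at sq_norm_eq
  refine ⟨(1 - s ^ 2 - t ^ 2) / (2 * s * t), ?_⟩
  push_cast
  field_simp
  linear_combination -sq_norm_eq

section RankTwo

variable {L : Submodule ℤ E} (hrank : Module.rank ℤ L ≤ 2)
include hrank

theorem sqNormsCommensurable_of_rat_inner {x y : E} (hx : x ∈ L) (hy : y ∈ L)
    (hxy : LinearIndependent ℤ ![x, y]) (hnorm : ‖x‖ = ‖y‖)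
    (hinner : ∃ q : ℚ, inner ℝ x y = q * ‖x‖ ^ 2) : SqNormsCommensurable (L : Set E) := by
  obtain ⟨q, hq⟩ := hinner
  have hx0 : ‖x‖ ≠ 0 := norm_ne_zero_iff.2 (hxy.ne_zero 0)
  refine ⟨(‖x‖ ^ 2)⁻¹, by positivity, fun w hw ↦ ?_⟩
  obtain ⟨s, t, rfl⟩ := exists_rat_smul_add_smul_eq ℝ hrank hx hy hw hxy
  refine ⟨s ^ 2 + t ^ 2 + 2 * s * t * q, ?_⟩
  rw [norm_smul_add_smul_sq_of_norm_eq hnorm, hq]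
  push_cast
  field_simp

theorem sqNormsCommensurable_of_three_norm_eq {x y z : E} (hx : x ∈ L) (hy : y ∈ L) (hz : z ∈ L)
    (hxy : ‖x‖ = ‖y‖) (hzx : ‖z‖ = ‖x‖) (hxy_ne : x ≠ y) (hxy_neg : x ≠ -y)
    (hzx_ne : z ≠ x) (hzx_neg : z ≠ -x) (hzy_ne : z ≠ y) (hzy_neg : z ≠ -y) :
    SqNormsCommensurable (L : Set E) := by
  have indep := (linearIndependent_pair_of_norm_eq hxy hxy_ne hxy_neg).restrict_scalars' ℤ
  have indep_zx := linearIndependent_pair_of_norm_eq hzx hzx_ne hzx_neg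
  have indep_zy := linearIndependent_pair_of_norm_eq (hzx.trans hxy) hzy_ne hzy_neg
  obtain ⟨s, t, rfl⟩ := exists_rat_smul_add_smul_eq ℝ hrank hx hy hz indep
  have hs : s ≠ 0 := by
    rintro rfl
    simpa using LinearIndependent.pair_iff.1 indep_zy 1 (-t) (by simp)
  have ht : t ≠ 0 := by
    rintro rfl
    simpa using LinearIndependent.pair_iff.1 indep_zx 1 (-s) (by simp)
  exact sqNormsCommensurable_of_rat_inner hrank hx hy indep hxy
    (exists_rat_inner_eq_mul_sq_norm hxy hs ht hzx)

theorem encard_norm_eq_le_four (hL : ¬ SqNormsCommensurable (L : Set E)) (r : ℝ) :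
    {w ∈ L | ‖w‖ = r}.encard ≤ 4 := by
  refine encard_le_four_of_eq_or_eq_neg ?_
  rintro x ⟨hx, hxr⟩ y ⟨hy, hyr⟩ hxy_ne hxy_neg z ⟨hz, hzr⟩
  by_contra! h
  obtain ⟨hzx_ne, hzx_neg, hzy_ne, hzy_neg⟩ := h
  exact hL <| sqNormsCommensurable_of_three_norm_eq hrank hx hy hz (hxr.trans hyr.symm)
    (hzr.trans hxr.symm) hxy_ne hxy_neg hzx_ne hzx_neg hzy_ne hzy_neg

end RankTwo

theorem stmt14_general (L : Submodule ℤ E) (hrank : Module.rank ℤ L ≤ 2)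
    (hL : ¬ SqNormsCommensurable (L : Set E)) :
    (∀ r : ℝ, {w ∈ L | ‖w‖ = r}.encard ≤ 4) ∧
    ∀ P : Finset E, ↑P ⊆ (L : Set E) → ((P.card : ℝ) - 1) / 4 ≤ distinctDists P := by
  have circle_le := encard_norm_eq_le_four hrank hL
  refine ⟨circle_le, fun P hP ↦ ?_⟩
  have card_le : P.card ≤ 4 * distinctDists P + 1 := by
    obtain rfl | ⟨p, hp⟩ := P.eq_empty_or_nonempty
    · simp
    · exact card_le_mul_distinctDists_add_one hp fun r _ ↦
        (encard_inter_sphere_le (L := L.toAddSubgroup) hP hp r).trans (circle_le r)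
  have card_le_real : (P.card : ℝ) ≤ 4 * distinctDists P + 1 := by exact_mod_cast card_le
  linarith

end InnerProductSpace

theorem IsLattice.exists_submodule_rank_le_two {L : Set (EuclideanSpace ℝ (Fin 2))}
    (hL : IsLattice L) :
    ∃ M : Submodule ℤ (EuclideanSpace ℝ (Fin 2)), Module.rank ℤ M ≤ 2 ∧ (M : Set _) = L := by
  classical
  obtain ⟨u, v, -, rfl⟩ := hL
  refine ⟨Submodule.span ℤ {u, v}, ?_, ?_⟩
  · have := rank_span_finset_le (R := ℤ) {u, v}
    rw [Finset.coe_pair] at this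
    exact this.trans (by exact_mod_cast Finset.card_le_two)
  · ext w
    simp only [SetLike.mem_coe, Submodule.mem_span_pair, Set.mem_ofPred_eq, eq_comm]

theorem stmt14 (L : Set (EuclideanSpace ℝ (Fin 2))) (hL : IsLattice L)
    (hna : ¬ IsArithmetic L) :
    (∀ r : ℝ, 0 < r → Set.ncard {w ∈ L | ‖w‖ = r} ≤ 4) ∧
    ∀ P : Finset (EuclideanSpace ℝ (Fin 2)), ↑P ⊆ L → 2 ≤ P.card →
      ((P.card : ℝ) - 1) / 4 ≤ (distinctDists P : ℝ) := by
  obtain ⟨M, hrank, rfl⟩ := hL.exists_submodule_rank_le_two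
  obtain ⟨circle_le, dists_ge⟩ := stmt14_general M hrank hna
  exact ⟨fun r _ ↦ ENat.toNat_le_of_le_natCast (circle_le r), fun P hP _ ↦ dists_ge P hP⟩
end

section
/- For every square-free negative integer D there exists a constant C > 0 such that for all real x ≥ 2, #{n ∈ ℕ : 1 ≤ n ≤ x and r_D(n) ≥ 1} ≤ C · x / √(log x); that is, the number of distinct values up to x taken by the form Q_D is O(x/√(log x)). -/
/-- Representation numbers of the norm form `Q_D` of discriminantal type `D`:
`Q_D(x,y) = x² + xy + ((1−D)/4)y²` if `D ≡ 1 (mod 4)`, and `Q_D(x,y) = x² − Dy²` otherwise. -/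
noncomputable def rD (D : ℤ) (n : ℕ) : ℕ :=
  Set.ncard {p : ℤ × ℤ |
    (if D % 4 = 1 then p.1 ^ 2 + p.1 * p.2 + ((1 - D) / 4) * p.2 ^ 2
     else p.1 ^ 2 - D * p.2 ^ 2) = (n : ℤ)}

/-!
Completing the square, a number represented by a form of discriminant `Δ` and leading coefficient
`a` satisfies `4an = x² - Δy²`, so primes `p ∤ 4aΔ` with `(Δ/p) = -1` divide it to an even power.
Hence `n = k² r m` with `r ∣ 16aΔ` and `m` a product of primes with `(Δ/p) = 1`.

For the indicator function of each of the three factors, `log = 1 * Λ` gives `f · log ≤ c (f * Λ)`,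
and since `log` is a derivation for Dirichlet convolution, this passes to the convolution `F` of the
three. Chebyshev's bound for `ψ` then yields `∑ F(n) log x ≪ x ∑ F(n)/n` over `n ≤ x`. The squares
and the divisors of `16aΔ` contribute only a constant to the last sum. For the indicator function
`S` of the numbers `m` and the quadratic character `χ` of `Δ`, one has `S * S ≤ 1 * χ`, so that
`(∑ S(m)/m^σ)² ≤ ζ(σ) L(σ, χ) ≪ 1/(σ - 1)`, and `σ = 1 + 1/log x` gives `∑ S(m)/m ≪ √(log x)`.
-/

open Finset
open scoped ArithmeticFunction.vonMangoldt ArithmeticFunction.zeta NumberTheorySymbols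

section ArithmeticFunction

variable {f g : ArithmeticFunction ℝ}

theorem mul_apply_mul_apply_le (hf : 0 ≤ ⇑f) (hg : 0 ≤ ⇑g) {m n : ℕ} (hm : m ≠ 0) (hn : n ≠ 0) :
    f m * g n ≤ (f * g) (m * n) :=
  single_le_sum (f := fun x : ℕ × ℕ ↦ f x.1 * g x.2) (fun x _ ↦ mul_nonneg (hf x.1) (hg x.2))
    (Nat.mem_divisorsAntidiagonal.2 ⟨rfl, mul_ne_zero hm hn⟩ :
      (m, n) ∈ (m * n).divisorsAntidiagonal)

theorem arithmeticFunction_mul_nonneg (hf : 0 ≤ ⇑f) (hg : 0 ≤ ⇑g) : 0 ≤ ⇑(f * g) := fun n ↦ by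
  rw [ArithmeticFunction.mul_apply]
  exact sum_nonneg fun x _ ↦ mul_nonneg (hf x.1) (hg x.2)

section CompletelyMultiplicativeWeight

variable {w : ℕ → ℝ}

theorem sum_Ioc_mul_apply_mul (hw : ∀ a b, w (a * b) = w a * w b) (N : ℕ) :
    ∑ n ∈ Ioc 0 N, (f * g) n * w n =
      ∑ x ∈ Ioc 0 N ×ˢ Ioc 0 N with x.1 * x.2 ≤ N, f x.1 * w x.1 * (g x.2 * w x.2) := by
  let fw : ArithmeticFunction ℝ := ⟨fun n ↦ f n * w n, by simp⟩
  let gw : ArithmeticFunction ℝ := ⟨fun n ↦ g n * w n, by simp⟩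
  refine Eq.trans ?_ (ArithmeticFunction.sum_Ioc_mul_eq_sum_prod_filter fw gw N)
  refine sum_congr rfl fun n _ ↦ ?_
  rw [ArithmeticFunction.mul_apply, ArithmeticFunction.mul_apply, sum_mul]
  refine sum_congr rfl fun x hx ↦ ?_
  rw [← (Nat.mem_divisorsAntidiagonal.1 hx).1, hw]
  exact mul_mul_mul_comm ..

theorem sum_Ioc_mul_apply_mul_le (hf : 0 ≤ ⇑f) (hg : 0 ≤ ⇑g) (hw₀ : 0 ≤ w)
    (hw : ∀ a b, w (a * b) = w a * w b) (N : ℕ) :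
    ∑ n ∈ Ioc 0 N, (f * g) n * w n ≤
      (∑ n ∈ Ioc 0 N, f n * w n) * ∑ n ∈ Ioc 0 N, g n * w n := by
  rw [sum_Ioc_mul_apply_mul hw, sum_mul_sum, ← sum_product']
  exact sum_le_sum_of_subset_of_nonneg (filter_subset _ _) fun x _ _ ↦
    mul_nonneg (mul_nonneg (hf _) (hw₀ _)) (mul_nonneg (hg _) (hw₀ _))

theorem sum_Ioc_mul_sum_Ioc_le (hf : 0 ≤ ⇑f) (hg : 0 ≤ ⇑g) (hw₀ : 0 ≤ w)
    (hw : ∀ a b, w (a * b) = w a * w b) (N : ℕ) :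
    (∑ n ∈ Ioc 0 N, f n * w n) * ∑ n ∈ Ioc 0 N, g n * w n ≤
      ∑ n ∈ Ioc 0 (N * N), (f * g) n * w n := by
  rw [sum_Ioc_mul_apply_mul hw, sum_mul_sum, ← sum_product']
  refine sum_le_sum_of_subset_of_nonneg (fun x hx ↦ ?_) fun x _ _ ↦
    mul_nonneg (mul_nonneg (hf _) (hw₀ _)) (mul_nonneg (hg _) (hw₀ _))
  obtain ⟨⟨h₁, h₁'⟩, h₂, h₂'⟩ := by simpa only [mem_product, mem_Ioc] using hx
  simp only [mem_filter, mem_product, mem_Ioc]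
  exact ⟨⟨⟨h₁, by nlinarith⟩, h₂, by nlinarith⟩, Nat.mul_le_mul h₁' h₂'⟩

end CompletelyMultiplicativeWeight

theorem sum_Ioc_mul_inv_le_exp_one_mul (hf : 0 ≤ ⇑f) {x : ℝ} (hx : 1 < x) :
    ∑ n ∈ Ioc 0 ⌊x⌋₊, f n * (n : ℝ)⁻¹ ≤
      Real.exp 1 * ∑ n ∈ Ioc 0 ⌊x⌋₊, f n * (n : ℝ) ^ (-(1 + 1 / Real.log x)) := by
  rw [mul_sum]
  refine sum_le_sum fun n hn ↦ ?_
  have hn₀ : (0 : ℝ) < n := by exact_mod_cast (mem_Ioc.1 hn).1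
  have hlog : 0 < Real.log x := Real.log_pos hx
  have hle : (n : ℝ) ^ (1 / Real.log x) ≤ Real.exp 1 := by
    rw [Real.rpow_def_of_pos hn₀, mul_one_div, Real.exp_le_exp, div_le_one hlog]
    exact Real.log_le_log hn₀ ((Nat.le_floor_iff (by linarith)).1 (mem_Ioc.1 hn).2)
  calc f n * (n : ℝ)⁻¹
      = (n : ℝ) ^ (1 / Real.log x) * (f n * (n : ℝ) ^ (-(1 + 1 / Real.log x))) := by
        rw [mul_left_comm, ← Real.rpow_add hn₀, ← Real.rpow_neg_one]
        ring_nf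
    _ ≤ Real.exp 1 * (f n * (n : ℝ) ^ (-(1 + 1 / Real.log x))) := by
        have := hf n
        gcongr
        exact mul_nonneg this (by positivity)

theorem sum_Ioc_mul_log_sub_log_le (hf : 0 ≤ ⇑f) {x : ℝ} (hx : 0 < x) :
    ∑ n ∈ Ioc 0 ⌊x⌋₊, f n * (Real.log x - Real.log n) ≤
      x * ∑ n ∈ Ioc 0 ⌊x⌋₊, f n * (n : ℝ)⁻¹ := by
  rw [mul_sum]
  refine sum_le_sum fun n hn ↦ ?_
  have hn₀ : (0 : ℝ) < n := by exact_mod_cast (mem_Ioc.1 hn).1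
  rw [← Real.log_div hx.ne' hn₀.ne', mul_left_comm, ← div_eq_mul_inv]
  exact mul_le_mul_of_nonneg_left (Real.log_le_self (by positivity)) (hf n)

end ArithmeticFunction

section LogDominated

/-- A nonnegative arithmetic function `f` with `f · log ≤ c (f * Λ)` pointwise. It is the hypothesis
under which Chebyshev's bound for `ψ` controls `∑ f n` by the logarithmic sum `∑ f n / n`. -/
structure IsLogDominated (c : ℝ) (f : ArithmeticFunction ℝ) : Prop where
  nonneg : 0 ≤ ⇑f
  mul_log_le (n : ℕ) : f n * Real.log n ≤ c * (f * Λ) n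

variable {c d : ℝ} {f g : ArithmeticFunction ℝ}

theorem sum_Ioc_vonMangoldt_le (n : ℕ) : ∑ m ∈ Ioc 0 n, Λ m ≤ (Real.log 4 + 4) * n := by
  simpa only [Chebyshev.psi, Nat.floor_natCast] using
    Chebyshev.psi_le_const_mul_self (Nat.cast_nonneg n)

namespace IsLogDominated

protected theorem mul (hf : IsLogDominated c f) (hg : IsLogDominated d g) :
    IsLogDominated (c + d) (f * g) where
  nonneg := arithmeticFunction_mul_nonneg hf.nonneg hg.nonneg
  mul_log_le n := by
    have log_mul : ∀ x ∈ n.divisorsAntidiagonal,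
        f x.1 * g x.2 * Real.log n =
          f x.1 * Real.log x.1 * g x.2 + f x.1 * (g x.2 * Real.log x.2) := fun x hx ↦ by
      obtain ⟨rfl, hx₀⟩ := Nat.mem_divisorsAntidiagonal.1 hx
      rw [Nat.cast_mul, Real.log_mul (by exact_mod_cast left_ne_zero_of_mul hx₀)
        (by exact_mod_cast right_ne_zero_of_mul hx₀)]
      ring
    calc (f * g) n * Real.log n
        = ∑ x ∈ n.divisorsAntidiagonal, f x.1 * Real.log x.1 * g x.2 +
            ∑ x ∈ n.divisorsAntidiagonal, f x.1 * (g x.2 * Real.log x.2) := by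
          rw [ArithmeticFunction.mul_apply, sum_mul, sum_congr rfl log_mul, sum_add_distrib]
      _ ≤ ∑ x ∈ n.divisorsAntidiagonal, c * (f * Λ) x.1 * g x.2 +
            ∑ x ∈ n.divisorsAntidiagonal, f x.1 * (d * (g * Λ) x.2) := by
          gcongr ?_ + ?_
          · exact sum_le_sum fun x _ ↦
              mul_le_mul_of_nonneg_right (hf.mul_log_le x.1) (hg.nonneg x.2)
          · exact sum_le_sum fun x _ ↦
              mul_le_mul_of_nonneg_left (hg.mul_log_le x.2) (hf.nonneg x.1)
      _ = c * (f * Λ * g) n + d * (f * (g * Λ)) n := by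
          rw [ArithmeticFunction.mul_apply (f := f * Λ), ArithmeticFunction.mul_apply (f := f),
            mul_sum, mul_sum]
          simp only [mul_assoc, mul_left_comm d]
      _ = (c + d) * (f * g * Λ) n := by
          rw [mul_right_comm, ← mul_assoc f g, add_mul]

theorem sum_mul_log_le (hc : 0 ≤ c) (hf : IsLogDominated c f) (N : ℕ) :
    ∑ n ∈ Ioc 0 N, f n * Real.log n ≤
      c * (Real.log 4 + 4) * N * ∑ n ∈ Ioc 0 N, f n * (n : ℝ)⁻¹ := by
  calc ∑ n ∈ Ioc 0 N, f n * Real.log n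
      ≤ c * ∑ n ∈ Ioc 0 N, f n * ∑ m ∈ Ioc 0 (N / n), Λ m := by
        rw [← ArithmeticFunction.sum_Ioc_mul_eq_sum_sum, mul_sum]
        exact sum_le_sum fun n _ ↦ hf.mul_log_le n
    _ ≤ c * ∑ n ∈ Ioc 0 N, f n * ((Real.log 4 + 4) * (N / n)) := by
        gcongr with n _
        · exact hf.nonneg n
        · grw [sum_Ioc_vonMangoldt_le, Nat.cast_div_le]
    _ = c * (Real.log 4 + 4) * N * ∑ n ∈ Ioc 0 N, f n * (n : ℝ)⁻¹ := by
        rw [mul_sum, mul_sum]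
        exact sum_congr rfl fun n _ ↦ by ring

theorem sum_mul_log_floor_le (hc : 0 ≤ c) (hf : IsLogDominated c f) {x : ℝ} (hx : 0 < x) :
    (∑ n ∈ Ioc 0 ⌊x⌋₊, f n) * Real.log x ≤
      (c * (Real.log 4 + 4) + 1) * x * ∑ n ∈ Ioc 0 ⌊x⌋₊, f n * (n : ℝ)⁻¹ := by
  have hS : 0 ≤ ∑ n ∈ Ioc 0 ⌊x⌋₊, f n * (n : ℝ)⁻¹ :=
    sum_nonneg fun n _ ↦ mul_nonneg (hf.nonneg n) (by positivity)
  calc (∑ n ∈ Ioc 0 ⌊x⌋₊, f n) * Real.log x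
      = ∑ n ∈ Ioc 0 ⌊x⌋₊, f n * Real.log n +
          ∑ n ∈ Ioc 0 ⌊x⌋₊, f n * (Real.log x - Real.log n) := by
        rw [← sum_add_distrib, sum_mul]
        exact sum_congr rfl fun n _ ↦ by ring
    _ ≤ c * (Real.log 4 + 4) * ⌊x⌋₊ * ∑ n ∈ Ioc 0 ⌊x⌋₊, f n * (n : ℝ)⁻¹ +
          x * ∑ n ∈ Ioc 0 ⌊x⌋₊, f n * (n : ℝ)⁻¹ :=
        add_le_add (hf.sum_mul_log_le hc _) (sum_Ioc_mul_log_sub_log_le hf.nonneg hx)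
    _ ≤ c * (Real.log 4 + 4) * x * ∑ n ∈ Ioc 0 ⌊x⌋₊, f n * (n : ℝ)⁻¹ +
          x * ∑ n ∈ Ioc 0 ⌊x⌋₊, f n * (n : ℝ)⁻¹ := by
        gcongr
        exact Nat.floor_le hx.le
    _ = (c * (Real.log 4 + 4) + 1) * x * ∑ n ∈ Ioc 0 ⌊x⌋₊, f n * (n : ℝ)⁻¹ := by ring

end IsLogDominated

end LogDominated

section Indicator

/-- The indicator function of `S ⊆ ℕ` as an arithmetic function; it vanishes at `0` even if
`0 ∈ S`. -/
noncomputable def indicatorArith (S : Set ℕ) : ArithmeticFunction ℝ :=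
  ⟨(S \ {0}).indicator 1, by simp⟩

variable {S : Set ℕ} {n : ℕ}

theorem indicatorArith_nonneg (S : Set ℕ) : 0 ≤ ⇑(indicatorArith S) :=
  fun n ↦ Set.indicator_nonneg (f := (1 : ℕ → ℝ)) (fun _ _ ↦ zero_le_one) n

theorem indicatorArith_of_mem (h : n ∈ S) (hn : n ≠ 0) : indicatorArith S n = 1 :=
  Set.indicator_of_mem (s := S \ {0}) ⟨h, hn⟩ 1

theorem indicatorArith_of_notMem (h : n ∉ S) : indicatorArith S n = 0 :=
  Set.indicator_of_notMem (s := S \ {0}) (fun h' ↦ h h'.1) 1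

theorem isLogDominated_indicatorArith {c : ℝ} (hc : 0 ≤ c)
    (h : ∀ n ∈ S, n ≠ 0 → Real.log n ≤ c * (indicatorArith S * Λ) n) :
    IsLogDominated c (indicatorArith S) where
  nonneg := indicatorArith_nonneg S
  mul_log_le n := by
    rcases eq_or_ne n 0 with rfl | hn₀
    · simp only [ArithmeticFunction.map_zero, zero_mul, mul_zero, le_refl]
    by_cases hn : n ∈ S
    · rw [indicatorArith_of_mem hn hn₀, one_mul]
      exact h n hn hn₀
    · rw [indicatorArith_of_notMem hn, zero_mul]
      exact mul_nonneg hc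
        (arithmeticFunction_mul_nonneg (indicatorArith_nonneg S)
          (fun _ ↦ ArithmeticFunction.vonMangoldt_nonneg) n)

theorem isLogDominated_indicatorArith_of_dvd_closed (hS : ∀ m ∈ S, ∀ d, d ∣ m → d ∈ S) :
    IsLogDominated 1 (indicatorArith S) := by
  refine isLogDominated_indicatorArith zero_le_one fun n hn hn₀ ↦ ?_
  rw [one_mul, ← ArithmeticFunction.vonMangoldt_sum, ArithmeticFunction.mul_apply,
    ← Nat.sum_divisorsAntidiagonal' fun _ b ↦ Λ b]
  refine (sum_congr rfl fun x hx ↦ ?_).le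
  obtain ⟨rfl, -⟩ := Nat.mem_divisorsAntidiagonal.1 hx
  rw [indicatorArith_of_mem (hS _ hn _ (dvd_mul_right ..)) (left_ne_zero_of_mul hn₀), one_mul]

theorem isLogDominated_indicatorArith_range_pow {j : ℕ} (hj : j ≠ 0) :
    IsLogDominated j (indicatorArith (Set.range (· ^ j))) := by
  refine isLogDominated_indicatorArith j.cast_nonneg ?_
  rintro _ ⟨k, rfl⟩ hk
  have hk₀ : k ≠ 0 := by
    rintro rfl
    exact hk (zero_pow hj)
  let φ : ℕ × ℕ ↪ ℕ × ℕ := ⟨fun x ↦ (x.1 ^ j, x.2 ^ j), fun x y h ↦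
    Prod.ext (Nat.pow_left_injective hj (congrArg Prod.fst h))
      (Nat.pow_left_injective hj (congrArg Prod.snd h))⟩
  rw [Nat.cast_pow, Real.log_pow, ← ArithmeticFunction.vonMangoldt_sum,
    ← Nat.sum_divisorsAntidiagonal' fun _ b ↦ Λ b, ArithmeticFunction.mul_apply]
  gcongr
  calc ∑ x ∈ k.divisorsAntidiagonal, Λ x.2
      = ∑ x ∈ k.divisorsAntidiagonal.map φ, indicatorArith (Set.range (· ^ j)) x.1 * Λ x.2 := by
        rw [sum_map]
        refine sum_congr rfl fun x hx ↦ ?_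
        have hx₀ := left_ne_zero_of_mul ((Nat.mem_divisorsAntidiagonal.1 hx).1 ▸ hk₀)
        change _ = indicatorArith _ (x.1 ^ j) * Λ (x.2 ^ j)
        rw [indicatorArith_of_mem (S := Set.range (· ^ j)) ⟨x.1, rfl⟩ (pow_ne_zero j hx₀),
          one_mul, ArithmeticFunction.vonMangoldt_apply_pow hj]
    _ ≤ ∑ x ∈ (k ^ j).divisorsAntidiagonal, indicatorArith (Set.range (· ^ j)) x.1 * Λ x.2 := by
        refine sum_le_sum_of_subset_of_nonneg (fun y hy ↦ ?_) fun x _ _ ↦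
          mul_nonneg (indicatorArith_nonneg _ _) ArithmeticFunction.vonMangoldt_nonneg
        obtain ⟨x, hx, rfl⟩ := mem_map.1 hy
        rw [← (Nat.mem_divisorsAntidiagonal.1 hx).1, mul_pow]
        exact Nat.mem_divisorsAntidiagonal.2 ⟨rfl, by
          rw [← mul_pow, (Nat.mem_divisorsAntidiagonal.1 hx).1]; exact hk⟩

theorem indicatorArith_mul_self_le (S : Submonoid ℕ) (n : ℕ) :
    (indicatorArith S * indicatorArith S) n ≤ indicatorArith S n * n.divisors.card := by
  have le_indicator : ∀ x ∈ n.divisorsAntidiagonal,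
      indicatorArith S x.1 * indicatorArith S x.2 ≤ indicatorArith S n := fun x hx ↦ by
    obtain ⟨rfl, hx₀⟩ := Nat.mem_divisorsAntidiagonal.1 hx
    by_cases h₁ : x.1 ∈ (S : Set ℕ)
    · by_cases h₂ : x.2 ∈ (S : Set ℕ)
      · rw [indicatorArith_of_mem h₁ (left_ne_zero_of_mul hx₀),
          indicatorArith_of_mem h₂ (right_ne_zero_of_mul hx₀),
          indicatorArith_of_mem (S.mul_mem h₁ h₂) hx₀, one_mul]
      · rw [indicatorArith_of_notMem h₂, mul_zero]
        exact indicatorArith_nonneg _ _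
    · rw [indicatorArith_of_notMem h₁, zero_mul]
      exact indicatorArith_nonneg _ _
  calc (indicatorArith S * indicatorArith S) n
      ≤ #n.divisorsAntidiagonal • indicatorArith S n := sum_le_card_nsmul _ _ _ le_indicator
    _ = indicatorArith S n * n.divisors.card := by
        rw [← Nat.map_div_right_divisors, card_map, nsmul_eq_mul, mul_comm]

end Indicator

section SplitNumbers

variable {N : ℕ} (χ : DirichletCharacter ℂ N)

/-- The natural numbers all of whose divisors `d` satisfy `χ d = 1`. When `χ` is the character of a
quadratic field, the nonzero ones are the products of primes that split in this field. -/
def splitNumbers : Submonoid ℕ where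
  carrier := {n | ∀ d, d ∣ n → χ d = 1}
  one_mem' d hd := by rw [Nat.dvd_one.1 hd, Nat.cast_one, map_one]
  mul_mem' {m n} hm hn d hd := by
    obtain ⟨d₁, d₂, h₁, h₂, rfl⟩ := exists_dvd_and_dvd_of_dvd_mul hd
    rw [Nat.cast_mul, map_mul, hm d₁ h₁, hn d₂ h₂, one_mul]

variable {χ} {n : ℕ}

theorem mem_splitNumbers_of_dvd {d : ℕ} (hn : n ∈ splitNumbers χ) (hd : d ∣ n) :
    d ∈ splitNumbers χ :=
  fun _ he ↦ hn _ (he.trans hd)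

theorem mem_splitNumbers_of_forall_prime (hn : n ≠ 0) (h : ∀ p : ℕ, p.Prime → p ∣ n → χ p = 1) :
    n ∈ splitNumbers χ := by
  intro d
  induction d using Nat.recOnMul with
  | zero => exact fun hd ↦ absurd (zero_dvd_iff.1 hd) hn
  | one => simp only [Nat.cast_one, map_one, implies_true]
  | prime p hp => exact h p hp
  | mul a b iha ihb =>
    intro hd
    rw [Nat.cast_mul, map_mul, iha (dvd_of_mul_right_dvd hd), ihb (dvd_of_mul_left_dvd hd), one_mul]

theorem zetaMul_apply_of_mem_splitNumbers (hn : n ∈ splitNumbers χ) :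
    χ.zetaMul n = n.divisors.card := by
  rw [DirichletCharacter.zetaMul, ArithmeticFunction.coe_zeta_mul_apply, card_eq_sum_ones,
    Nat.cast_sum, Nat.cast_one]
  refine sum_congr rfl fun d hd ↦ ?_
  rw [toArithmeticFunction, ArithmeticFunction.coe_mk, if_neg (Nat.pos_of_mem_divisors hd).ne',
    hn d (Nat.dvd_of_mem_divisors hd)]

theorem indicatorArith_splitNumbers_mul_self_le (n : ℕ) :
    (indicatorArith (splitNumbers χ) * indicatorArith (splitNumbers χ)) n ≤ ‖χ.zetaMul n‖ := by
  refine (indicatorArith_mul_self_le _ n).trans ?_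
  rcases eq_or_ne n 0 with rfl | hn₀
  · simp only [ArithmeticFunction.map_zero, zero_mul, norm_zero, le_refl]
  by_cases hn : n ∈ splitNumbers χ
  · rw [indicatorArith_of_mem hn hn₀, one_mul, zetaMul_apply_of_mem_splitNumbers hn,
      Complex.norm_natCast]
  · rw [indicatorArith_of_notMem hn, zero_mul]
    exact norm_nonneg _

end SplitNumbers

section QuadraticCharacter

variable {N : ℕ} [NeZero N] {χ : DirichletCharacter ℂ N}

theorem LSeries_zetaMul_eq {s : ℂ} (hs : 1 < s.re) :
    LSeries χ.zetaMul s = riemannZeta s * χ.LFunction s := by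
  have apply_of_ne_zero {n : ℕ} (hn : n ≠ 0) : toArithmeticFunction (χ ·) n = χ n := by
    rw [toArithmeticFunction, ArithmeticFunction.coe_mk, if_neg hn]
  have hχ_summable : LSeriesSummable (toArithmeticFunction (χ ·)) s :=
    LSeriesSummable_of_bounded_of_one_lt_re (m := 1)
      (fun n hn ↦ by rw [apply_of_ne_zero hn]; exact χ.norm_le_one n) hs
  calc LSeries χ.zetaMul s
      = LSeries (ζ : ArithmeticFunction ℂ) s * LSeries (toArithmeticFunction (χ ·)) s :=
        ArithmeticFunction.LSeries_mul' (ArithmeticFunction.LSeriesSummable_zeta_iff.2 hs)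
          hχ_summable
    _ = LSeries (ζ ·) s * LSeries (χ ·) s := by
        congr 1
        exact LSeries_congr apply_of_ne_zero s
    _ = riemannZeta s * χ.LFunction s := by
        rw [ArithmeticFunction.LSeries_zeta_eq_riemannZeta hs, χ.LFunction_eq_LSeries hs]

open scoped ComplexOrder in
theorem sum_norm_zetaMul_mul_rpow_le (hχ : χ ^ 2 = 1) {σ : ℝ} (hσ : 1 < σ) (F : Finset ℕ) :
    ∑ n ∈ F, ‖χ.zetaMul n‖ * (n : ℝ) ^ (-σ) ≤ ‖riemannZeta σ‖ * ‖χ.LFunction σ‖ := by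
  have hσ' : 1 < (σ : ℂ).re := hσ
  have hs : LSeriesSummable χ.zetaMul σ := χ.LSeriesSummable_zetaMul hσ'
  have norm_term (n : ℕ) : ‖χ.zetaMul n‖ * (n : ℝ) ^ (-σ) = ‖LSeries.term χ.zetaMul σ n‖ := by
    rcases eq_or_ne n 0 with rfl | hn
    · simp only [ArithmeticFunction.map_zero, norm_zero, zero_mul, LSeries.term_zero]
    · rw [LSeries.norm_term_eq, if_neg hn, Complex.ofReal_re, Real.rpow_neg n.cast_nonneg,
        div_eq_mul_inv]
  have norm_term_eq_re (n : ℕ) :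
      ‖LSeries.term χ.zetaMul σ n‖ = (LSeries.term χ.zetaMul σ n).re :=
    (Complex.re_eq_norm.2 (LSeries.term_nonneg (DirichletCharacter.zetaMul_nonneg hχ n) σ)).symm
  calc ∑ n ∈ F, ‖χ.zetaMul n‖ * (n : ℝ) ^ (-σ)
      = ∑ n ∈ F, ‖LSeries.term χ.zetaMul σ n‖ := sum_congr rfl fun n _ ↦ norm_term n
    _ ≤ ∑' n, ‖LSeries.term χ.zetaMul σ n‖ := hs.norm.sum_le_tsum _ fun _ _ ↦ norm_nonneg _
    _ = (LSeries χ.zetaMul σ).re := by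
        simp_rw [norm_term_eq_re]
        exact (Complex.hasSum_re hs.hasSum).tsum_eq
    _ ≤ ‖riemannZeta σ‖ * ‖χ.LFunction σ‖ := by
        rw [LSeries_zetaMul_eq hσ', ← norm_mul]
        exact Complex.re_le_norm _

theorem sq_sum_splitNumbers_rpow_le (hχ : χ ^ 2 = 1) {σ : ℝ} (hσ : 1 < σ) (M : ℕ) :
    (∑ n ∈ Ioc 0 M, indicatorArith (splitNumbers χ) n * (n : ℝ) ^ (-σ)) ^ 2 ≤
      ‖riemannZeta σ‖ * ‖χ.LFunction σ‖ := by
  let S := indicatorArith (splitNumbers χ)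
  calc (∑ n ∈ Ioc 0 M, S n * (n : ℝ) ^ (-σ)) ^ 2
      ≤ ∑ n ∈ Ioc 0 (M * M), (S * S) n * (n : ℝ) ^ (-σ) := by
        rw [sq]
        refine sum_Ioc_mul_sum_Ioc_le (indicatorArith_nonneg _) (indicatorArith_nonneg _)
          (w := fun n ↦ (n : ℝ) ^ (-σ)) (fun n ↦ by positivity) (fun a b ↦ ?_) M
        rw [Nat.cast_mul, Real.mul_rpow a.cast_nonneg b.cast_nonneg]
    _ ≤ ∑ n ∈ Ioc 0 (M * M), ‖χ.zetaMul n‖ * (n : ℝ) ^ (-σ) := by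
        gcongr with n _
        exact indicatorArith_splitNumbers_mul_self_le n
    _ ≤ ‖riemannZeta σ‖ * ‖χ.LFunction σ‖ := sum_norm_zetaMul_mul_rpow_le hχ hσ _

theorem exists_norm_riemannZeta_mul_norm_LFunction_le (hχ : χ ≠ 1) (b : ℝ) :
    ∃ K > 0, ∀ σ : ℝ, 1 < σ → σ ≤ b →
      ‖riemannZeta σ‖ * ‖χ.LFunction σ‖ ≤ K * (σ - 1)⁻¹ := by
  have hcont : Continuous fun σ : ℝ ↦ ‖riemannZeta₁ σ‖ * ‖χ.LFunction σ‖ :=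
    (differentiable_riemannZeta₁.continuous.comp Complex.continuous_ofReal).norm.mul
      ((DirichletCharacter.differentiable_LFunction hχ).continuous.comp
        Complex.continuous_ofReal).norm
  obtain ⟨K, hK⟩ := (isCompact_Icc (a := (1 : ℝ)) (b := b)).bddAbove_image hcont.continuousOn
  refine ⟨max K 1, by positivity, fun σ hσ₁ hσb ↦ ?_⟩
  have hpole : ‖((σ : ℂ) - 1)⁻¹‖ = (σ - 1)⁻¹ := by
    rw [← Complex.ofReal_one, ← Complex.ofReal_sub, norm_inv, Complex.norm_real,
      Real.norm_of_nonneg (by linarith)]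
  rw [riemannZeta_eq_inv_sub_mul (by exact_mod_cast hσ₁.ne'), norm_mul, hpole, mul_assoc, mul_comm]
  have : 0 ≤ (σ - 1)⁻¹ := inv_nonneg.2 (by linarith)
  gcongr
  exact (hK ⟨σ, ⟨hσ₁.le, hσb⟩, rfl⟩).trans (le_max_left _ _)

theorem exists_sum_splitNumbers_inv_le (hχ : χ ^ 2 = 1) (hχ₁ : χ ≠ 1) :
    ∃ C > 0, ∀ x : ℝ, 2 ≤ x →
      ∑ n ∈ Ioc 0 ⌊x⌋₊, indicatorArith (splitNumbers χ) n * (n : ℝ)⁻¹ ≤ C * √(Real.log x) := by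
  obtain ⟨K, hK, hbound⟩ :=
    exists_norm_riemannZeta_mul_norm_LFunction_le hχ₁ (1 + 1 / Real.log 2)
  refine ⟨Real.exp 1 * √K, by positivity, fun x hx ↦ ?_⟩
  have : 0 < Real.log 2 := Real.log_pos one_lt_two
  have hlog : 0 < Real.log x := Real.log_pos (by linarith)
  have hσ₁ : 1 < 1 + 1 / Real.log x := by linarith [one_div_pos.2 hlog]
  have hσ₂ : 1 + 1 / Real.log x ≤ 1 + 1 / Real.log 2 := by gcongr
  have hpole : ‖riemannZeta ↑(1 + 1 / Real.log x)‖ * ‖χ.LFunction ↑(1 + 1 / Real.log x)‖ ≤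
      K * Real.log x := by
    simpa only [add_sub_cancel_left, one_div, inv_inv] using hbound _ hσ₁ hσ₂
  grw [sum_Ioc_mul_inv_le_exp_one_mul (indicatorArith_nonneg _) (by linarith), mul_assoc,
    ← Real.sqrt_mul hK.le, ← hpole]
  gcongr
  exact Real.le_sqrt_of_sq_le (sq_sum_splitNumbers_rpow_le hχ hσ₁ _)

end QuadraticCharacter

section AlmostSplitNumbers

theorem summable_indicatorArith_range_pow_mul_inv {j : ℕ} (hj : 1 < j) :
    Summable fun n : ℕ ↦ indicatorArith (Set.range (· ^ j)) n * (n : ℝ)⁻¹ := by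
  have hj₀ : j ≠ 0 := by lia
  refine ((Nat.pow_left_injective hj₀).summable_iff fun n hn ↦ ?_).1 ?_
  · rw [indicatorArith_of_notMem hn, zero_mul]
  · refine (Real.summable_nat_pow_inv.2 hj).congr fun k ↦ ?_
    rcases eq_or_ne k 0 with rfl | hk
    · simp [hj₀]
    · rw [Function.comp_apply, indicatorArith_of_mem (S := Set.range (· ^ j)) ⟨k, rfl⟩
        (pow_ne_zero j hk), one_mul, Nat.cast_pow]

theorem summable_indicatorArith_mul_of_finite {S : Set ℕ} (hS : S.Finite) (w : ℕ → ℝ) :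
    Summable fun n ↦ indicatorArith S n * w n :=
  summable_of_ne_finset_zero (s := hS.toFinset) fun n hn ↦ by
    rw [indicatorArith_of_notMem fun h ↦ hn (hS.mem_toFinset.2 h), zero_mul]

variable {N : ℕ} (χ : DirichletCharacter ℂ N) (R : ℕ)

/-- The natural numbers of the form `k² r m` with `r ∣ R` and `m` a split number of `χ`. -/
def almostSplitNumbers : Set ℕ :=
  {n | ∃ k r m, r ∣ R ∧ m ∈ splitNumbers χ ∧ k ^ 2 * r * m = n}

/-- The number of decompositions of `n` as `k² r m` with `r ∣ R` and `m` a split number of `χ`, as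
an arithmetic function; it majorizes the indicator function of `almostSplitNumbers χ R`. -/
noncomputable def almostSplitMajorant : ArithmeticFunction ℝ :=
  indicatorArith (Set.range (· ^ 2)) * indicatorArith {r | r ∣ R} * indicatorArith (splitNumbers χ)

theorem isLogDominated_almostSplitMajorant :
    IsLogDominated ((2 : ℕ) + 1 + 1) (almostSplitMajorant χ R) :=
  ((isLogDominated_indicatorArith_range_pow two_ne_zero).mul
    (isLogDominated_indicatorArith_of_dvd_closed fun _ hm _ hd ↦ hd.trans hm)).mul
    (isLogDominated_indicatorArith_of_dvd_closed fun _ hm _ hd ↦ mem_splitNumbers_of_dvd hm hd)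

variable {χ R} {n : ℕ}

theorem one_le_almostSplitMajorant (hn : n ∈ almostSplitNumbers χ R) (hn₀ : n ≠ 0) :
    1 ≤ almostSplitMajorant χ R n := by
  obtain ⟨k, r, m, hr, hm, rfl⟩ := hn
  obtain ⟨⟨hk₀, hr₀⟩, hm₀⟩ := by simpa only [mul_ne_zero_iff] using hn₀
  calc (1 : ℝ)
      = indicatorArith (Set.range (· ^ 2)) (k ^ 2) * indicatorArith {r | r ∣ R} r *
          indicatorArith (splitNumbers χ) m := by
        rw [indicatorArith_of_mem (S := Set.range (· ^ 2)) ⟨k, rfl⟩ hk₀,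
          indicatorArith_of_mem hr hr₀, indicatorArith_of_mem hm hm₀, one_mul, one_mul]
    _ ≤ (indicatorArith (Set.range (· ^ 2)) * indicatorArith {r | r ∣ R}) (k ^ 2 * r) *
          indicatorArith (splitNumbers χ) m :=
        mul_le_mul_of_nonneg_right (mul_apply_mul_apply_le (indicatorArith_nonneg _)
          (indicatorArith_nonneg _) hk₀ hr₀) (indicatorArith_nonneg _ _)
    _ ≤ almostSplitMajorant χ R (k ^ 2 * r * m) :=
        mul_apply_mul_apply_le (arithmeticFunction_mul_nonneg (indicatorArith_nonneg _)
          (indicatorArith_nonneg _)) (indicatorArith_nonneg _) (mul_ne_zero hk₀ hr₀) hm₀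

theorem exists_sum_almostSplitMajorant_mul_inv_le (hR : R ≠ 0) :
    ∃ B > 0, ∀ M : ℕ, ∑ n ∈ Ioc 0 M, almostSplitMajorant χ R n * (n : ℝ)⁻¹ ≤
      B * ∑ n ∈ Ioc 0 M, indicatorArith (splitNumbers χ) n * (n : ℝ)⁻¹ := by
  have sum_mul_le {f g : ArithmeticFunction ℝ} (hf : 0 ≤ ⇑f) (hg : 0 ≤ ⇑g) (M : ℕ) :=
    sum_Ioc_mul_apply_mul_le hf hg (w := fun n ↦ (n : ℝ)⁻¹) (fun n ↦ by positivity)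
      (fun a b ↦ by rw [Nat.cast_mul, mul_inv]) M
  have sum_nonneg' (S : Set ℕ) (M : ℕ) : 0 ≤ ∑ n ∈ Ioc 0 M, indicatorArith S n * (n : ℝ)⁻¹ :=
    sum_nonneg fun n _ ↦ mul_nonneg (indicatorArith_nonneg S n) (by positivity)
  have exists_bound {S : Set ℕ} (hS : Summable fun n : ℕ ↦ indicatorArith S n * (n : ℝ)⁻¹) :
      ∃ B > 0, ∀ M, ∑ n ∈ Ioc 0 M, indicatorArith S n * (n : ℝ)⁻¹ ≤ B :=
    ⟨max (∑' n : ℕ, indicatorArith S n * (n : ℝ)⁻¹) 1, by positivity, fun M ↦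
      (hS.sum_le_tsum _ fun n _ ↦ mul_nonneg (indicatorArith_nonneg S n) (by positivity)).trans
        (le_max_left _ _)⟩
  obtain ⟨B₁, hB₁, hsq⟩ := exists_bound (summable_indicatorArith_range_pow_mul_inv one_lt_two)
  obtain ⟨B₂, hB₂, hdvd⟩ := exists_bound (S := {r | r ∣ R})
    (summable_indicatorArith_mul_of_finite (Set.finite_le_nat R |>.subset
      fun r hr ↦ Nat.le_of_dvd hR.pos hr) _)
  refine ⟨B₁ * B₂, by positivity, fun M ↦ ?_⟩
  grw [almostSplitMajorant, sum_mul_le (arithmeticFunction_mul_nonneg (indicatorArith_nonneg _)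
    (indicatorArith_nonneg _)) (indicatorArith_nonneg _),
    sum_mul_le (indicatorArith_nonneg _) (indicatorArith_nonneg _), hsq, hdvd]
  all_goals exact sum_nonneg' _ _

open Classical in
theorem exists_card_almostSplitNumbers_le [NeZero N] (hχ : χ ^ 2 = 1) (hχ₁ : χ ≠ 1) (hR : R ≠ 0) :
    ∃ C > 0, ∀ x : ℝ, 2 ≤ x →
      (#{n ∈ Ioc 0 ⌊x⌋₊ | n ∈ almostSplitNumbers χ R} : ℝ) ≤ C * x / √(Real.log x) := by
  obtain ⟨A, hA, hsplit⟩ := exists_sum_splitNumbers_inv_le hχ hχ₁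
  obtain ⟨B, hB, hmajorant⟩ := exists_sum_almostSplitMajorant_mul_inv_le (χ := χ) hR
  set c : ℝ := (2 : ℕ) + 1 + 1
  have hf : IsLogDominated c (almostSplitMajorant χ R) := isLogDominated_almostSplitMajorant χ R
  have hc : 0 ≤ c := by positivity
  have : 0 < c * (Real.log 4 + 4) + 1 := by positivity
  refine ⟨(c * (Real.log 4 + 4) + 1) * B * A, by positivity, fun x hx ↦ ?_⟩
  have hlog : 0 < Real.log x := Real.log_pos (by linarith)
  have card_le : (#{n ∈ Ioc 0 ⌊x⌋₊ | n ∈ almostSplitNumbers χ R} : ℝ) ≤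
      ∑ n ∈ Ioc 0 ⌊x⌋₊, almostSplitMajorant χ R n := by
    rw [card_eq_sum_ones, Nat.cast_sum, Nat.cast_one, sum_filter]
    refine sum_le_sum fun n hn ↦ ?_
    split_ifs with h
    · exact one_le_almostSplitMajorant h (mem_Ioc.1 hn).1.ne'
    · exact hf.nonneg n
  rw [le_div_iff₀ (Real.sqrt_pos.2 hlog), ← mul_le_mul_iff_left₀ (Real.sqrt_pos.2 hlog), mul_assoc,
    Real.mul_self_sqrt hlog.le]
  calc (#{n ∈ Ioc 0 ⌊x⌋₊ | n ∈ almostSplitNumbers χ R} : ℝ) * Real.log x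
      ≤ (∑ n ∈ Ioc 0 ⌊x⌋₊, almostSplitMajorant χ R n) * Real.log x := by gcongr
    _ ≤ (c * (Real.log 4 + 4) + 1) * x *
          ∑ n ∈ Ioc 0 ⌊x⌋₊, almostSplitMajorant χ R n * (n : ℝ)⁻¹ :=
        hf.sum_mul_log_floor_le hc (by linarith)
    _ ≤ (c * (Real.log 4 + 4) + 1) * x * (B * (A * √(Real.log x))) := by
        grw [hmajorant, hsplit x hx]
    _ = (c * (Real.log 4 + 4) + 1) * B * A * x * √(Real.log x) := by ring

theorem mem_almostSplitNumbers_of_forall_prime (hn : n ≠ 0)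
    (h : ∀ p : ℕ, p.Prime → ¬p ∣ R → Odd (n.factorization p) → χ p = 1) :
    n ∈ almostSplitNumbers χ R := by
  obtain ⟨s, k, hs₀, hk₀, rfl, hs⟩ := Nat.sq_mul_squarefree_of_pos hn.pos
  obtain ⟨m, hm⟩ := Nat.gcd_dvd_left s R
  refine ⟨k, s.gcd R, m, Nat.gcd_dvd_right .., ?_, by rw [mul_assoc, ← hm]⟩
  refine mem_splitNumbers_of_forall_prime (by rintro rfl; lia) fun p hp hpm ↦ ?_
  have hps : p ∣ s := hm ▸ hpm.mul_left _
  refine h p hp ?_ ?_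
  · have hcop : (s.gcd R).Coprime m := Nat.coprime_of_squarefree_mul (hm ▸ hs)
    exact fun hpR ↦ hp.one_lt.ne' (Nat.eq_one_of_dvd_coprimes hcop (Nat.dvd_gcd hps hpR) hpm)
  · rw [Nat.factorization_mul (pow_pos hk₀ 2).ne' hs₀.ne', Nat.factorization_pow,
      Finsupp.add_apply, Nat.factorization_eq_one_of_squarefree hs hp hps]
    exact ⟨k.factorization p, rfl⟩

end AlmostSplitNumbers

section JacobiCharacter

variable {D : ℤ}

theorem odd_val_unit (u : (ZMod (4 * D.natAbs))ˣ) : Odd (u : ZMod (4 * D.natAbs)).val :=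
  Nat.coprime_two_right.1 <| (ZMod.val_coe_unit_coprime u).coprime_dvd_right
    ⟨2 * D.natAbs, by ring⟩

theorem gcd_val_unit_eq_one (u : (ZMod (4 * D.natAbs))ˣ) :
    D.gcd (u : ZMod (4 * D.natAbs)).val = 1 :=
  ((ZMod.val_coe_unit_coprime u).coprime_dvd_right (dvd_mul_left ..)).symm

variable (D) in
/-- The Dirichlet character modulo `4|D|` with value `J(D | n)` at `n` coprime to `4D`. -/
noncomputable def jacobiCharacter : DirichletCharacter ℂ (4 * D.natAbs) :=
  MulChar.ofUnitHom <| MonoidHom.toHomUnits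
    { toFun u := (J(D | (u : ZMod (4 * D.natAbs)).val) : ℂ)
      map_one' := by
        rw [Units.val_one, ← Nat.cast_one, ZMod.val_natCast, ← jacobiSym.mod_right D odd_one,
          jacobiSym.one_right, Int.cast_one]
      map_mul' u v := by
        have hu := odd_val_unit u
        have hv := odd_val_unit v
        rw [Units.val_mul, ZMod.val_mul, ← jacobiSym.mod_right D (hu.mul hv),
          jacobiSym.mul_right' D hu.pos.ne' hv.pos.ne', Int.cast_mul] }

theorem jacobiCharacter_coe_unit (u : (ZMod (4 * D.natAbs))ˣ) :
    jacobiCharacter D u = J(D | (u : ZMod (4 * D.natAbs)).val) := by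
  rw [jacobiCharacter, MulChar.ofUnitHom_coe, MonoidHom.coe_toHomUnits, MonoidHom.coe_mk,
    OneHom.coe_mk]

theorem jacobiCharacter_natCast {n : ℕ} (hn : n.Coprime (4 * D.natAbs)) :
    jacobiCharacter D n = J(D | n) := by
  have hodd : Odd n := Nat.coprime_two_right.1 (hn.coprime_dvd_right ⟨2 * D.natAbs, by ring⟩)
  rw [← ZMod.coe_unitOfCoprime n hn, jacobiCharacter_coe_unit, ZMod.coe_unitOfCoprime,
    ZMod.val_natCast, ← jacobiSym.mod_right D hodd]

theorem jacobiCharacter_sq (D : ℤ) : jacobiCharacter D ^ 2 = 1 :=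
  MulChar.ext fun u ↦ by
    rw [MulChar.pow_apply_coe, jacobiCharacter_coe_unit, MulChar.one_apply_coe, ← Int.cast_pow,
      jacobiSym.sq_one (gcd_val_unit_eq_one u), Int.cast_one]

theorem jacobiSym_four_mul_natAbs_sub_one (hD : D < 0) : J(D | 4 * D.natAbs - 1) = -1 := by
  obtain ⟨a, rfl⟩ : ∃ a : ℕ, D = -a := ⟨D.natAbs, by lia⟩
  rw [Int.natAbs_neg, Int.natAbs_natCast]
  have hodd : Odd (4 * a - 1) := Nat.odd_iff.2 (by lia)
  have hmod : (4 * a : ℤ) % (4 * a - 1 : ℕ) = 1 % (4 * a - 1 : ℕ) := by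
    rw [show (4 * a : ℤ) = 1 + (4 * a - 1 : ℕ) by lia, Int.add_emod_right]
  have hJ : J(a | 4 * a - 1) = 1 := by
    rw [← jacobiSym.one_left (4 * a - 1), ← jacobiSym.mod_left' hmod, jacobiSym.mul_left,
      jacobiSym.at_four hodd, one_mul]
  rw [jacobiSym.neg _ hodd, hJ, mul_one, ZMod.χ₄_nat_three_mod_four (by lia)]

theorem jacobiCharacter_ne_one (hD : D < 0) : jacobiCharacter D ≠ 1 := fun h ↦ by
  have hcop : (4 * D.natAbs - 1).Coprime (4 * D.natAbs) :=
    (Nat.coprime_self_sub_left (by lia)).2 (Nat.coprime_one_left _)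
  have hval := jacobiCharacter_natCast hcop
  rw [jacobiSym_four_mul_natAbs_sub_one hD, h, MulChar.one_apply
    ((ZMod.isUnit_iff_coprime ..).2 hcop)] at hval
  norm_num at hval

end JacobiCharacter

section QuadraticForms

theorem even_padicValInt_sq_sub_mul_sq {D : ℤ} {p : ℕ} [Fact p.Prime] (hp : J(D | p) = -1)
    (x y : ℤ) : Even (padicValInt p (x ^ 2 - D * y ^ 2)) := by
  rcases (x.gcd y).eq_zero_or_pos with h | h
  · obtain ⟨rfl, rfl⟩ := Int.gcd_eq_zero_iff.1 h
    simp
  obtain ⟨x', y', hcop, hx, hy⟩ := Int.exists_gcd_one h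
  set g : ℤ := ((x.gcd y : ℕ) : ℤ)
  have hg : g ≠ 0 := by lia
  have hdvd : ¬(p : ℤ) ∣ x' ^ 2 - D * y' ^ 2 := fun hdvd ↦ by
    obtain ⟨hx', hy'⟩ := jacobiSym.prime_dvd_of_eq_neg_one hp hdvd
    exact Nat.Prime.not_dvd_one (Fact.out : p.Prime) (hcop ▸ Int.dvd_gcd hx' hy')
  have hne : x' ^ 2 - D * y' ^ 2 ≠ 0 := fun h₀ ↦ hdvd (h₀ ▸ dvd_zero _)
  rw [show x ^ 2 - D * y ^ 2 = g * g * (x' ^ 2 - D * y' ^ 2) by rw [hx, hy]; ring,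
    padicValInt.mul (mul_ne_zero hg hg) hne, padicValInt.mul hg hg,
    padicValInt.eq_zero_of_not_dvd hdvd, add_zero]
  exact ⟨_, rfl⟩

theorem mem_almostSplitNumbers_of_mul_eq_sq_sub_mul_sq {D M x y : ℤ} {n : ℕ} (hM : M ≠ 0)
    (hn : n ≠ 0) (h : M * n = x ^ 2 - D * y ^ 2) :
    n ∈ almostSplitNumbers (jacobiCharacter D) (4 * D.natAbs * M.natAbs) := by
  refine mem_almostSplitNumbers_of_forall_prime hn fun p hp hpR hodd ↦ ?_
  have : Fact p.Prime := ⟨hp⟩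
  have hp4D : ¬p ∣ 4 * D.natAbs := fun h ↦ hpR (h.mul_right _)
  have hpM : ¬(p : ℤ) ∣ M := fun h ↦ hpR ((Int.natCast_dvd.1 h).mul_left _)
  have hgcd : D.gcd p = 1 :=
    ((hp.coprime_iff_not_dvd.2 fun h ↦ hp4D (h.mul_left _)) : p.Coprime D.natAbs).symm
  have hval : padicValInt p (x ^ 2 - D * y ^ 2) = n.factorization p := by
    rw [← h, padicValInt.mul hM (by exact_mod_cast hn), padicValInt.eq_zero_of_not_dvd hpM,
      zero_add, padicValInt.of_nat, Nat.factorization_def n hp]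
  rw [jacobiCharacter_natCast (hp.coprime_iff_not_dvd.2 hp4D),
    (jacobiSym.eq_one_or_neg_one hgcd).resolve_right fun hJ ↦ Nat.not_even_iff_odd.2 hodd
      (hval ▸ even_padicValInt_sq_sub_mul_sq hJ x y), Int.cast_one]

theorem exists_form_of_one_le_rD {D : ℤ} (hD : D < 0) :
    ∃ b c, discrim 1 b c < 0 ∧
      ∀ n, 1 ≤ rD D n → ∃ u v : ℤ, 1 * u ^ 2 + b * u * v + c * v ^ 2 = n := by
  by_cases h : D % 4 = 1
  · refine ⟨1, (1 - D) / 4, by rw [discrim]; lia, fun n hn ↦ ?_⟩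
    obtain ⟨⟨u, v⟩, huv⟩ := Set.nonempty_of_ncard_ne_zero (Nat.one_le_iff_ne_zero.1 hn)
    rw [Set.mem_ofPred_eq, if_pos h] at huv
    exact ⟨u, v, by rw [one_mul, one_mul, huv]⟩
  · refine ⟨0, -D, by rw [discrim]; lia, fun n hn ↦ ?_⟩
    obtain ⟨⟨u, v⟩, huv⟩ := Set.nonempty_of_ncard_ne_zero (Nat.one_le_iff_ne_zero.1 hn)
    rw [Set.mem_ofPred_eq, if_neg h] at huv
    exact ⟨u, v, by rw [← huv]; ring⟩

open Classical in
theorem stmt17_general (a b c : ℤ) (h : discrim a b c < 0) :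
    ∃ C > 0, ∀ x : ℝ, 2 ≤ x →
      (#((Icc 1 ⌊x⌋₊).filter fun n : ℕ ↦
        ∃ u v : ℤ, a * u ^ 2 + b * u * v + c * v ^ 2 = n) : ℝ) ≤ C * x / √(Real.log x) := by
  have ha : a ≠ 0 := by
    rintro rfl
    rw [discrim] at h
    nlinarith [sq_nonneg b]
  have hΔ : (discrim a b c).natAbs ≠ 0 := Int.natAbs_ne_zero.2 h.ne
  have : NeZero (4 * (discrim a b c).natAbs) := ⟨by lia⟩
  obtain ⟨C, hC, hcard⟩ := exists_card_almostSplitNumbers_le (jacobiCharacter_sq (discrim a b c))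
    (jacobiCharacter_ne_one h) (R := 4 * (discrim a b c).natAbs * (4 * a).natAbs)
    (by simp [ha, h.ne])
  refine ⟨C, hC, fun x hx ↦ le_trans ?_ (hcard x hx)⟩
  refine Nat.cast_le.2 (card_le_card fun n hn ↦ ?_)
  obtain ⟨hmem, u, v, huv⟩ := mem_filter.1 hn
  refine mem_filter.2 ⟨hmem, mem_almostSplitNumbers_of_mul_eq_sq_sub_mul_sq
    (x := 2 * a * u + b * v) (y := v) (by lia) (by grind) ?_⟩
  rw [← huv, discrim]
  ring

end QuadraticForms

theorem stmt17 (D : ℤ) (hD : D < 0) (hsf : Squarefree D) :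
    ∃ C > (0 : ℝ), ∀ x : ℝ, 2 ≤ x →
      (((Finset.Icc 1 ⌊x⌋₊).filter fun n => 1 ≤ rD D n).card : ℝ) ≤
        C * x / Real.sqrt (Real.log x) := by
  classical
  obtain ⟨b, c, hdisc, hform⟩ := exists_form_of_one_le_rD hD
  obtain ⟨C, hC, hcard⟩ := stmt17_general 1 b c hdisc
  refine ⟨C, hC, fun x hx ↦ le_trans ?_ (hcard x hx)⟩
  exact Nat.cast_le.2 (card_le_card (monotone_filter_right _ fun n _ ↦ hform n))
end

section
/- (Cassels) Let Q(x,y) = a x² + b x y + c y² be a positive definite real binary quadratic form normalized to have determinant 1, i.e., a > 0 and a c − b²/4 = 1, and let H(x,y) = (2/√3)(x² + x y + y²) be the corresponding hexagonal form (which also has determinant 1). Then for every real s > 1, the Epstein zeta values satisfy Z_Q(s) ≥ Z_H(s), where Z_Q(s) = ∑_{(m,n) ∈ ℤ², (m,n) ≠ (0,0)} Q(m,n)^{−s}. -/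
/-- The Epstein zeta function of the binary quadratic form `ax² + bxy + cy²` at real `s`:
`Z_Q(s) = ∑_{(m,n) ≠ (0,0)} Q(m,n)^{−s}`. -/
noncomputable def epsteinZeta (a b c : ℝ) (s : ℝ) : ℝ :=
  ∑' p : {p : ℤ × ℤ // p ≠ 0},
    (a * (p.1.1 : ℝ) ^ 2 + b * (p.1.1 : ℝ) * (p.1.2 : ℝ) + c * (p.1.2 : ℝ) ^ 2) ^ (-s)

/-!
By the Mellin transform of `t ↦ exp (-t Q(v))` it suffices to compare, for every `t > 0`, the theta
function `∑ exp (-π t Q(v))` with that of the hexagonal form; the functional equation under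
`t ↦ 1 / t` reduces this to `t ≥ 1`. Forms of determinant one correspond to points `z` of the upper
half plane, the hexagonal form to `ρ`, and by modular invariance `z` may be taken with
`-1 ≤ Re z ≤ 0` and `3 ≤ 4 (Im z)²`.

If `Im z ≥ 4 / 3`, then two short vectors alone make the theta function at `z` larger than the one
at `ρ`. Otherwise `z` is close to `ρ`, and the theta function does not change when averaged over the
rotation of order three about `ρ`. For each `v` the three values of the form along the orbit of `z`,
divided by the value at `ρ`, have mean `cosh (dist z ρ)` and a variance that also depends only on
`dist z ρ`. The mean exceeds one, but the convexity of `exp` more than makes up for it, so the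
averaged sum dominates the hexagonal one term by term.
-/

open Finset Real MeasureTheory
open scoped Matrix MatrixGroups Modular Nat UpperHalfPlane

section ExpInequalities

theorem sum_range_pow_div_factorial_le_exp {n : ℕ} (hn : Even n) (x : ℝ) :
    ∑ i ∈ range n, x ^ i / i ! ≤ exp x := by
  obtain rfl | ⟨m, rfl⟩ : n = 0 ∨ ∃ m, n = m + 1 := by cases n <;> simp
  · simpa using (exp_pos x).le
  rcases eq_or_ne x 0 with rfl | hx
  · simp [sum_range_succ']
  have hsmooth : ContDiff ℝ (m + 1 : ℕ) exp := contDiff_exp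
  obtain ⟨ξ, -, hξ⟩ := taylor_mean_remainder_lagrange_iteratedDeriv (n := m) hx.symm
    hsmooth.contDiffOn
  have htaylor : taylorWithinEval exp m (Set.uIcc 0 x) 0 x =
      ∑ i ∈ range (m + 1), x ^ i / i ! := by
    rw [taylor_within_apply]
    refine sum_congr rfl fun i _ => ?_
    rw [iteratedDerivWithin_eq_iteratedDeriv (uniqueDiffOn_uIcc hx.symm)
      contDiff_exp.contDiffAt Set.left_mem_uIcc]
    simp [iteratedDeriv_eq_iterate, div_eq_inv_mul]
  have hremainder : 0 ≤ exp x - ∑ i ∈ range (m + 1), x ^ i / i ! := by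
    rw [← htaylor, hξ, iteratedDeriv_eq_iterate, iter_deriv_exp, sub_zero]
    have := hn.pow_nonneg x
    positivity
  linarith

theorem one_add_quintic_le_exp (x : ℝ) :
    1 + x + x ^ 2 / 2 + x ^ 3 / 6 + x ^ 4 / 24 + x ^ 5 / 120 ≤ exp x := by
  simpa [sum_range_succ, Nat.factorial] using
    sum_range_pow_div_factorial_le_exp (n := 6) (by decide) x

theorem card_le_sum_exp_mul {ι : Type*} {s : Finset ι} {u : ι → ℝ} {p : ℝ} (hp : 1 ≤ p)
    (h : (#s : ℝ) ≤ ∑ i ∈ s, exp (u i)) : (#s : ℝ) ≤ ∑ i ∈ s, exp (p * u i) := by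
  have bernoulli (i : ι) : 1 + p * (exp (u i) - 1) ≤ exp (p * u i) := by
    have := one_add_mul_self_le_rpow_one_add (s := exp (u i) - 1)
      (by linarith [exp_pos (u i)]) hp
    rwa [add_sub_cancel, ← exp_mul, mul_comm (u i)] at this
  calc (#s : ℝ) ≤ #s + p * (∑ i ∈ s, exp (u i) - #s) := by nlinarith
    _ = ∑ i ∈ s, (1 + p * (exp (u i) - 1)) := by
        simp [sum_add_distrib, ← mul_sum]
    _ ≤ ∑ i ∈ s, exp (p * u i) := sum_le_sum fun i _ => bernoulli i

theorem mul_mul_le_of_add_add_eq_zero {x y z R : ℝ} (hR : 0 ≤ R) (hsum : x + y + z = 0)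
    (hsq : x ^ 2 + y ^ 2 + z ^ 2 = 3 / 2 * R ^ 2) : x * y * z ≤ R ^ 3 / 4 := by
  obtain rfl : z = -x - y := by linarith
  have hR2 : 3 / 4 * R ^ 2 = x ^ 2 + x * y + y ^ 2 := by linarith
  -- The discriminant of the cubic with roots `x, y, z` is a square.
  have hdisc : 0 ≤ ((x - y) * (2 * x + y) * (x + 2 * y)) ^ 2 := sq_nonneg _
  refine le_of_sq_le_sq ?_ (by positivity)
  calc (x * y * (-x - y)) ^ 2 ≤ 4 / 27 * (x ^ 2 + x * y + y ^ 2) ^ 3 := by linarith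
    _ = (R ^ 3 / 4) ^ 2 := by rw [← hR2]; ring

theorem quintic_le_sum_exp_neg {x : Fin 3 → ℝ} {R : ℝ} (hR : 0 ≤ R) (hsum : ∑ i, x i = 0)
    (hsq : ∑ i, x i ^ 2 = 3 / 2 * R ^ 2) :
    3 + 3 / 4 * R ^ 2 - R ^ 3 / 8 + 3 / 64 * R ^ 4 - R ^ 5 / 128 ≤ ∑ i, exp (-x i) := by
  rw [Fin.sum_univ_three] at hsum hsq ⊢
  have hprod := mul_mul_le_of_add_add_eq_zero hR hsum hsq
  have hprod' := mul_le_mul_of_nonneg_left hprod (sq_nonneg R)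
  obtain ⟨e, he⟩ : ∃ e, x 0 * x 1 * x 2 = e := ⟨_, rfl⟩
  have hx2 : x 2 = -x 0 - x 1 := by linarith
  have hR2 : R ^ 2 = 4 / 3 * (x 0 ^ 2 + x 0 * x 1 + x 1 ^ 2) := by rw [hx2] at hsq; linarith
  have cubes : x 0 ^ 3 + x 1 ^ 3 + x 2 ^ 3 = 3 * e := by rw [← he, hx2]; ring
  have fourths : x 0 ^ 4 + x 1 ^ 4 + x 2 ^ 4 = 9 / 8 * R ^ 4 := by
    rw [show R ^ 4 = (R ^ 2) ^ 2 by ring, hR2, hx2]; ring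
  have fifths : x 0 ^ 5 + x 1 ^ 5 + x 2 ^ 5 = 15 / 4 * (R ^ 2 * e) := by
    rw [hR2, ← he, hx2]; ring
  have quintic (i : Fin 3) := one_add_quintic_le_exp (-x i)
  rw [he] at hprod hprod'
  linarith [quintic 0, quintic 1, quintic 2]

theorem three_mul_exp_le_quintic {δ D : ℝ} (hδ : 0 ≤ δ) (hδ' : δ ≤ 0.203) (hD : 0 ≤ D)
    (hDδ : D ^ 2 = δ * (2 + δ)) :
    3 * exp (18 / 5 * δ) ≤ 3 + 3 / 4 * (18 / 5 * D) ^ 2 - (18 / 5 * D) ^ 3 / 8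
      + 3 / 64 * (18 / 5 * D) ^ 4 - (18 / 5 * D) ^ 5 / 128 := by
  have hexp : exp (18 / 5 * δ) ≤ 1 + 18 / 5 * δ + (18 / 5 * δ) ^ 2 / 2 + (18 / 5 * δ) ^ 3 / 6
      + (18 / 5 * δ) ^ 4 * (5 / 96) := by
    have := exp_bound' (x := 18 / 5 * δ) (by positivity) (by linarith) (n := 4) (by norm_num)
    norm_num [sum_range_succ, Nat.factorial] at this
    linarith
  have hD' : D ≤ 0.669 := by nlinarith
  have hD3 : D ^ 3 ≤ 0.669 * (δ * (2 + δ)) := by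
    rw [pow_succ', ← hDδ]; gcongr
  have hD5 : D ^ 5 ≤ 0.669 * (δ * (2 + δ)) ^ 2 := by
    rw [pow_succ', ← hDδ, ← pow_mul]; gcongr
  have hD4 : D ^ 4 = (δ * (2 + δ)) ^ 2 := by rw [← hDδ, ← pow_mul]
  have hpoly : 0 ≤ δ * (0.27 + 1.7 * δ - 1.6 * δ ^ 2 - 7.5 * δ ^ 3) := by
    have : δ ^ 2 ≤ 0.203 * δ := by nlinarith
    have : δ ^ 3 ≤ 0.203 * δ ^ 2 := by nlinarith [sq_nonneg δ]
    exact mul_nonneg hδ (by linarith)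
  have := pow_nonneg hδ 2
  have := pow_nonneg hδ 3
  have := pow_nonneg hδ 4
  simp only [mul_pow, hDδ, hD4] at hexp ⊢
  ring_nf at hexp hpoly hD3 hD5 ⊢
  linarith

-- `18 / 5` is slightly below `2 π / √3`, the least nonzero value of `π * latticeForm ρ`; `1.203` is
-- slightly above `25 / (12 √3)`, the largest value of `cosh (dist z ρ)` for `-1 ≤ Re z ≤ 0` and
-- `√3 / 2 ≤ Im z ≤ 4 / 3`.
theorem three_mul_exp_neg_le_sum_exp_neg {k C : ℝ} {q : Fin 3 → ℝ} (hk : 18 / 5 ≤ k)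
    (hC : 1 ≤ C) (hC' : C ≤ 1.203) (hsum : ∑ i, q i = 3 * C)
    (hsq : ∑ i, q i ^ 2 = 3 * C ^ 2 + 3 / 2 * (C ^ 2 - 1)) :
    3 * exp (-k) ≤ ∑ i, exp (-(k * q i)) := by
  obtain ⟨D, hD, hDC⟩ : ∃ D, 0 ≤ D ∧ D ^ 2 = C ^ 2 - 1 :=
    ⟨√(C ^ 2 - 1), sqrt_nonneg _, sq_sqrt (by nlinarith)⟩
  have hbase : 3 * exp (18 / 5 * (C - 1)) ≤ ∑ i, exp (-(18 / 5 * (q i - C))) := by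
    refine (three_mul_exp_le_quintic (by linarith) (by linarith) hD (by linarith)).trans
      (quintic_le_sum_exp_neg (by positivity) ?_ ?_)
    all_goals simp only [Fin.sum_univ_three] at hsum hsq ⊢
    · linarith
    · linear_combination (18 / 5) ^ 2 * (hsq - 2 * C * hsum - 3 / 2 * hDC)
  have hshift (c : ℝ) : ∑ i, exp (c * (1 - q i)) = (∑ i, exp (-(c * (q i - C)))) /
      exp (c * (C - 1)) := by
    rw [sum_div]
    refine sum_congr rfl fun i _ => ?_
    rw [← exp_sub]; ring_nf
  have hunit : (#(univ : Finset (Fin 3)) : ℝ) ≤ ∑ i, exp (18 / 5 * (1 - q i)) := by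
    rw [hshift, le_div_iff₀ (exp_pos _)]
    simpa using hbase
  have hratio : 1 ≤ k / (18 / 5) := by rwa [le_div_iff₀ (by norm_num), one_mul]
  have hpow := card_le_sum_exp_mul hratio hunit
  simp only [card_univ, Fintype.card_fin, Nat.cast_ofNat, ← mul_assoc,
    div_mul_cancel₀ k (by norm_num : (18 / 5 : ℝ) ≠ 0)] at hpow
  calc 3 * exp (-k) ≤ (∑ i, exp (k * (1 - q i))) * exp (-k) := by gcongr
    _ = ∑ i, exp (-(k * q i)) := by
        rw [sum_mul]
        refine sum_congr rfl fun i _ => ?_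
        rw [← exp_add]; ring_nf

end ExpInequalities

section MellinComparison

variable {ι : Type*} {f : ι → ℝ}

theorem exp_neg_le_rpow_mul_rpow_neg {s x : ℝ} (hs : 0 < s) (hx : 0 < x) :
    exp (-x) ≤ s ^ s * x ^ (-s) := by
  have hle : (x / s) ^ s ≤ exp x := by
    calc (x / s) ^ s ≤ exp (x / s) ^ s := by
          gcongr
          linarith [add_one_le_exp (x / s)]
      _ = exp x := by rw [← exp_mul, div_mul_cancel₀ x hs.ne']
  rw [exp_neg, rpow_neg hx.le, ← div_eq_mul_inv, ← inv_div, ← div_rpow hx.le hs.le]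
  gcongr

theorem summable_exp_neg_mul_of_summable_rpow_neg {s t : ℝ} (hs : 0 < s) (ht : 0 < t)
    (hf : ∀ i, 0 < f i) (hsum : Summable fun i => f i ^ (-s)) :
    Summable fun i => exp (-(t * f i)) := by
  refine Summable.of_nonneg_of_le (fun i => (exp_pos _).le) (fun i => ?_)
    (hsum.mul_left (s ^ s * t ^ (-s)))
  calc exp (-(t * f i)) ≤ s ^ s * (t * f i) ^ (-s) :=
        exp_neg_le_rpow_mul_rpow_neg hs (mul_pos ht (hf i))
    _ = s ^ s * t ^ (-s) * f i ^ (-s) := by rw [mul_rpow ht.le (hf i).le, mul_assoc]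

theorem lintegral_rpow_mul_exp_neg_mul_Ioi {s r : ℝ} (hs : 0 < s) (hr : 0 < r) :
    ∫⁻ t in Set.Ioi (0 : ℝ), ENNReal.ofReal (t ^ (s - 1) * exp (-(r * t))) =
      ENNReal.ofReal (Gamma s * r ^ (-s)) := by
  have hint := integral_rpow_mul_exp_neg_mul_Ioi hs hr
  have := Gamma_pos_of_pos hs
  have hne : ∫ t in Set.Ioi (0 : ℝ), t ^ (s - 1) * exp (-(r * t)) ≠ 0 := by
    rw [hint]; positivity
  rw [← ofReal_integral_eq_lintegral_ofReal (Integrable.of_integral_ne_zero hne), hint, one_div,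
    inv_rpow hr.le, ← rpow_neg hr.le, mul_comm]
  filter_upwards [ae_restrict_mem measurableSet_Ioi] with t ht
  have : 0 < t := ht
  simp only [Pi.zero_apply]
  positivity

theorem lintegral_rpow_mul_tsum_exp_neg [Countable ι] {s : ℝ} (hs : 0 < s) (hf : ∀ i, 0 < f i)
    (hsum : Summable fun i => f i ^ (-s)) :
    ∫⁻ t in Set.Ioi (0 : ℝ), ENNReal.ofReal (t ^ (s - 1) * ∑' i, exp (-(t * f i))) =
      ENNReal.ofReal (Gamma s * ∑' i, f i ^ (-s)) := by
  have hGamma := Gamma_pos_of_pos hs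
  have hpow (i : ι) : 0 ≤ Gamma s * f i ^ (-s) :=
    mul_nonneg hGamma.le (rpow_nonneg (hf i).le _)
  calc ∫⁻ t in Set.Ioi (0 : ℝ), ENNReal.ofReal (t ^ (s - 1) * ∑' i, exp (-(t * f i)))
      = ∫⁻ t in Set.Ioi (0 : ℝ), ∑' i, ENNReal.ofReal (t ^ (s - 1) * exp (-(f i * t))) := by
        refine setLIntegral_congr_fun measurableSet_Ioi fun t (ht : 0 < t) => ?_
        simp only [mul_comm (f _)]
        rw [← tsum_mul_left, ENNReal.ofReal_tsum_of_nonneg (fun i => by positivity)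
          ((summable_exp_neg_mul_of_summable_rpow_neg hs ht hf hsum).mul_left _)]
    _ = ∑' i, ENNReal.ofReal (Gamma s * f i ^ (-s)) := by
        rw [lintegral_tsum fun i => by fun_prop]
        exact tsum_congr fun i => lintegral_rpow_mul_exp_neg_mul_Ioi hs (hf i)
    _ = ENNReal.ofReal (Gamma s * ∑' i, f i ^ (-s)) := by
        rw [← tsum_mul_left, ENNReal.ofReal_tsum_of_nonneg hpow (hsum.mul_left _)]

theorem tsum_rpow_neg_le_of_tsum_exp_neg_le {κ : Type*} [Countable ι] [Countable κ] {g : κ → ℝ}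
    {s : ℝ} (hs : 0 < s) (hf : ∀ i, 0 < f i) (hg : ∀ j, 0 < g j)
    (hfsum : Summable fun i => f i ^ (-s)) (hgsum : Summable fun j => g j ^ (-s))
    (h : ∀ t > 0, ∑' i, exp (-(t * f i)) ≤ ∑' j, exp (-(t * g j))) :
    ∑' i, f i ^ (-s) ≤ ∑' j, g j ^ (-s) := by
  have hGamma := Gamma_pos_of_pos hs
  refine le_of_mul_le_mul_left ((ENNReal.ofReal_le_ofReal_iff ?_).1 ?_) hGamma
  · exact mul_nonneg hGamma.le (tsum_nonneg fun j => rpow_nonneg (hg j).le _)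
  rw [← lintegral_rpow_mul_tsum_exp_neg hs hf hfsum, ← lintegral_rpow_mul_tsum_exp_neg hs hg hgsum]
  refine setLIntegral_mono' measurableSet_Ioi fun t (ht : 0 < t) => ?_
  gcongr
  exact h t ht

end MellinComparison

section LatticeForm

/-- The binary quadratic form `|m z + n|² / Im z` attached to a point `z` of the upper half plane,
evaluated at `v = (m, n)`. Every positive definite form of determinant one arises this way. -/
noncomputable def latticeForm (z : ℍ) (v : Fin 2 → ℤ) : ℝ :=
  Complex.normSq (v 0 * z + v 1) / z.im

theorem latticeForm_eq (z : ℍ) (v : Fin 2 → ℤ) :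
    latticeForm z v = ((v 0 * z.re + v 1) ^ 2 + (v 0 * z.im) ^ 2) / z.im := by
  simp [latticeForm, Complex.normSq_apply, sq]

theorem latticeForm_zero (z : ℍ) : latticeForm z 0 = 0 := by
  simp [latticeForm]

theorem latticeForm_pos (z : ℍ) {v : Fin 2 → ℤ} (hv : v ≠ 0) : 0 < latticeForm z v := by
  refine div_pos (Complex.normSq_pos.2 ?_) z.im_pos
  have hv' : ((↑) ∘ v : Fin 2 → ℝ) ≠ 0 := fun h => hv <| funext fun i => by simpa using congrFun h i
  simpa using z.linear_ne_zero hv'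

theorem latticeForm_smul (A : SL(2, ℤ)) (z : ℍ) (v : Fin 2 → ℤ) :
    latticeForm (A • z) v = latticeForm z (v ᵥ* (A : Matrix (Fin 2) (Fin 2) ℤ)) := by
  have hdenom := UpperHalfPlane.denom_ne_zero A z
  have hcoord : (v 0 * ↑(A • z) + v 1) * UpperHalfPlane.denom A z =
      ((v ᵥ* A.1) 0 * z + (v ᵥ* A.1) 1 : ℂ) := by
    rw [ModularGroup.denom_apply] at hdenom ⊢
    rw [UpperHalfPlane.coe_specialLinearGroup_apply]
    simp only [algebraMap_int_eq, eq_intCast, Complex.ofReal_intCast, Matrix.vecMul,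
      Matrix.vec2_dotProduct, Int.cast_add, Int.cast_mul]
    rw [add_mul, mul_assoc, div_mul_cancel₀ _ hdenom]
    ring
  rw [latticeForm, latticeForm, ModularGroup.im_smul_eq_div_normSq, ← hcoord, map_mul,
    div_div_eq_mul_div]

theorem summable_latticeForm_rpow_neg (z : ℍ) {s : ℝ} (hs : 1 < s) :
    Summable fun v => latticeForm z v ^ (-s) := by
  have hnorm := (EisensteinSeries.summable_one_div_norm_rpow (k := 2 * s) (by linarith)).mul_left
    (EisensteinSeries.r z ^ (-(2 * s)) / z.im ^ (-s))
  refine Summable.of_nonneg_of_le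
    (fun v => rpow_nonneg (div_nonneg (Complex.normSq_nonneg _) z.im_pos.le) _) (fun v => ?_) hnorm
  calc latticeForm z v ^ (-s) = ‖(v 0 * z + v 1 : ℂ)‖ ^ (-(2 * s)) / z.im ^ (-s) := by
        rw [latticeForm, div_rpow (Complex.normSq_nonneg _) z.im_pos.le, Complex.normSq_eq_norm_sq,
          ← rpow_two, ← rpow_mul (norm_nonneg _), mul_neg]
    _ ≤ EisensteinSeries.r z ^ (-(2 * s)) * ‖v‖ ^ (-(2 * s)) / z.im ^ (-s) := by
        have := z.im_pos
        gcongr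
        exact EisensteinSeries.summand_bound z (by linarith) v
    _ = _ := by rw [mul_div_right_comm]

end LatticeForm

section Theta

/-- The theta function `∑ exp (-π t Q(v))` of the form `Q = latticeForm z`, summed over all `v`. -/
noncomputable def latticeTheta (z : ℍ) (t : ℝ) : ℝ :=
  ∑' v : Fin 2 → ℤ, exp (-(π * t * latticeForm z v))

theorem summable_exp_neg_latticeForm (z : ℍ) {t : ℝ} (ht : 0 < t) :
    Summable fun v => exp (-(π * t * latticeForm z v)) := by
  refine ({0} : Finset (Fin 2 → ℤ)).summable_compl_iff.1 ?_
  exact summable_exp_neg_mul_of_summable_rpow_neg two_pos (mul_pos pi_pos ht)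
    (fun v => latticeForm_pos z (by simpa using v.2))
    ((summable_latticeForm_rpow_neg z one_lt_two).comp_injective Subtype.val_injective)

theorem latticeTheta_eq_one_add (z : ℍ) {t : ℝ} (ht : 0 < t) :
    latticeTheta z t = 1 + ∑' v : {v : Fin 2 → ℤ // v ≠ 0}, exp (-(t * (π * latticeForm z v))) := by
  have hsum := summable_exp_neg_latticeForm z ht
  rw [latticeTheta, ← (hsum.subtype _).tsum_add_tsum_compl (s := {0}) (hsum.subtype _)]
  congr 1
  · simp [latticeForm_zero]
  · exact tsum_congr fun v => by simp [mul_left_comm t, mul_assoc]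

theorem latticeTheta_smul (A : SL(2, ℤ)) (z : ℍ) (t : ℝ) :
    latticeTheta (A • z) t = latticeTheta z t := by
  let e : (Fin 2 → ℤ) ≃ (Fin 2 → ℤ) :=
    { toFun v := v ᵥ* A.1
      invFun v := v ᵥ* (A⁻¹).1
      left_inv v := by simp [Matrix.vecMul_vecMul, Matrix.mul_adjugate]
      right_inv v := by simp [Matrix.vecMul_vecMul, Matrix.adjugate_mul] }
  simp only [latticeTheta, latticeForm_smul]
  exact e.tsum_eq fun v => exp (-(π * t * latticeForm z v))

end Theta

section FunctionalEquation

/-- The summand of `latticeTheta z t` after Poisson summation in the second variable, where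
`x = Re z`, `u = t Im z` and `w = Im z / t`. Replacing `t` by `1 / t` exchanges `u` and `w`. -/
noncomputable def twistedGaussian (x u w : ℝ) (m n : ℤ) : ℂ :=
  Complex.exp (2 * π * Complex.I * (m * x : ℝ) * n) * exp (-π * m ^ 2 * u) * exp (-π * n ^ 2 * w)

theorem twistedGaussian_swap (x u w : ℝ) (m n : ℤ) :
    twistedGaussian x u w m n = twistedGaussian x w u n m := by
  simp only [twistedGaussian, Complex.ofReal_mul, Complex.ofReal_intCast]
  ring_nf

theorem norm_twistedGaussian (x u w : ℝ) (m n : ℤ) :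
    ‖twistedGaussian x u w m n‖ = exp (-π * m ^ 2 * u) * exp (-π * n ^ 2 * w) := by
  have harg : 2 * π * Complex.I * (m * x : ℝ) * n = (2 * π * (m * x) * n : ℝ) * Complex.I := by
    push_cast; ring
  rw [twistedGaussian, harg, norm_mul, norm_mul, Complex.norm_exp_ofReal_mul_I, one_mul,
    Complex.norm_real, Complex.norm_real, norm_of_nonneg (exp_pos _).le,
    norm_of_nonneg (exp_pos _).le]

theorem summable_exp_neg_mul_int_sq {u : ℝ} (hu : 0 < u) :
    Summable fun n : ℤ => exp (-π * n ^ 2 * u) := by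
  simpa using (HurwitzZeta.hasSum_int_evenKernel 0 hu).summable

theorem summable_twistedGaussian (x : ℝ) {u w : ℝ} (hu : 0 < u) (hw : 0 < w) :
    Summable fun p : ℤ × ℤ => twistedGaussian x u w p.1 p.2 := by
  refine Summable.of_norm ?_
  simp only [norm_twistedGaussian]
  exact (summable_exp_neg_mul_int_sq hu).mul_of_nonneg (summable_exp_neg_mul_int_sq hw)
    (fun _ => (exp_pos _).le) (fun _ => (exp_pos _).le)

theorem tsum_exp_neg_mul_int_add_sq (a : ℝ) {t : ℝ} (ht : 0 < t) :
    ((∑' n : ℤ, exp (-π * (n + a) ^ 2 * t) : ℝ) : ℂ) =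
      √(1 / t) * ∑' n : ℤ,
        Complex.exp (2 * π * Complex.I * a * n) * exp (-π * n ^ 2 * (1 / t)) := by
  rw [(HurwitzZeta.hasSum_int_evenKernel a ht).tsum_eq,
    (HurwitzZeta.hasSum_int_cosKernel a (one_div_pos.2 ht)).tsum_eq,
    HurwitzZeta.evenKernel_functional_equation, ← sqrt_eq_rpow,
    one_div √t, ← sqrt_inv, ← one_div, Complex.ofReal_mul]

theorem latticeTheta_eq_tsum_tsum (z : ℍ) {t : ℝ} (ht : 0 < t) :
    latticeTheta z t = ∑' m : ℤ, exp (-π * m ^ 2 * (z.im * t)) *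
      ∑' n : ℤ, exp (-π * (n + m * z.re) ^ 2 * (t / z.im)) := by
  have hy := z.im_ne_zero
  have hterm (p : ℤ × ℤ) : exp (-(π * t * latticeForm z ((finTwoArrowEquiv ℤ).symm p))) =
      exp (-π * p.1 ^ 2 * (z.im * t)) * exp (-π * (p.2 + p.1 * z.re) ^ 2 * (t / z.im)) := by
    rw [← exp_add, latticeForm_eq]
    congr 1
    simp only [finTwoArrowEquiv_symm_apply, Matrix.cons_val_zero, Matrix.cons_val_one]
    field_simp
    ring
  have hsum := (finTwoArrowEquiv ℤ).symm.summable_iff.2 (summable_exp_neg_latticeForm z ht)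
  simp only [Function.comp_def, hterm] at hsum
  rw [latticeTheta, ← (finTwoArrowEquiv ℤ).symm.tsum_eq]
  simp only [hterm, hsum.tsum_prod, tsum_mul_left]

theorem latticeTheta_eq_tsum_twistedGaussian (z : ℍ) {t : ℝ} (ht : 0 < t) :
    (latticeTheta z t : ℂ) =
      √(z.im / t) * ∑' p : ℤ × ℤ, twistedGaussian z.re (z.im * t) (z.im / t) p.1 p.2 := by
  have := z.im_pos
  rw [latticeTheta_eq_tsum_tsum z ht,
    (summable_twistedGaussian _ (by positivity) (by positivity)).tsum_prod,
    Complex.ofReal_tsum, ← tsum_mul_left]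
  refine tsum_congr fun m => ?_
  rw [Complex.ofReal_mul, tsum_exp_neg_mul_int_add_sq _ (by positivity), one_div_div,
    mul_left_comm, ← tsum_mul_left]
  simp only [twistedGaussian]
  congr 1
  refine tsum_congr fun n => ?_
  ring_nf

theorem latticeTheta_functional_equation (z : ℍ) {t : ℝ} (ht : 0 < t) :
    latticeTheta z t = 1 / t * latticeTheta z (1 / t) := by
  have := z.im_pos
  have hswap : ∑' p : ℤ × ℤ, twistedGaussian z.re (z.im / t) (z.im * t) p.1 p.2 =
      ∑' p : ℤ × ℤ, twistedGaussian z.re (z.im * t) (z.im / t) p.1 p.2 := by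
    rw [← (Equiv.prodComm ℤ ℤ).tsum_eq]
    exact tsum_congr fun p => (twistedGaussian_swap ..).symm
  have hsqrt : √(z.im / t) = 1 / t * √(z.im * t) := by
    rw [show z.im / t = (1 / t) ^ 2 * (z.im * t) by field_simp, sqrt_mul (sq_nonneg _),
      sqrt_sq (by positivity)]
  have hdual := latticeTheta_eq_tsum_twistedGaussian z (one_div_pos.2 ht)
  rw [div_div_eq_mul_div, div_one, mul_one_div, hswap] at hdual
  apply Complex.ofReal_injective
  rw [latticeTheta_eq_tsum_twistedGaussian z ht, hsqrt, Complex.ofReal_mul, Complex.ofReal_mul,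
    hdual, mul_assoc]

end FunctionalEquation

section Reduction

open ModularGroup UpperHalfPlane

theorem exists_smul_re_mem_Icc_three_le_four_mul_im_sq (z : ℍ) :
    ∃ g : SL(2, ℤ), (g • z).re ∈ Set.Icc (-1 : ℝ) 0 ∧ 3 ≤ 4 * (g • z).im ^ 2 := by
  obtain ⟨g, hg⟩ := exists_smul_mem_fd z
  have him := three_le_four_mul_im_sq_of_mem_fd hg
  obtain ⟨hre, hre'⟩ := abs_le.1 hg.2
  rcases le_total (g • z).re 0 with h | h
  · exact ⟨g, ⟨by linarith, h⟩, him⟩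
  · refine ⟨T⁻¹ * g, ⟨?_, ?_⟩, ?_⟩
    · rw [mul_smul, re_T_inv_smul]; linarith
    · rw [mul_smul, re_T_inv_smul]; linarith
    · rwa [mul_smul, im_T_inv_smul]

end Reduction

section Hexagonal

open UpperHalfPlane

/-- The integral form `m² - m n + n²`, which is `latticeForm ρ` up to the factor `2 / √3`. -/
def hexNorm (v : Fin 2 → ℤ) : ℤ :=
  v 0 ^ 2 - v 0 * v 1 + v 1 ^ 2

theorem latticeForm_ρ (v : Fin 2 → ℤ) : latticeForm ρ v = 2 / √3 * hexNorm v := by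
  have hre : ρ.re = -1 / 2 := rfl
  have him : ρ.im = √3 / 2 := rfl
  have h3 : √3 ^ 2 = 3 := sq_sqrt (by norm_num)
  rw [latticeForm_eq, hre, him, hexNorm]
  push_cast
  field_simp
  rw [h3]
  ring

theorem one_le_hexNorm {v : Fin 2 → ℤ} (hv : v ≠ 0) : 1 ≤ hexNorm v := by
  have hpos := latticeForm_pos ρ hv
  rw [latticeForm_ρ] at hpos
  exact_mod_cast pos_of_mul_pos_right hpos (by positivity)

theorem le_pi_mul_two_div_sqrt_three {t : ℝ} (ht : 1 ≤ t) : 18 / 5 ≤ π * t * (2 / √3) := by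
  have h3 : √3 ≤ 1.733 := sqrt_le_iff.2 (by norm_num)
  rw [mul_div_assoc', le_div_iff₀ (by positivity)]
  nlinarith [pi_gt_d2]

end Hexagonal

section Rotation

open ModularGroup UpperHalfPlane

theorem cosh_dist_ρ (z : ℍ) :
    cosh (dist z ρ) = (z.re ^ 2 + z.re + 1 + z.im ^ 2) / (√3 * z.im) := by
  have hre : (ρ : ℂ).re = -1 / 2 := rfl
  have him : (ρ : ℂ).im = √3 / 2 := rfl
  have him' : ρ.im = √3 / 2 := rfl
  have h3 : √3 ^ 2 = 3 := sq_sqrt (by norm_num)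
  have hy := z.im_ne_zero
  rw [UpperHalfPlane.cosh_dist, Complex.dist_eq, ← Complex.normSq_eq_norm_sq, Complex.normSq_apply,
    Complex.sub_re, Complex.sub_im, hre, him, him', coe_re, coe_im]
  field_simp
  linear_combination h3

theorem cosh_dist_ρ_le {z : ℍ} (hre : z.re ∈ Set.Icc (-1 : ℝ) 0) (him : 3 ≤ 4 * z.im ^ 2)
    (him' : z.im ≤ 4 / 3) : cosh (dist z ρ) ≤ 1.203 := by
  have hy := z.im_pos
  have h3 : 1.732 < √3 := lt_sqrt_of_sq_lt (by norm_num)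
  have hy' : 3 / 4 ≤ z.im := by nlinarith
  rw [cosh_dist_ρ, div_le_iff₀ (by positivity)]
  calc z.re ^ 2 + z.re + 1 + z.im ^ 2 ≤ 1 + z.im ^ 2 := by nlinarith [hre.1, hre.2]
    _ ≤ 25 / 12 * z.im := by nlinarith
    _ ≤ 1.203 * (√3 * z.im) := by nlinarith

theorem latticeForm_rotation (z : ℍ) (v : Fin 2 → ℤ) :
    latticeForm ((S * T) • z) v = latticeForm z ![v 1, v 1 - v 0] := by
  rw [latticeForm_smul]
  congr 1
  ext i
  fin_cases i <;>
    simp [Matrix.vecMul_eq_sum, Fin.sum_univ_two, coe_S, coe_T, neg_add_eq_sub]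

theorem sum_apply_latticeForm_rotation (F : ℝ → ℝ) (z : ℍ) (v : Fin 2 → ℤ) :
    ∑ i : Fin 3, F (latticeForm ((S * T) ^ (i : ℕ) • z) v) =
      F (latticeForm z v) + F (latticeForm z ![v 1, v 1 - v 0]) +
        F (latticeForm z ![v 1 - v 0, -v 0]) := by
  simp only [Fin.sum_univ_three, Fin.val_zero, Fin.val_one, Fin.val_two, pow_zero, one_smul,
    pow_one, sq (S * T), mul_smul (S * T), latticeForm_rotation, Matrix.cons_val_zero,
    Matrix.cons_val_one, sub_sub_cancel_left]

theorem sum_latticeForm_rotation (z : ℍ) (v : Fin 2 → ℤ) :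
    ∑ i : Fin 3, latticeForm ((S * T) ^ (i : ℕ) • z) v =
      3 * cosh (dist z ρ) * latticeForm ρ v := by
  have h3 : √3 ^ 2 = 3 := sq_sqrt (by norm_num)
  have hy := z.im_ne_zero
  rw [sum_apply_latticeForm_rotation fun q => q, latticeForm_ρ, cosh_dist_ρ, hexNorm]
  simp only [latticeForm_eq, Matrix.cons_val_zero, Matrix.cons_val_one]
  push_cast
  field_simp
  rw [h3]
  ring

theorem sum_sq_latticeForm_rotation (z : ℍ) (v : Fin 2 → ℤ) :
    ∑ i : Fin 3, latticeForm ((S * T) ^ (i : ℕ) • z) v ^ 2 =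
      (3 * cosh (dist z ρ) ^ 2 + 3 / 2 * (cosh (dist z ρ) ^ 2 - 1)) * latticeForm ρ v ^ 2 := by
  have h3 : √3 ^ 2 = 3 := sq_sqrt (by norm_num)
  have hy := z.im_ne_zero
  rw [sum_apply_latticeForm_rotation fun q => q ^ 2, latticeForm_ρ, cosh_dist_ρ, hexNorm]
  simp only [latticeForm_eq, Matrix.cons_val_zero, Matrix.cons_val_one, mul_pow, div_pow, h3]
  push_cast
  field_simp
  ring

theorem three_mul_exp_latticeForm_ρ_le {z : ℍ} (hz : cosh (dist z ρ) ≤ 1.203) {t : ℝ}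
    (ht : 1 ≤ t) (v : Fin 2 → ℤ) :
    3 * exp (-(π * t * latticeForm ρ v)) ≤
      ∑ i : Fin 3, exp (-(π * t * latticeForm ((S * T) ^ (i : ℕ) • z) v)) := by
  rcases eq_or_ne v 0 with rfl | hv
  · simp [latticeForm_zero]
  have hρ := latticeForm_pos ρ hv
  have hk : 18 / 5 ≤ π * t * latticeForm ρ v := by
    have hnorm : (1 : ℝ) ≤ hexNorm v := by exact_mod_cast one_le_hexNorm hv
    rw [latticeForm_ρ, ← mul_assoc]
    exact (le_pi_mul_two_div_sqrt_three ht).trans (le_mul_of_one_le_right (by positivity) hnorm)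
  have horbit := three_mul_exp_neg_le_sum_exp_neg
    (q := fun i => latticeForm ((S * T) ^ (i : ℕ) • z) v / latticeForm ρ v) hk (one_le_cosh _) hz
    (by rw [← sum_div, sum_latticeForm_rotation, mul_div_cancel_right₀ _ hρ.ne'])
    (by simp only [div_pow]
        rw [← sum_div, sum_sq_latticeForm_rotation, mul_div_cancel_right₀ _ (by positivity)])
  simpa only [mul_assoc, mul_div_cancel₀ _ hρ.ne'] using horbit

theorem latticeTheta_ρ_le_of_cosh_dist_le {z : ℍ} (hz : cosh (dist z ρ) ≤ 1.203) {t : ℝ}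
    (ht : 1 ≤ t) : latticeTheta ρ t ≤ latticeTheta z t := by
  have ht₀ : 0 < t := by linarith
  have hsum (i : Fin 3) := summable_exp_neg_latticeForm ((S * T) ^ (i : ℕ) • z) ht₀
  have horbit : 3 * latticeTheta ρ t ≤ ∑ i : Fin 3, latticeTheta ((S * T) ^ (i : ℕ) • z) t := by
    simp only [latticeTheta]
    rw [← tsum_mul_left, ← Summable.tsum_finsetSum fun i _ => hsum i]
    exact ((summable_exp_neg_latticeForm ρ ht₀).mul_left 3).tsum_le_tsum
      (three_mul_exp_latticeForm_ρ_le hz ht) (summable_sum fun i _ => hsum i)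
  simp only [latticeTheta_smul, sum_const, card_univ, Fintype.card_fin, nsmul_eq_mul] at horbit
  push_cast at horbit
  linarith

end Rotation

section ThinLattices

open UpperHalfPlane

/-- The six vectors of `hexNorm` one, that is, the minimal vectors of the hexagonal lattice. -/
def hexUnits : Finset (Fin 2 → ℤ) :=
  {![1, 0], ![-1, 0], ![0, 1], ![0, -1], ![1, 1], ![-1, -1]}

theorem abs_add_abs_sq_le_four_mul_hexNorm (v : Fin 2 → ℤ) :
    (|v 0| + |v 1|) ^ 2 ≤ 4 * hexNorm v := by
  have hmul : |v 0 * v 1| = |v 0| * |v 1| := abs_mul ..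
  rw [hexNorm]
  nlinarith [sq_abs (v 0), sq_abs (v 1), sq_nonneg (|v 0| - |v 1|), le_abs_self (v 0 * v 1)]

theorem mem_hexUnits_of_hexNorm_le_one {v : Fin 2 → ℤ} (hv : v ≠ 0) (hN : hexNorm v ≤ 1) :
    v ∈ hexUnits := by
  obtain ⟨m, n, rfl⟩ : ∃ m n, v = ![m, n] := ⟨v 0, v 1, by ext i; fin_cases i <;> rfl⟩
  simp only [hexNorm, Matrix.cons_val_zero, Matrix.cons_val_one] at hN
  have hm : m ^ 2 ≤ 1 := by nlinarith [sq_nonneg (2 * n - m)]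
  have hn : n ^ 2 ≤ 1 := by nlinarith [sq_nonneg (2 * m - n)]
  rw [sq_le_one_iff_abs_le_one, abs_le] at hm hn
  obtain ⟨hm, hm'⟩ := hm
  obtain ⟨hn, hn'⟩ := hn
  interval_cases m <;> interval_cases n <;> simp_all [hexUnits]

theorem abs_add_abs_le_two_mul_hexNorm_sub_one {v : Fin 2 → ℤ} (hv : v ≠ 0)
    (hunit : v ∉ hexUnits) : |v 0| + |v 1| ≤ 2 * (hexNorm v - 1) := by
  have hbound := abs_add_abs_sq_le_four_mul_hexNorm v
  have hN : 2 ≤ hexNorm v := by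
    by_contra! h
    exact hunit (mem_hexUnits_of_hexNorm_le_one hv (by linarith))
  rcases le_or_gt (|v 0| + |v 1|) 3 with h | h
  · by_contra! hlt
    have : |v 0| + |v 1| = 3 := by omega
    rw [this] at hbound hlt
    omega
  · nlinarith

theorem hasSum_pow_natAbs {r : ℝ} (hr : 0 ≤ r) (hr' : r < 1) :
    HasSum (fun n : ℤ => r ^ n.natAbs) ((1 + r) / (1 - r)) := by
  have hgeom := hasSum_geometric_of_lt_one hr hr'
  have hneg : HasSum (fun n : ℕ => r ^ (-((n : ℤ) + 1)).natAbs) (r * (1 - r)⁻¹) := by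
    have habs (n : ℕ) : (-((n : ℤ) + 1)).natAbs = n + 1 := by omega
    simpa only [habs, pow_succ'] using hgeom.mul_left r
  have hsum := HasSum.of_nat_of_neg_add_one (f := fun n : ℤ => r ^ n.natAbs) hgeom hneg
  rwa [← one_add_mul, ← div_eq_mul_inv] at hsum

theorem hasSum_pow_natAbs_add_natAbs {r : ℝ} (hr : 0 ≤ r) (hr' : r < 1) :
    HasSum (fun v : Fin 2 → ℤ => r ^ ((v 0).natAbs + (v 1).natAbs)) (((1 + r) / (1 - r)) ^ 2) := by
  have h := hasSum_pow_natAbs hr hr'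
  have hprod := h.mul h (h.summable.mul_of_nonneg h.summable (fun _ => by positivity)
    (fun _ => by positivity))
  rw [← (finTwoArrowEquiv ℤ).symm.hasSum_iff, sq]
  simpa only [Function.comp_def, finTwoArrowEquiv_symm_apply, Matrix.cons_val_zero,
    Matrix.cons_val_one, pow_add] using hprod

theorem exp_neg_nine_fifths_le : exp (-(9 / 5)) ≤ 1 / 6 := by
  have h := sum_le_exp_of_nonneg (x := 9 / 5) (by norm_num) 8
  norm_num [sum_range_succ, Nat.factorial] at h
  rw [exp_neg, one_div]
  exact inv_anti₀ (by norm_num) (by linarith)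

-- Off the units `hexNorm` grows at least linearly, so the right-hand side is a majorant whose sum
-- over the lattice is a product of two geometric series plus finitely many terms.
theorem exp_neg_mul_hexNorm_le {k : ℝ} (hk : 18 / 5 ≤ k) (v : Fin 2 → ℤ) :
    exp (-(k * hexNorm v)) ≤ (if v = 0 then 1 - exp (-k) else 0) +
      exp (-k) * ((if v ∈ hexUnits then 1 else 0) + (1 / 6) ^ ((v 0).natAbs + (v 1).natAbs)) := by
  rcases eq_or_ne v 0 with rfl | hv
  · have hmem : (0 : Fin 2 → ℤ) ∉ hexUnits := by decide
    simp [hexNorm, hmem]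
  rw [if_neg hv, zero_add]
  by_cases hunit : v ∈ hexUnits
  · have hN : (1 : ℝ) ≤ hexNorm v := by exact_mod_cast one_le_hexNorm hv
    calc exp (-(k * hexNorm v)) ≤ exp (-k) := exp_le_exp.2 (by nlinarith)
      _ ≤ _ := le_mul_of_one_le_right (exp_pos _).le (by rw [if_pos hunit]; simp)
  · have hN : (((v 0).natAbs + (v 1).natAbs : ℕ) : ℝ) ≤ 2 * (hexNorm v - 1) := by
      have hint := abs_add_abs_le_two_mul_hexNorm_sub_one hv hunit
      push_cast [Nat.cast_natAbs]
      exact_mod_cast hint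
    rw [if_neg hunit, zero_add]
    calc exp (-(k * hexNorm v)) = exp (-k) * exp (-(k * (hexNorm v - 1))) := by
          rw [← exp_add]; ring_nf
      _ ≤ exp (-k) * exp (((v 0).natAbs + (v 1).natAbs : ℕ) * -(9 / 5)) := by
          gcongr
          nlinarith
      _ ≤ exp (-k) * (1 / 6) ^ ((v 0).natAbs + (v 1).natAbs) := by
          rw [exp_nat_mul]
          gcongr
          exact exp_neg_nine_fifths_le

theorem latticeTheta_ρ_le {t : ℝ} (ht : 1 ≤ t) :
    latticeTheta ρ t ≤ 1 + 7 * exp (-(π * t * (2 / √3))) := by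
  have hk := le_pi_mul_two_div_sqrt_three ht
  set k := π * t * (2 / √3) with hkdef
  have hzero := hasSum_ite_eq (0 : Fin 2 → ℤ) (1 - exp (-k))
  have hunits : HasSum (fun v => if v ∈ hexUnits then (1 : ℝ) else 0) 6 := by
    have hcard : ∑ v ∈ hexUnits, (if v ∈ hexUnits then (1 : ℝ) else 0) = 6 := by
      rw [← sum_filter, filter_mem_eq_inter, inter_self, sum_const, show #hexUnits = 6 by decide]
      norm_num
    exact hcard ▸ hasSum_sum_of_ne_finset_zero fun v hv => if_neg hv
  have htail := hasSum_pow_natAbs_add_natAbs (r := 1 / 6) (by norm_num) (by norm_num)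
  have hmajorant := hzero.add ((hunits.add htail).mul_left (exp (-k)))
  have hterm (v : Fin 2 → ℤ) : π * t * latticeForm ρ v = k * hexNorm v := by
    rw [latticeForm_ρ, hkdef, ← mul_assoc]
  have hle : latticeTheta ρ t ≤ 1 - exp (-k) + exp (-k) * (6 + ((1 + 1 / 6) / (1 - 1 / 6)) ^ 2) :=
    hasSum_le (fun v => (hterm v).symm ▸ exp_neg_mul_hexNorm_le hk v)
      (summable_exp_neg_latticeForm ρ (by linarith)).hasSum hmajorant
  linarith [exp_pos (-k)]

theorem one_add_two_mul_exp_le_latticeTheta (z : ℍ) {t : ℝ} (ht : 0 < t) :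
    1 + 2 * exp (-(π * t / z.im)) ≤ latticeTheta z t := by
  have h := (summable_exp_neg_latticeForm z ht).sum_le_tsum {0, ![0, 1], ![0, -1]}
    fun _ _ => (exp_pos _).le
  rw [sum_insert (by decide), sum_insert (by decide), sum_singleton] at h
  norm_num [latticeForm_eq] at h
  rw [latticeTheta]
  simp only [latticeForm_eq]
  rw [div_eq_mul_inv]
  linarith

theorem seven_mul_exp_le_two_mul_exp {t : ℝ} (ht : 1 ≤ t) :
    7 * exp (-(π * t * (2 / √3))) ≤ 2 * exp (-(π * t * (3 / 4))) := by
  have h3 : √3 ≤ 1.733 := sqrt_le_iff.2 (by norm_num)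
  have hinv : 1.154 ≤ 2 / √3 := by rw [le_div_iff₀ (by positivity)]; linarith
  have hexponent : 1.26 ≤ π * t * (2 / √3 - 3 / 4) := by
    have : 3.14 ≤ π * t := by nlinarith [pi_gt_d2]
    nlinarith
  have hexp : 7 / 2 ≤ exp (π * t * (2 / √3 - 3 / 4)) :=
    le_trans (by norm_num) ((one_add_quintic_le_exp 1.26).trans (exp_le_exp.2 hexponent))
  calc 7 * exp (-(π * t * (2 / √3)))
      = 2 * (7 / 2 * exp (-(π * t * (2 / √3)))) := by ring
    _ ≤ 2 * (exp (π * t * (2 / √3 - 3 / 4)) * exp (-(π * t * (2 / √3)))) := by gcongr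
    _ = 2 * exp (-(π * t * (3 / 4))) := by rw [← exp_add]; ring_nf

theorem latticeTheta_ρ_le_of_four_thirds_le_im {z : ℍ} (hz : 4 / 3 ≤ z.im) {t : ℝ} (ht : 1 ≤ t) :
    latticeTheta ρ t ≤ latticeTheta z t := by
  have him : 1 / z.im ≤ 3 / 4 := by
    rw [div_le_iff₀ z.im_pos]; linarith
  calc latticeTheta ρ t ≤ 1 + 7 * exp (-(π * t * (2 / √3))) := latticeTheta_ρ_le ht
    _ ≤ 1 + 2 * exp (-(π * t * (3 / 4))) :=
        add_le_add le_rfl (seven_mul_exp_le_two_mul_exp ht)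
    _ ≤ 1 + 2 * exp (-(π * t / z.im)) := by
        rw [div_eq_mul_one_div (π * t)]
        gcongr
    _ ≤ latticeTheta z t := one_add_two_mul_exp_le_latticeTheta z (by linarith)

end ThinLattices

section ThetaMinimum

open UpperHalfPlane

theorem latticeTheta_ρ_le_of_one_le (z : ℍ) {t : ℝ} (ht : 1 ≤ t) :
    latticeTheta ρ t ≤ latticeTheta z t := by
  obtain ⟨g, hre, him⟩ := exists_smul_re_mem_Icc_three_le_four_mul_im_sq z
  rw [← latticeTheta_smul g z]
  rcases le_total (g • z).im (4 / 3) with h | h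
  · exact latticeTheta_ρ_le_of_cosh_dist_le (cosh_dist_ρ_le hre him h) ht
  · exact latticeTheta_ρ_le_of_four_thirds_le_im h ht

theorem latticeTheta_ρ_le_latticeTheta (z : ℍ) {t : ℝ} (ht : 0 < t) :
    latticeTheta ρ t ≤ latticeTheta z t := by
  rcases le_total 1 t with h | h
  · exact latticeTheta_ρ_le_of_one_le z h
  · rw [latticeTheta_functional_equation ρ ht, latticeTheta_functional_equation z ht]
    gcongr
    exact latticeTheta_ρ_le_of_one_le z (one_le_one_div ht h)

theorem tsum_latticeForm_ρ_rpow_neg_le (z : ℍ) {s : ℝ} (hs : 1 < s) :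
    ∑' v : {v : Fin 2 → ℤ // v ≠ 0}, latticeForm ρ v ^ (-s) ≤
      ∑' v : {v : Fin 2 → ℤ // v ≠ 0}, latticeForm z v ^ (-s) := by
  have hpos (w : ℍ) (v : {v : Fin 2 → ℤ // v ≠ 0}) : 0 < latticeForm w v := latticeForm_pos w v.2
  have hsummable (w : ℍ) :=
    (summable_latticeForm_rpow_neg w hs).subtype {v : Fin 2 → ℤ | v ≠ 0}
  refine tsum_rpow_neg_le_of_tsum_exp_neg_le (by linarith) (hpos ρ) (hpos z) (hsummable ρ)
    (hsummable z) fun t ht => ?_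
  have htheta := latticeTheta_ρ_le_latticeTheta z (div_pos ht pi_pos)
  rw [latticeTheta_eq_one_add ρ (div_pos ht pi_pos),
    latticeTheta_eq_one_add z (div_pos ht pi_pos)] at htheta
  simpa only [← mul_assoc, div_mul_cancel₀ _ pi_ne_zero, add_le_add_iff_left] using htheta

end ThetaMinimum

section EpsteinZeta

open UpperHalfPlane

theorem epsteinZeta_eq_tsum_latticeForm (z : ℍ) (s : ℝ) :
    epsteinZeta (1 / z.im) (-(2 * z.re) / z.im) ((z.re ^ 2 + z.im ^ 2) / z.im) s =
      ∑' v : {v : Fin 2 → ℤ // v ≠ 0}, latticeForm z v ^ (-s) := by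
  let e : {p : ℤ × ℤ // p ≠ 0} ≃ {v : Fin 2 → ℤ // v ≠ 0} :=
    ((Equiv.prodComm ℤ ℤ).trans (((Equiv.neg ℤ).prodCongr (Equiv.refl ℤ)).trans
      (finTwoArrowEquiv ℤ).symm)).subtypeEquiv fun p => by
        simp [Prod.ext_iff, and_comm]
  rw [epsteinZeta, ← e.tsum_eq]
  refine tsum_congr fun p => congrArg (· ^ (-s)) ?_
  have he : (e p : Fin 2 → ℤ) = ![-p.1.2, p.1.1] := rfl
  simp only [he, latticeForm_eq, Matrix.cons_val_zero, Matrix.cons_val_one, Int.cast_neg]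
  ring

theorem epsteinZeta_two_div_sqrt_three (s : ℝ) :
    epsteinZeta (2 / √3) (2 / √3) (2 / √3) s =
      ∑' v : {v : Fin 2 → ℤ // v ≠ 0}, latticeForm ρ v ^ (-s) := by
  have hre : ρ.re = -1 / 2 := rfl
  have him : ρ.im = √3 / 2 := rfl
  have h3 : √3 ^ 2 = 3 := sq_sqrt (by norm_num)
  have hfst : 1 / (√3 / 2) = 2 / √3 := one_div_div ..
  have hsnd : -(2 * (-1 / 2)) / (√3 / 2) = 2 / √3 := by rw [← hfst]; ring
  have htrd : ((-1 / 2) ^ 2 + (√3 / 2) ^ 2) / (√3 / 2) = 2 / √3 := by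
    rw [← hfst, div_pow √3, h3]; norm_num
  rw [← epsteinZeta_eq_tsum_latticeForm, hre, him, hfst, hsnd, htrd]

theorem exists_upperHalfPlane_coeff_eq {a b c : ℝ} (ha : 0 < a) (hdet : a * c - b ^ 2 / 4 = 1) :
    ∃ z : ℍ, a = 1 / z.im ∧ b = -(2 * z.re) / z.im ∧ c = (z.re ^ 2 + z.im ^ 2) / z.im := by
  let z : ℍ := ⟨⟨-b / (2 * a), 1 / a⟩, one_div_pos.2 ha⟩
  have hre : z.re = -b / (2 * a) := rfl
  have him : z.im = 1 / a := rfl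
  refine ⟨z, ?_, ?_, ?_⟩
  · rw [him, one_div_one_div]
  · rw [hre, him]
    field_simp
  · rw [hre, him]
    field_simp
    linear_combination 4 * hdet

end EpsteinZeta

/-- Cassels' theorem: among positive definite binary quadratic forms of determinant 1,
the hexagonal form `H(x,y) = (2/√3)(x² + xy + y²)` minimizes the Epstein zeta function
at every real `s > 1`. -/
theorem stmt18 (a b c : ℝ) (ha : 0 < a) (hdet : a * c - b ^ 2 / 4 = 1) :
    ∀ s : ℝ, 1 < s →
      epsteinZeta (2 / Real.sqrt 3) (2 / Real.sqrt 3) (2 / Real.sqrt 3) s ≤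
        epsteinZeta a b c s := by
  intro s hs
  obtain ⟨z, rfl, rfl, rfl⟩ := exists_upperHalfPlane_coeff_eq ha hdet
  rw [epsteinZeta_two_div_sqrt_three, epsteinZeta_eq_tsum_latticeForm]
  exact tsum_latticeForm_ρ_rpow_neg_le z hs
end
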